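/- arXiv:1502.00825 — 4 statements merged into one kernel-verified Lean document; each statement's English description precedes it below -/
import Mathlib

section
/- A linear functional L : ℝ[x₁,…,x_d] → ℝ is a moment functional, i.e. there exists a positive Borel measure μ on ℝ^d such that every polynomial is μ-integrable and L(p) = ∫_{ℝ^d} p(x) dμ(x) for all p ∈ ℝ[x₁,…,x_d], if and only if there exists a linear functional 𝓛 : A → ℝ with 𝓛(f²) ≥ 0 for all f ∈ A such that 𝓛(p|_X) = L(p) for every polynomial p, where p|_X ∈ A denotes the restriction of the polynomial function p to X = ℝ^d∖{0}. -/
noncomputable section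

/-- The punctured space `ℝ^d ∖ {0}`. -/
def Xsp (d : ℕ) : Type := {x : Fin d → ℝ // x ≠ 0}

/-- The restriction of the `j`-th coordinate function to `ℝ^d ∖ {0}`. -/
def coordFn {d : ℕ} (j : Fin d) : Xsp d → ℝ := fun x => x.1 j

/-- The function `f_kl(x) = x_k x_l / (x₁² + ⋯ + x_d²)` on `ℝ^d ∖ {0}`. -/
def fklFn {d : ℕ} (kk ll : Fin d) : Xsp d → ℝ :=
  fun x => x.1 kk * x.1 ll / ∑ i : Fin d, (x.1 i) ^ 2

/-- The algebra `A`: the subalgebra of real-valued functions on `ℝ^d ∖ {0}`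
generated by the coordinate functions and the functions `f_kl`. -/
def Aalg (d : ℕ) : Subalgebra ℝ (Xsp d → ℝ) :=
  Algebra.adjoin ℝ
    (Set.range (coordFn (d := d)) ∪
      Set.range (fun p : Fin d × Fin d => fklFn p.1 p.2))

/-- The coordinate function as an element of `A`. -/
def coordA {d : ℕ} (j : Fin d) : Aalg d :=
  ⟨coordFn j, Algebra.subset_adjoin (Set.mem_union_left _ ⟨j, rfl⟩)⟩

/-- The function `f_kl` as an element of `A`. -/
def fklA {d : ℕ} (kk ll : Fin d) : Aalg d :=
  ⟨fklFn kk ll, Algebra.subset_adjoin (Set.mem_union_right _ ⟨(kk, ll), rfl⟩)⟩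

/-- Restriction of a polynomial to `ℝ^d ∖ {0}`, as an element of `A`
(the polynomial expression in the coordinate functions). -/
def polyRes {d : ℕ} : MvPolynomial (Fin d) ℝ →ₐ[ℝ] Aalg d :=
  MvPolynomial.aeval coordA

instance (d : ℕ) : MeasurableSpace (Xsp d) := by unfold Xsp; infer_instance

end

open Polynomial in
theorem uni_pos :
    ∀ (n : ℕ) (M : ℝ[X] →ₗ[ℝ] ℝ), (∀ q : ℝ[X], 0 ≤ M (q ^ 2)) →
      ∀ p : ℝ[X], p.natDegree ≤ n → (∀ x, 0 ≤ p.eval x) → 0 ≤ M p := by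
  intro n
  induction n with
  | zero =>
    intro M hM p hp hpos
    rw [Polynomial.eq_C_of_natDegree_le_zero hp] at hpos ⊢
    set c := p.coeff 0
    have hc : 0 ≤ c := by simpa using hpos 0
    have : (C c : ℝ[X]) = c • (1 : ℝ[X]) ^ 2 := by simp [Polynomial.smul_eq_C_mul]
    rw [this, map_smul, smul_eq_mul]
    exact mul_nonneg hc (hM _)
  | succ n ih =>
    intro M hM p hp hpos
    by_cases hdeg : p.natDegree ≤ n
    · exact ih M hM p hdeg hpos
    have hnd : p.natDegree = n + 1 := by omega
    have hd : 0 < p.degree := Polynomial.natDegree_pos_iff_degree_pos.mp (by omega)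
    have ht : Filter.Tendsto (fun x : ℝ => p.eval x) (Filter.cocompact ℝ) Filter.atTop := by
      have := Polynomial.tendsto_norm_atTop p hd (z := fun x : ℝ => x) (l := Filter.cocompact ℝ)
        (tendsto_norm_cocompact_atTop)
      refine this.congr fun x => ?_
      rw [Real.norm_of_nonneg (hpos x)]
    obtain ⟨a, ha⟩ := p.continuous.exists_forall_le ht
    set m := p.eval a with hm
    have hroot : (p - C m).IsRoot a := by simp [hm]
    obtain ⟨q, hq⟩ := Polynomial.dvd_iff_isRoot.mpr hroot
    have hder : (Polynomial.derivative p).eval a = 0 := by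
      have : IsLocalMin (fun x => p.eval x) a := Filter.Eventually.of_forall ha
      have := this.deriv_eq_zero
      simpa using this
    have hqa : q.IsRoot a := by
      have := congrArg (fun r => (Polynomial.derivative r).eval a) hq
      simp [hder] at this
      exact this.symm
    obtain ⟨r, hr⟩ := Polynomial.dvd_iff_isRoot.mpr hqa
    have hp' : p = C m + (X - C a) ^ 2 * r := by
      rw [← sub_eq_iff_eq_add', hq, hr]; ring
    have hrpos' : ∀ x, x ≠ a → 0 ≤ r.eval x := by
      intro x hx
      have h1 := ha x
      rw [hp'] at h1
      simp at h1
      have h2 : 0 < (x - a) ^ 2 := by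
        have := sub_ne_zero.mpr hx
        positivity
      exact nonneg_of_mul_nonneg_right (by linarith) h2
    have hrpos : ∀ x, 0 ≤ r.eval x := by
      intro x
      have hcl : IsClosed {x | 0 ≤ r.eval x} := isClosed_le continuous_const r.continuous
      have hde : Dense ({a}ᶜ : Set ℝ) := dense_compl_singleton a
      have : closure ({a}ᶜ : Set ℝ) ⊆ {x | 0 ≤ r.eval x} :=
        closure_minimal (fun y hy => hrpos' y hy) hcl
      exact this (hde x)
    have hrdeg : r.natDegree ≤ n := by
      by_cases hr0 : r = 0
      · simp [hr0]
      have h1 : (p - C m).natDegree = n + 1 := by rw [Polynomial.natDegree_sub_C, hnd]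
      have h2 : p - C m = (X - C a) ^ 2 * r := by rw [hq, hr]; ring
      rw [h2, Polynomial.natDegree_mul (pow_ne_zero _ (Polynomial.X_sub_C_ne_zero a)) hr0] at h1
      simp at h1
      omega
    let M' : ℝ[X] →ₗ[ℝ] ℝ := M ∘ₗ LinearMap.mulLeft ℝ ((X - C a) ^ 2)
    have hM' : 0 ≤ M' r := by
      refine ih M' ?_ r hrdeg hrpos
      intro s
      have := hM ((X - C a) * s)
      simpa [M', mul_pow] using this
    have hCm : (C m : ℝ[X]) = m • (1 : ℝ[X]) ^ 2 := by simp [Polynomial.smul_eq_C_mul]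
    rw [hp', map_add, hCm, map_smul, smul_eq_mul]
    exact add_nonneg (mul_nonneg (hpos a) (hM _)) hM'


namespace Haviland
open MvPolynomial MeasureTheory Filter Topology
open scoped CompactlySupported

variable {d : ℕ}

/-- functions bounded by a polynomial -/
def E (d : ℕ) : Submodule ℝ ((Fin d → ℝ) → ℝ) where
  carrier := {f | ∃ p : MvPolynomial (Fin d) ℝ, ∀ x, |f x| ≤ eval x p}
  add_mem' := by
    rintro f g ⟨p, hp⟩ ⟨q, hq⟩
    refine ⟨p + q, fun x => ?_⟩
    rw [map_add]
    exact (abs_add_le _ _).trans (add_le_add (hp x) (hq x))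
  zero_mem' := ⟨0, fun x => by simp⟩
  smul_mem' := by
    rintro c f ⟨p, hp⟩
    refine ⟨C |c| * p, fun x => ?_⟩
    simp only [Pi.smul_apply, smul_eq_mul, abs_mul, map_mul, eval_C]
    exact mul_le_mul_of_nonneg_left (hp x) (abs_nonneg c)

theorem mem_E {f : (Fin d → ℝ) → ℝ} :
    f ∈ E d ↔ ∃ p : MvPolynomial (Fin d) ℝ, ∀ x, |f x| ≤ eval x p := Iff.rfl

theorem poly_mem (p : MvPolynomial (Fin d) ℝ) : (fun x => eval x p) ∈ E d := by
  refine ⟨p ^ 2 + 1, fun x => ?_⟩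
  simp only [map_add, map_pow, map_one]
  apply abs_le.mpr
  constructor <;> nlinarith [sq_nonneg (eval x p + 1), sq_nonneg (eval x p - 1)]

/-- polynomial as function -/
noncomputable def ev (d : ℕ) : MvPolynomial (Fin d) ℝ →ₗ[ℝ] E d where
  toFun p := ⟨fun x => eval x p, poly_mem p⟩
  map_add' p q := by ext x; simp
  map_smul' c p := by ext x; simp

theorem ev_inj : Function.Injective (ev d) := by
  intro p q h
  apply MvPolynomial.funext
  intro x
  exact congrFun (congrArg Subtype.val h) x

theorem extend (L : MvPolynomial (Fin d) ℝ →ₗ[ℝ] ℝ)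
    (hL : ∀ p, (∀ x, 0 ≤ eval x p) → 0 ≤ L p) :
    ∃ G : E d →ₗ[ℝ] ℝ, (∀ p, G (ev d p) = L p) ∧ ∀ f : E d, (∀ x, 0 ≤ f.1 x) → 0 ≤ G f := by
  let e := LinearEquiv.ofInjective (ev d) ev_inj
  let f : E d →ₗ.[ℝ] ℝ := ⟨LinearMap.range (ev d), L ∘ₗ e.symm.toLinearMap⟩
  let s : PointedCone ℝ (E d) :=
    { carrier := {f | ∀ x, 0 ≤ f.1 x}
      add_mem' := fun {a b} ha hb x => add_nonneg (ha x) (hb x)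
      zero_mem' := fun x => le_rfl
      smul_mem' := fun c {a} ha x => mul_nonneg c.2 (ha x) }
  have hfe : ∀ p, f ⟨ev d p, LinearMap.mem_range_self _ p⟩ = L p := by
    intro p
    change L (e.symm _) = L p
    congr 1
    rw [LinearEquiv.symm_apply_eq]
    rfl
  obtain ⟨G, hG1, hG2⟩ := riesz_extension s f (by
      rintro ⟨x, p, rfl⟩ hx
      rw [hfe]
      exact hL p hx) (by
      intro y
      obtain ⟨p, hp⟩ := y.2
      refine ⟨⟨ev d p, LinearMap.mem_range_self _ p⟩, fun x => ?_⟩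
      have := (abs_le.mp (hp x)).1
      change 0 ≤ eval x p + y.1 x
      linarith)
  refine ⟨G, fun p => ?_, fun f hf => hG2 f hf⟩
  rw [← hfe p]
  exact hG1 ⟨ev d p, LinearMap.mem_range_self _ p⟩

/-- sum of squares -/
def ss (x : Fin d → ℝ) : ℝ := ∑ i, x i ^ 2

theorem ss_cont : Continuous (ss (d := d)) := by unfold ss; fun_prop

/-- cutoff -/
noncomputable def eta (k : ℕ) (x : Fin d → ℝ) : ℝ := max 0 (min 1 (2 - ss x / (k + 1)))

theorem eta_cont (k : ℕ) : Continuous (eta (d := d) k) := by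
  unfold eta
  have := ss_cont (d := d)
  fun_prop

theorem eta_nonneg (k : ℕ) (x : Fin d → ℝ) : 0 ≤ eta k x := le_max_left _ _
theorem eta_le_one (k : ℕ) (x : Fin d → ℝ) : eta k x ≤ 1 :=
  max_le zero_le_one (min_le_left _ _)

theorem ss_nonneg (x : Fin d → ℝ) : 0 ≤ ss x := Finset.sum_nonneg fun _ _ => sq_nonneg _

theorem one_sub_eta (k : ℕ) (x : Fin d → ℝ) : 1 - eta k x ≤ ss x / (k + 1) := by
  have h0 : 0 ≤ ss x / (k + 1) := div_nonneg (ss_nonneg x) (by positivity)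
  have : min 1 (2 - ss x / (k + 1)) ≤ eta k x := le_max_right _ _
  rcases min_cases (1 : ℝ) (2 - ss x / (k + 1)) with h | h <;>
  linarith [h.1]

theorem eta_supp (k : ℕ) : HasCompactSupport (eta (d := d) k) := by
  refine HasCompactSupport.intro (isCompact_closedBall (0 : Fin d → ℝ) (2 * (k + 1) + 1)) ?_
  intro x hx
  have hx' : 2 * (k + 1 : ℝ) + 1 < ‖x‖ := by simpa using hx
  have h1 : 2 * (k + 1 : ℝ) ≤ ss x := by
    by_contra hlt
    push Not at hlt
    have : ‖x‖ ≤ 2 * (k + 1 : ℝ) + 1 := by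
      rw [pi_norm_le_iff_of_nonneg (by positivity)]
      intro i
      have h2 : x i ^ 2 ≤ ss x :=
        Finset.single_le_sum (f := fun i => x i ^ 2) (fun i _ => sq_nonneg _) (Finset.mem_univ i)
      rw [Real.norm_eq_abs]
      refine abs_le_of_sq_le_sq ?_ (by positivity)
      have : (0:ℝ) ≤ k := Nat.cast_nonneg k
      nlinarith
    linarith
  have hk : (0 : ℝ) < k + 1 := by positivity
  have h2 : 2 ≤ ss x / (k + 1) := by rwa [le_div_iff₀ hk]
  unfold eta
  exact max_eq_left ((min_le_right _ _).trans (by linarith))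

theorem eta_tendsto (x : Fin d → ℝ) : Tendsto (fun k => eta k x) atTop (𝓝 1) := by
  have h : Tendsto (fun k : ℕ => 1 - ss x / ((k : ℝ) + 1)) atTop (𝓝 1) := by
    have := (tendsto_const_div_atTop_nhds_zero_nat (ss x)).comp (tendsto_add_atTop_nat 1)
    have := this.const_sub 1
    simpa [Function.comp_def] using this
  refine tendsto_of_tendsto_of_tendsto_of_le_of_le h tendsto_const_nhds ?_ ?_
  · intro k; have := one_sub_eta k x; simp only; linarith
  · intro k; exact eta_le_one k x

theorem cc_mem (f : C_c(Fin d → ℝ, ℝ)) : (f : (Fin d → ℝ) → ℝ) ∈ E d := by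
  obtain ⟨c, hc⟩ := f.hasCompactSupport.exists_bound_of_continuous f.continuous
  exact ⟨C c, fun x => by simpa using hc x⟩

theorem haviland (L : MvPolynomial (Fin d) ℝ →ₗ[ℝ] ℝ)
    (hL : ∀ p, (∀ x, 0 ≤ eval x p) → 0 ≤ L p) :
    ∃ μ : Measure (Fin d → ℝ), ∀ p : MvPolynomial (Fin d) ℝ,
      Integrable (fun x : Fin d → ℝ => eval x p) μ ∧ L p = ∫ x : Fin d → ℝ, eval x p ∂μ := by
  obtain ⟨G, hG, hpos⟩ := extend L hL
  have hmono : ∀ f g : E d, (∀ x, f.1 x ≤ g.1 x) → G f ≤ G g := by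
    intro f g h
    have := hpos (g - f) (fun x => sub_nonneg.mpr (h x))
    rw [map_sub] at this
    linarith
  let Λ0 : C_c(Fin d → ℝ, ℝ) →ₗ[ℝ] ℝ :=
    { toFun := fun f => G ⟨f, cc_mem f⟩
      map_add' := fun f g => by rw [← map_add]; rfl
      map_smul' := fun c f => by rw [RingHom.id_apply, ← map_smul]; rfl }
  let Λ : C_c(Fin d → ℝ, ℝ) →ₚ[ℝ] ℝ := PositiveLinearMap.mk₀ Λ0 (fun f hf => hpos _ hf)
  let μ := RealRMK.rieszMeasure Λ
  have hintg : ∀ f : C_c(Fin d → ℝ, ℝ), ∫ x, f x ∂μ = G ⟨f, cc_mem f⟩ :=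
    fun f => RealRMK.integral_rieszMeasure Λ f
  have key : ∀ p : MvPolynomial (Fin d) ℝ, (∀ x, 0 ≤ eval x p) →
      Integrable (fun x : Fin d → ℝ => eval x p) μ ∧ L p = ∫ x : Fin d → ℝ, eval x p ∂μ := by
    intro p hp
    have hpc : Continuous (fun x : Fin d → ℝ => eval x p) := MvPolynomial.continuous_eval p
    let F : ℕ → C_c(Fin d → ℝ, ℝ) := fun k =>
      ⟨⟨fun x => eval x p * eta k x, hpc.mul (eta_cont k)⟩, (eta_supp k).mul_left⟩
    have hF : ∀ k x, F k x = eval x p * eta k x := fun k x => rfl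
    have hFle : ∀ k, ∫ x, F k x ∂μ ≤ L p := by
      intro k
      rw [hintg, ← hG]
      apply hmono
      intro x
      exact mul_le_of_le_one_right (hp x) (eta_le_one k x)
    have hFge : ∀ k : ℕ, L p - L (p * ∑ i, X i ^ 2) / (k + 1) ≤ ∫ x, F k x ∂μ := by
      intro k
      have h1 : G (ev d (p - ((k : ℝ) + 1)⁻¹ • (p * ∑ i, X i ^ 2))) ≤ G ⟨F k, cc_mem (F k)⟩ := by
        apply hmono
        intro x
        change eval x _ ≤ eval x p * eta k x
        have h2 := mul_le_mul_of_nonneg_left (one_sub_eta k x) (hp x)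
        have h3 : eval x (p - ((k : ℝ) + 1)⁻¹ • (p * ∑ i, X i ^ 2)) =
            eval x p - eval x p * (ss x / (k + 1)) := by
          simp [ss]; ring
        rw [h3]
        linarith
      rw [hG, map_sub, map_smul, smul_eq_mul, ← hintg] at h1
      rw [div_eq_inv_mul]
      exact h1
    have hFlim : Tendsto (fun k => ∫ x, F k x ∂μ) atTop (𝓝 (L p)) := by
      refine tendsto_of_tendsto_of_tendsto_of_le_of_le ?_ tendsto_const_nhds hFge hFle
      have := (tendsto_const_div_atTop_nhds_zero_nat (L (p * ∑ i, X i ^ 2))).comp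
        (tendsto_add_atTop_nat 1)
      have := this.const_sub (L p)
      simpa [Function.comp_def] using this
    have hFi : ∀ k, Integrable (F k) μ := fun k =>
      (F k).continuous.integrable_of_hasCompactSupport (F k).hasCompactSupport
    have hFlx : ∀ x, Tendsto (fun k => F k x) atTop (𝓝 (eval x p)) := by
      intro x
      have := (eta_tendsto x).const_mul (eval x p)
      simpa [hF] using this
    have hI : Integrable (fun x : Fin d → ℝ => eval x p) μ := by
      refine ⟨hpc.aestronglyMeasurable, ?_⟩
      rw [hasFiniteIntegral_iff_ofReal (Eventually.of_forall hp)]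
      have h1 : ∀ x, ENNReal.ofReal (eval x p) = liminf (fun k => ENNReal.ofReal (F k x)) atTop := by
        intro x
        exact ((ENNReal.continuous_ofReal.tendsto _).comp (hFlx x)).liminf_eq.symm
      simp_rw [h1]
      have h2 := lintegral_liminf_le (μ := μ) (u := atTop) (f := fun k x => ENNReal.ofReal (F k x))
        (fun k => ((F k).continuous.measurable).ennreal_ofReal)
      refine (h2.trans ?_).trans_lt (ENNReal.ofReal_lt_top (r := L p))
      have h3 : ∀ k, ∫⁻ x, ENNReal.ofReal (F k x) ∂μ ≤ ENNReal.ofReal (L p) := by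
        intro k
        rw [← ofReal_integral_eq_lintegral_ofReal (hFi k)
          (Eventually.of_forall fun x => mul_nonneg (hp x) (eta_nonneg k x))]
        exact ENNReal.ofReal_le_ofReal (hFle k)
      calc liminf (fun k => ∫⁻ x, ENNReal.ofReal (F k x) ∂μ) atTop
          ≤ liminf (fun k : ℕ => ENNReal.ofReal (L p)) atTop :=
            liminf_le_liminf (Eventually.of_forall h3)
        _ = _ := liminf_const _
    refine ⟨hI, tendsto_nhds_unique hFlim ?_⟩
    refine tendsto_integral_of_dominated_convergence (fun x => eval x p)
      (fun k => (hFi k).aestronglyMeasurable) hI ?_ (Eventually.of_forall hFlx)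
    intro k
    refine Eventually.of_forall fun x => ?_
    rw [hF, Real.norm_of_nonneg (mul_nonneg (hp x) (eta_nonneg k x))]
    exact mul_le_of_le_one_right (hp x) (eta_le_one k x)
  refine ⟨μ, fun p => ?_⟩
  obtain ⟨i1, e1⟩ := key ((p + 1) ^ 2) (fun x => by rw [map_pow]; positivity)
  obtain ⟨i2, e2⟩ := key ((p - 1) ^ 2) (fun x => by rw [map_pow]; positivity)
  have hp : p = (1 / 4 : ℝ) • ((p + 1) ^ 2 - (p - 1) ^ 2) := by
    have h6 : (C (1 / 4 : ℝ) : MvPolynomial (Fin d) ℝ) * 4 = 1 := by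
      rw [← map_ofNat C 4, ← map_mul]; norm_num
    rw [MvPolynomial.smul_eq_C_mul]
    linear_combination (-p) * h6
  have hpe : (fun x : Fin d → ℝ => eval x p) =
      fun x => (1 / 4 : ℝ) * (eval x ((p + 1) ^ 2) - eval x ((p - 1) ^ 2)) := by
    funext x
    conv_lhs => rw [hp]
    simp [MvPolynomial.smul_eval]
  constructor
  · rw [hpe]; exact (i1.sub i2).const_mul _
  · rw [hpe, integral_const_mul, integral_sub i1 i2, ← e1, ← e2]
    conv_lhs => rw [hp]
    simp

end Haviland


open MvPolynomial in
/-- positive functional on polynomials modulo the sphere ideal. -/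
structure SphPos {d : ℕ} (N : MvPolynomial (Fin d) ℝ → ℝ) : Prop where
  add : ∀ p q, N (p + q) = N p + N q
  smul : ∀ (c : ℝ) p, N (c • p) = c * N p
  sq : ∀ q, 0 ≤ N (q ^ 2)
  sph : ∀ q, N ((∑ i, (X i : MvPolynomial (Fin d) ℝ) ^ 2) * q) = N q

namespace SphPos
open MvPolynomial
variable {d : ℕ} {N : MvPolynomial (Fin d) ℝ → ℝ}

theorem neg (h : SphPos N) (p) : N (-p) = - N p := by
  have := h.smul (-1) p
  simpa using this

theorem sub (h : SphPos N) (p q) : N (p - q) = N p - N q := by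
  rw [sub_eq_add_neg, h.add, h.neg, sub_eq_add_neg]

theorem cs (h : SphPos N) (p : MvPolynomial (Fin d) ℝ) : N p ^ 2 ≤ N 1 * N (p ^ 2) := by
  have key : ∀ t : ℝ, 0 ≤ N 1 * (t * t) + (2 * N p) * t + N (p ^ 2) := by
    intro t
    have h1 := h.sq (t • 1 + p)
    have h2 : (t • (1 : MvPolynomial (Fin d) ℝ) + p) ^ 2 = (t * t) • 1 + (2 * t) • p + p ^ 2 := by
      simp only [MvPolynomial.smul_eq_C_mul, map_mul, map_ofNat]; ring
    rw [h2, h.add, h.add, h.smul, h.smul] at h1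
    linarith
  have := discrim_le_zero key
  unfold discrim at this
  nlinarith

theorem sum (h : SphPos N) {ι : Type*} (s : Finset ι) (f : ι → MvPolynomial (Fin d) ℝ) :
    N (∑ i ∈ s, f i) = ∑ i ∈ s, N (f i) := by
  classical
  have h0 : N 0 = 0 := by simpa using h.smul 0 0
  induction s using Finset.induction_on with
  | empty => simpa using h0
  | insert a s ha ih => rw [Finset.sum_insert ha, Finset.sum_insert ha, h.add, ih]

theorem Xsq_le (h : SphPos N) (j : Fin d) (q) : N (X j ^ 2 * q ^ 2) ≤ N (q ^ 2) := by
  rw [← h.sph (q ^ 2), Finset.sum_mul, h.sum]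
  exact Finset.single_le_sum (f := fun i => N (X i ^ 2 * q ^ 2))
    (fun i _ => by rw [← mul_pow]; exact h.sq _) (Finset.mem_univ j)

theorem bound (p : MvPolynomial (Fin d) ℝ) : ∃ c : ℝ, 0 ≤ c ∧
    ∀ N : MvPolynomial (Fin d) ℝ → ℝ, SphPos N → ∀ q, N (p ^ 2 * q ^ 2) ≤ c * N (q ^ 2) := by
  induction p using MvPolynomial.induction_on with
  | C a =>
    refine ⟨a ^ 2, sq_nonneg a, fun N hN q => le_of_eq ?_⟩
    rw [← map_pow, ← MvPolynomial.smul_eq_C_mul, hN.smul]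
  | add p q hp hq =>
    obtain ⟨c, hc, hp⟩ := hp
    obtain ⟨e, he, hq⟩ := hq
    refine ⟨2 * c + 2 * e, by positivity, fun N hN r => ?_⟩
    have h1 := hp N hN r
    have h2 := hq N hN r
    have h3 := hN.sq ((p - q) * r)
    have h4 : (p + q) ^ 2 * r ^ 2 = (2 : ℝ) • (p ^ 2 * r ^ 2) + (2 : ℝ) • (q ^ 2 * r ^ 2)
        - ((p - q) * r) ^ 2 := by
      simp only [MvPolynomial.smul_eq_C_mul, map_ofNat]; ring
    rw [h4, hN.sub, hN.add, hN.smul, hN.smul]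
    linarith
  | mul_X p j hp =>
    obtain ⟨c, hc, hp⟩ := hp
    refine ⟨c, hc, fun N hN r => ?_⟩
    have h1 := hN.Xsq_le j (p * r)
    have h2 := hp N hN r
    rw [show (p * X j) ^ 2 * r ^ 2 = X j ^ 2 * (p * r) ^ 2 by ring]
    rw [mul_pow p r] at h1 ⊢
    linarith

/-- the set of states -/
def states (d : ℕ) : Set (MvPolynomial (Fin d) ℝ → ℝ) := {N | SphPos N ∧ N 1 = 1}

theorem states_convex : Convex ℝ (states d) := by
  intro M hM N hN a b ha hb hab
  obtain ⟨hM, hM1⟩ := hM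
  obtain ⟨hN, hN1⟩ := hN
  refine ⟨⟨?_, ?_, ?_, ?_⟩, ?_⟩
  · intro p q; simp only [Pi.add_apply, Pi.smul_apply, smul_eq_mul, hM.add, hN.add]; ring
  · intro p q; simp only [Pi.add_apply, Pi.smul_apply, smul_eq_mul, hM.smul, hN.smul]; ring
  · intro q; simp only [Pi.add_apply, Pi.smul_apply, smul_eq_mul]
    exact add_nonneg (mul_nonneg ha (hM.sq q)) (mul_nonneg hb (hN.sq q))
  · intro q; simp only [Pi.add_apply, Pi.smul_apply, smul_eq_mul, hM.sph, hN.sph]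
  · simp only [Pi.add_apply, Pi.smul_apply, smul_eq_mul, hM1, hN1]; linarith

theorem states_closed : IsClosed (states d) := by
  have : states d = (⋂ p, ⋂ q, {N | N (p + q) = N p + N q}) ∩
      (⋂ c : ℝ, ⋂ p, {N | N (c • p) = c * N p}) ∩ (⋂ q, {N | 0 ≤ N (q ^ 2)}) ∩
      (⋂ q, {N | N ((∑ i, (X i : MvPolynomial (Fin d) ℝ) ^ 2) * q) = N q}) ∩ {N | N 1 = 1} := by
    ext N
    simp only [states, Set.mem_inter_iff, Set.mem_iInter, Set.mem_ofPred_eq]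
    exact ⟨fun ⟨h, h1⟩ => ⟨⟨⟨⟨h.add, h.smul⟩, h.sq⟩, h.sph⟩, h1⟩,
      fun ⟨⟨⟨⟨h1, h2⟩, h3⟩, h4⟩, h5⟩ => ⟨⟨h1, h2, h3, h4⟩, h5⟩⟩
  rw [this]
  refine IsClosed.inter (IsClosed.inter (IsClosed.inter (IsClosed.inter ?_ ?_) ?_) ?_) ?_
  · exact isClosed_iInter fun p => isClosed_iInter fun q => isClosed_eq (by fun_prop) (by fun_prop)
  · exact isClosed_iInter fun p => isClosed_iInter fun q => isClosed_eq (by fun_prop) (by fun_prop)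
  · exact isClosed_iInter fun p => isClosed_le (by fun_prop) (by fun_prop)
  · exact isClosed_iInter fun p => isClosed_eq (by fun_prop) (by fun_prop)
  · exact isClosed_eq (by fun_prop) (by fun_prop)

theorem states_compact : IsCompact (states d) := by
  choose c hc hb using fun p : MvPolynomial (Fin d) ℝ => bound p
  have hK : IsCompact (Set.univ.pi fun p => Set.Icc (-(c p + 1)) (c p + 1)) :=
    isCompact_univ_pi fun p => isCompact_Icc
  refine hK.of_isClosed_subset states_closed ?_
  rintro N ⟨hN, hN1⟩ p -
  have h1 := hN.cs p
  have h2 := hb p N hN 1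
  simp only [one_pow, mul_one, hN1, one_mul] at h1 h2
  have h3 : N p ^ 2 ≤ (c p + 1) ^ 2 := by nlinarith [hc p]
  exact abs_le.mp (abs_le_of_sq_le_sq h3 (by linarith [hc p]))

theorem one_le_aux (h : SphPos N) (j : Fin d) (e : ℝ) (he : e ^ 2 = 1) (q) :
    0 ≤ N ((1 + C e * X j) * q ^ 2) := by
  have h1 := h.sq ((1 + C e * X j) * q)
  have h2 := h.Xsq_le j q
  have h3 : (1 + C e * X j) * q ^ 2 =
      (1 / 2 : ℝ) • (((1 + C e * X j) * q) ^ 2 + q ^ 2 - X j ^ 2 * q ^ 2) := by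
    have h5 : (C e : MvPolynomial (Fin d) ℝ) ^ 2 = 1 := by rw [← map_pow, he, map_one]
    have h6 : (C (1 / 2 : ℝ) : MvPolynomial (Fin d) ℝ) * 2 = 1 := by
      rw [← map_ofNat C 2, ← map_mul]; norm_num
    rw [MvPolynomial.smul_eq_C_mul]
    linear_combination (-(1 + C e * X j) * q ^ 2) * h6 - C (1/2 : ℝ) * X j ^ 2 * q ^ 2 * h5
  rw [h3, h.smul, h.sub, h.add]
  linarith

theorem shift (h : SphPos N) (j : Fin d) (e : ℝ) (he : e ^ 2 = 1) :
    SphPos (fun q => N ((2 + C e * X j) * q)) := by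
  refine ⟨?_, ?_, ?_, ?_⟩
  · intro p q; rw [mul_add, h.add]
  · intro c p; rw [mul_smul_comm, h.smul]
  · intro q
    have h1 := h.one_le_aux j e he q
    have h2 := h.sq q
    rw [show (2 + C e * X j) * q ^ 2 = (1 + C e * X j) * q ^ 2 + q ^ 2 by ring, h.add]
    linarith
  · intro q
    rw [mul_left_comm, h.sph]

theorem scale (h : SphPos N) (c : ℝ) (hc : 0 ≤ c) : SphPos (c • N) := by
  refine ⟨?_, ?_, ?_, ?_⟩
  · intro p q; simp [h.add, mul_add]
  · intro a p; simp [h.smul]; ring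
  · intro q; exact mul_nonneg hc (h.sq q)
  · intro q; simp [h.sph]

theorem extreme_mul (hN : N ∈ (states d).extremePoints ℝ) (j : Fin d) (q) :
    N (X j * q) = N (X j) * N q := by
  obtain ⟨⟨h, h1⟩, hext⟩ := hN
  have hb : |N (X j)| ≤ 1 := by
    have := h.cs (X j)
    have h2 := h.Xsq_le j 1
    simp only [one_pow, mul_one, h1, one_mul] at this h2
    exact (sq_le_one_iff_abs_le_one _).mp (by linarith)
  obtain ⟨hb1, hb2⟩ := abs_le.mp hb
  set a := N (X j) with ha
  set P : MvPolynomial (Fin d) ℝ → ℝ := fun q => N ((2 + C 1 * X j) * q) with hP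
  set Q : MvPolynomial (Fin d) ℝ → ℝ := fun q => N ((2 + C (-1) * X j) * q) with hQ
  have hPq : ∀ q, P q = 2 * N q + N (X j * q) := by
    intro q
    have : (2 + C 1 * X j) * q = (2 : ℝ) • q + X j * q := by
      simp only [MvPolynomial.smul_eq_C_mul, map_ofNat, map_one]; ring
    rw [hP]; simp only; rw [this, h.add, h.smul]
  have hQq : ∀ q, Q q = 2 * N q - N (X j * q) := by
    intro q
    have : (2 + C (-1) * X j) * q = (2 : ℝ) • q - X j * q := by
      simp only [MvPolynomial.smul_eq_C_mul, map_ofNat, map_one, map_neg]; ring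
    rw [hQ]; simp only; rw [this, h.sub, h.smul]
  have hP1 : P 1 = 2 + a := by rw [hPq, mul_one, h1, mul_one]
  have hQ1 : Q 1 = 2 - a := by rw [hQq, mul_one, h1, mul_one]
  have hPs : (2 + a)⁻¹ • P ∈ states d := by
    refine ⟨(h.shift j 1 (by norm_num)).scale _ (inv_nonneg.mpr (by linarith)), ?_⟩
    rw [Pi.smul_apply, hP1, smul_eq_mul, inv_mul_cancel₀ (by linarith)]
  have hQs : (2 - a)⁻¹ • Q ∈ states d := by
    refine ⟨(h.shift j (-1) (by norm_num)).scale _ (inv_nonneg.mpr (by linarith)), ?_⟩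
    rw [Pi.smul_apply, hQ1, smul_eq_mul, inv_mul_cancel₀ (by linarith)]
  have hseg : N ∈ openSegment ℝ ((2 + a)⁻¹ • P) ((2 - a)⁻¹ • Q) := by
    refine ⟨(2 + a) / 4, (2 - a) / 4, by linarith, by linarith, by ring, ?_⟩
    funext q
    have e1 : (2 + a) ≠ 0 := by linarith
    have e2 : (2 - a) ≠ 0 := by linarith
    simp only [Pi.add_apply, Pi.smul_apply, smul_eq_mul, hPq, hQq]
    field_simp
    ring
  have := hext hPs hQs hseg
  have h5 := congrFun this q
  rw [Pi.smul_apply, hPq, smul_eq_mul] at h5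
  have e1 : (2 + a) ≠ 0 := by linarith
  field_simp at h5
  linarith

theorem extreme_eval (hN : N ∈ (states d).extremePoints ℝ) (q) :
    N q = MvPolynomial.eval (fun j => N (X j)) q := by
  have h := hN.1.1
  have h1 := hN.1.2
  induction q using MvPolynomial.induction_on with
  | C a =>
    have := h.smul a 1
    rw [MvPolynomial.smul_eq_C_mul, mul_one, h1, mul_one] at this
    simpa using this
  | add p q hp hq => rw [h.add, hp, hq, map_add]
  | mul_X p j hp => rw [mul_comm, extreme_mul hN, hp]; simp

theorem nonneg (h : SphPos N) (g : MvPolynomial (Fin d) ℝ)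
    (hg : ∀ x : Fin d → ℝ, ∑ i, x i ^ 2 = 1 → 0 ≤ MvPolynomial.eval x g) : 0 ≤ N g := by
  by_cases h0 : N 1 = 0
  · have := h.cs g
    rw [h0, zero_mul] at this
    have : N g = 0 := by
      have h2 : N g ^ 2 = 0 := le_antisymm this (sq_nonneg _)
      exact pow_eq_zero_iff (two_ne_zero) |>.mp h2
    rw [this]
  have hpos : 0 < N 1 := lt_of_le_of_ne (by simpa using h.sq 1) (Ne.symm h0)
  have hs : (N 1)⁻¹ • N ∈ states d :=
    ⟨h.scale _ (inv_nonneg.mpr hpos.le), by simp [h0]⟩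
  have hsub : states d ⊆ {M | 0 ≤ M g} := by
    rw [← closure_convexHull_extremePoints (states_compact (d := d)) states_convex]
    refine closure_minimal (convexHull_min ?_ ?_) ?_
    · intro M hM
      rw [Set.mem_ofPred_eq, extreme_eval hM]
      apply hg
      have h1 := hM.1.1.sph 1
      rw [mul_one, hM.1.2, extreme_eval hM] at h1
      simpa using h1
    · intro M hM N hN a b ha hb _
      exact add_nonneg (mul_nonneg ha hM) (mul_nonneg hb hN)
    · exact isClosed_le (by fun_prop) (by fun_prop)
  have := hsub hs
  simp only [Set.mem_ofPred_eq, Pi.smul_apply, smul_eq_mul] at this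
  exact nonneg_of_mul_nonneg_right this (inv_pos.mpr hpos)

end SphPos


namespace Cyl
open MvPolynomial Filter Topology

variable {d : ℕ}

/-- unit sphere -/
def Sph (d : ℕ) : Set (Fin d → ℝ) := {x | ∑ i, x i ^ 2 = 1}

theorem sph_compact : IsCompact (Sph d) := by
  refine Metric.isCompact_of_isClosed_isBounded
    (isClosed_eq (by fun_prop) (by fun_prop)) ?_
  refine (Metric.isBounded_closedBall (x := (0 : Fin d → ℝ)) (r := 1)).subset ?_
  intro x hx
  have hx' : ∑ i, x i ^ 2 = 1 := hx
  rw [mem_closedBall_zero_iff, pi_norm_le_iff_of_nonneg zero_le_one]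
  intro i
  have h2 : x i ^ 2 ≤ ∑ i, x i ^ 2 :=
    Finset.single_le_sum (f := fun i => x i ^ 2) (fun i _ => sq_nonneg _) (Finset.mem_univ i)
  rw [Real.norm_eq_abs]
  exact (sq_le_one_iff_abs_le_one _).mp (by linarith)

theorem sw (f : Sph d → ℝ) (hf : Continuous f) (ε : ℝ) (hε : 0 < ε) :
    ∃ p : MvPolynomial (Fin d) ℝ, ∀ x : Sph d, |eval x.1 p - f x| < ε := by
  have : CompactSpace (Sph d) := isCompact_iff_compactSpace.mp sph_compact
  let c : Fin d → C(Sph d, ℝ) := fun j => ⟨fun x => x.1 j, (continuous_apply j).comp continuous_subtype_val⟩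
  let Φ : MvPolynomial (Fin d) ℝ →ₐ[ℝ] C(Sph d, ℝ) := aeval c
  have hΦ : ∀ p x, Φ p x = eval x.1 p := by
    intro p x
    induction p using MvPolynomial.induction_on with
    | C a => simp [Φ]
    | add p q hp hq => simp [hp, hq]
    | mul_X p j hp => rw [map_mul, map_mul, ContinuousMap.mul_apply, hp]; simp [Φ, c]
  obtain ⟨⟨g, p, rfl⟩, hg⟩ := ContinuousMap.exists_mem_subalgebra_near_continuous_of_separatesPoints
    Φ.range (by
      intro x y hxy
      have : ∃ j, x.1 j ≠ y.1 j := by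
        by_contra h
        push Not at h
        exact hxy (Subtype.ext (funext h))
      obtain ⟨j, hj⟩ := this
      refine ⟨_, ⟨Φ (X j), ⟨X j, rfl⟩, rfl⟩, ?_⟩
      simpa [hΦ] using hj) f hf ε hε
  refine ⟨p, fun x => ?_⟩
  have := hg x
  rw [Real.norm_eq_abs] at this
  rw [← hΦ]
  exact this

theorem approx (F : ℕ → MvPolynomial (Fin d) ℝ) (m : ℕ) (δ : ℝ) (hδ : 0 < δ) :
    ∃ (I : Finset (Sph d)) (g : Sph d → MvPolynomial (Fin d) ℝ),
      (∀ i, ∀ x ∈ Sph d, 0 ≤ eval x (g i)) ∧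
      ∀ k < m, ∀ x ∈ Sph d, |eval x (F k) - ∑ i ∈ I, eval i.1 (F k) * eval x (g i)| ≤ δ := by
  classical
  have : CompactSpace (Sph d) := isCompact_iff_compactSpace.mp sph_compact
  let v : Sph d → (Fin m → ℝ) := fun x k => eval x.1 (F k)
  have hv : Continuous v := by
    refine continuous_pi fun k => ?_
    exact (MvPolynomial.continuous_eval (F k)).comp continuous_subtype_val
  let U : Sph d → Set (Sph d) := fun i => {x | dist (v x) (v i) < δ / 2}
  obtain ⟨I, hI⟩ := isCompact_univ.elim_finite_subcover U
    (fun i => isOpen_lt (by fun_prop) continuous_const)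
    (fun x _ => Set.mem_iUnion.mpr ⟨x, by change dist (v x) (v x) < δ / 2; rw [dist_self]; linarith⟩)
  let β : Sph d → Sph d → ℝ := fun i x => max 0 (δ / 2 - dist (v x) (v i))
  have hβc : ∀ i, Continuous (β i) := fun i => by
    simp only [β]; fun_prop
  have hβ0 : ∀ i x, 0 ≤ β i x := fun i x => le_max_left _ _
  have hβpos : ∀ x, 0 < ∑ i ∈ I, β i x := by
    intro x
    have := hI (Set.mem_univ x)
    simp only [Set.mem_iUnion] at this
    obtain ⟨i, hi, hx⟩ := this
    have hx' : dist (v x) (v i) < δ / 2 := hx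
    refine lt_of_lt_of_le ?_ (Finset.single_le_sum (f := fun i => β i x) (fun i _ => hβ0 i x) hi)
    exact lt_max_of_lt_right (by linarith)
  let φ : Sph d → Sph d → ℝ := fun i x => β i x / ∑ i ∈ I, β i x
  have hφc : ∀ i, Continuous (φ i) := fun i =>
    (hβc i).div (continuous_finsetSum _ fun i _ => hβc i) (fun x => (hβpos x).ne')
  have hφ0 : ∀ i x, 0 ≤ φ i x := fun i x => div_nonneg (hβ0 i x) (hβpos x).le
  have hφ1 : ∀ x, ∑ i ∈ I, φ i x = 1 := by
    intro x
    simp only [φ]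
    rw [← Finset.sum_div, div_self (hβpos x).ne']
  have hφd : ∀ i x k, k < m → φ i x * |eval x.1 (F k) - eval i.1 (F k)| ≤ φ i x * (δ / 2) := by
    intro i x k hk
    by_cases h : dist (v x) (v i) < δ / 2
    · refine mul_le_mul_of_nonneg_left ?_ (hφ0 i x)
      have := (dist_le_pi_dist (v x) (v i) ⟨k, hk⟩).trans h.le
      rwa [Real.dist_eq] at this
    · have : φ i x = 0 := by
        have : β i x = 0 := max_eq_left (by linarith)
        simp [φ, this]
      rw [this]; simp
  set S := ∑ i ∈ I, ∑ k ∈ Finset.range m, |eval i.1 (F k)| with hS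
  have hS0 : 0 ≤ S := Finset.sum_nonneg fun i _ => Finset.sum_nonneg fun k _ => abs_nonneg _
  set ε := δ / (4 * (S + 1)) with hε
  have hεp : 0 < ε := by positivity
  choose h hh using fun i => sw (φ i) (hφc i) ε hεp
  refine ⟨I, fun i => h i + C ε, ?_, ?_⟩
  · intro i x hx
    have h1 := (abs_lt.mp (hh i ⟨x, hx⟩)).1
    have h2 := hφ0 i ⟨x, hx⟩
    simp only [map_add, eval_C]
    simp only at h1
    linarith
  · intro k hk x hx
    set y : Sph d := ⟨x, hx⟩
    have e1 : eval x (F k) - ∑ i ∈ I, eval i.1 (F k) * eval x (h i + C ε) =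
        ∑ i ∈ I, φ i y * (eval x (F k) - eval i.1 (F k)) +
        ∑ i ∈ I, eval i.1 (F k) * (φ i y - eval x (h i) - ε) := by
      have : eval x (F k) = ∑ i ∈ I, φ i y * eval x (F k) := by
        rw [← Finset.sum_mul, hφ1, one_mul]
      rw [← Finset.sum_add_distrib]
      conv_lhs => rw [this]
      rw [← Finset.sum_sub_distrib]
      refine Finset.sum_congr rfl fun i _ => ?_
      simp only [map_add, eval_C]
      ring
    have b1 : |∑ i ∈ I, φ i y * (eval x (F k) - eval i.1 (F k))| ≤ δ / 2 := by
      calc _ ≤ ∑ i ∈ I, |φ i y * (eval x (F k) - eval i.1 (F k))| := Finset.abs_sum_le_sum_abs _ _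
        _ ≤ ∑ i ∈ I, φ i y * (δ / 2) := by
          refine Finset.sum_le_sum fun i _ => ?_
          rw [abs_mul, abs_of_nonneg (hφ0 i y)]
          exact hφd i y k hk
        _ = δ / 2 := by rw [← Finset.sum_mul, hφ1, one_mul]
    have b2 : |∑ i ∈ I, eval i.1 (F k) * (φ i y - eval x (h i) - ε)| ≤ δ / 2 := by
      calc _ ≤ ∑ i ∈ I, |eval i.1 (F k) * (φ i y - eval x (h i) - ε)| :=
            Finset.abs_sum_le_sum_abs _ _
        _ ≤ ∑ i ∈ I, (∑ k ∈ Finset.range m, |eval i.1 (F k)|) * (2 * ε) := by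
          refine Finset.sum_le_sum fun i _ => ?_
          rw [abs_mul]
          refine mul_le_mul ?_ ?_ (abs_nonneg _)
            (Finset.sum_nonneg fun k _ => abs_nonneg _)
          · exact Finset.single_le_sum (f := fun k => |eval i.1 (F k)|)
              (fun k _ => abs_nonneg _) (Finset.mem_range.mpr hk)
          · obtain ⟨h1, h2⟩ := abs_lt.mp (hh i y)
            simp only [y] at h1 h2 ⊢
            exact abs_le.mpr ⟨by linarith, by linarith⟩
        _ = S * (2 * ε) := by rw [← Finset.sum_mul]
        _ ≤ (S + 1) * (2 * ε) := by nlinarith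
        _ = δ / 2 := by rw [hε]; field_simp; ring
    rw [e1]
    exact (abs_add_le _ _).trans (by linarith)

open Polynomial in
set_option maxHeartbeats 1000000 in
theorem cyl_pos (M : (MvPolynomial (Fin d) ℝ)[X] →ₗ[ℝ] ℝ)
    (hsq : ∀ q, 0 ≤ M (q ^ 2))
    (hsph : ∀ q, M (Polynomial.C (∑ i, (MvPolynomial.X i : MvPolynomial (Fin d) ℝ) ^ 2) * q) = M q)
    (q : (MvPolynomial (Fin d) ℝ)[X])
    (hq : ∀ t : ℝ, ∀ x ∈ Sph d, 0 ≤ (q.map (MvPolynomial.eval x)).eval t) : 0 ≤ M q := by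
  -- tensor positivity
  have T : ∀ (r : ℝ[X]) (g : MvPolynomial (Fin d) ℝ), (∀ t, 0 ≤ r.eval t) →
      (∀ x ∈ Sph d, 0 ≤ MvPolynomial.eval x g) →
      0 ≤ M (r.map MvPolynomial.C * Polynomial.C g) := by
    intro r g hr hg
    let N : ℝ[X] →ₗ[ℝ] ℝ :=
      { toFun := fun r => M (r.map MvPolynomial.C * Polynomial.C g)
        map_add' := fun a b => by rw [Polynomial.map_add, add_mul, map_add]
        map_smul' := fun c a => by
          rw [RingHom.id_apply, ← map_smul]
          congr 1
          rw [Polynomial.smul_eq_C_mul, Polynomial.map_mul, Polynomial.map_C, ← smul_mul_assoc]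
          congr 1
          ext1 n
          rw [Polynomial.coeff_C_mul, Polynomial.coeff_smul, MvPolynomial.smul_eq_C_mul] }
    refine uni_pos r.natDegree N ?_ r le_rfl hr
    intro s
    change 0 ≤ M ((s ^ 2).map MvPolynomial.C * Polynomial.C g)
    have hN : SphPos (fun g => M ((s ^ 2).map MvPolynomial.C * Polynomial.C g)) := by
      refine ⟨?_, ?_, ?_, ?_⟩
      · intro a b; rw [Polynomial.C_add, mul_add, map_add]
      · intro c a
        rw [← Polynomial.smul_C, mul_smul_comm, M.map_smul, smul_eq_mul]
      · intro a
        have := hsq (s.map MvPolynomial.C * Polynomial.C a)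
        rwa [mul_pow, ← Polynomial.C_pow, ← Polynomial.map_pow] at this
      · intro a
        rw [Polynomial.C_mul, mul_left_comm, hsph]
    exact hN.nonneg g hg
  -- bound
  have B : ∀ (n : ℕ) (u : MvPolynomial (Fin d) ℝ) (ε : ℝ),
      (∀ x ∈ Sph d, |MvPolynomial.eval x u| ≤ ε) →
      -(ε * M (1 + Polynomial.X ^ (2 * n))) ≤ M (Polynomial.X ^ n * Polynomial.C u) := by
    intro n u ε hu
    have h1 := T (1 + Polynomial.X ^ (2 * n) + Polynomial.X ^ n) (MvPolynomial.C ε + u)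
      (fun t => by
        simp only [Polynomial.eval_add, Polynomial.eval_one, Polynomial.eval_pow,
          Polynomial.eval_X, mul_comm 2 n, pow_mul]
        nlinarith [sq_nonneg (t ^ n + 1)])
      (fun x hx => by
        have := (abs_le.mp (hu x hx)).1
        simp only [map_add, MvPolynomial.eval_C]; linarith)
    have h2 := T (1 + Polynomial.X ^ (2 * n) - Polynomial.X ^ n) (MvPolynomial.C ε - u)
      (fun t => by
        simp only [Polynomial.eval_add, Polynomial.eval_sub, Polynomial.eval_one,
          Polynomial.eval_pow, Polynomial.eval_X, mul_comm 2 n, pow_mul]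
        nlinarith [sq_nonneg (t ^ n - 1)])
      (fun x hx => by
        have := (abs_le.mp (hu x hx)).2
        simp only [map_sub, MvPolynomial.eval_C]; linarith)
    have h3 := add_nonneg h1 h2
    rw [← map_add] at h3
    have h4 : Polynomial.map MvPolynomial.C (1 + Polynomial.X ^ (2 * n) + Polynomial.X ^ n) *
          Polynomial.C (MvPolynomial.C ε + u) +
        Polynomial.map MvPolynomial.C (1 + Polynomial.X ^ (2 * n) - Polynomial.X ^ n) *
          Polynomial.C (MvPolynomial.C ε - u) =
        (2 : ℝ) • (ε • (1 + Polynomial.X ^ (2 * n)) + Polynomial.X ^ n * Polynomial.C u) := by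
      have e1 : ∀ (c : ℝ) (z : (MvPolynomial (Fin d) ℝ)[X]),
          c • z = Polynomial.C (MvPolynomial.C c) * z := by
        intro c z
        ext1 n
        rw [Polynomial.coeff_C_mul, Polynomial.coeff_smul, MvPolynomial.smul_eq_C_mul]
      rw [e1, e1]
      simp only [Polynomial.map_add, Polynomial.map_sub, Polynomial.map_one, Polynomial.map_pow,
        Polynomial.map_X, Polynomial.C_add, Polynomial.C_sub, map_ofNat]
      ring
    rw [h4, map_smul, map_add, map_smul, smul_eq_mul, smul_eq_mul] at h3
    linarith
  -- main
  have hc : ∀ n : ℕ, 0 ≤ M (1 + Polynomial.X ^ (2 * n)) := by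
    intro n
    have h1 := hsq 1
    have h2 := hsq (Polynomial.X ^ n)
    rw [map_add, mul_comm 2 n, pow_mul]
    rw [one_pow] at h1
    linarith
  set m := q.natDegree + 1 with hm
  set c := ∑ n ∈ Finset.range m, M (1 + Polynomial.X ^ (2 * n)) with hcdef
  have hc0 : 0 ≤ c := Finset.sum_nonneg fun n _ => hc n
  have key : ∀ δ : ℝ, 0 < δ → -(δ * c) ≤ M q := by
    intro δ hδ
    obtain ⟨I, g, hg0, hg⟩ := approx (fun n => q.coeff n) m δ hδ
    have e1 : q = (∑ n ∈ Finset.range m, Polynomial.X ^ n *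
          Polynomial.C (q.coeff n - ∑ i ∈ I, MvPolynomial.C (MvPolynomial.eval i.1 (q.coeff n)) * g i)) +
        ∑ i ∈ I, (q.map (MvPolynomial.eval i.1)).map MvPolynomial.C * Polynomial.C (g i) := by
      have e2 : ∀ i : Sph d, ((q.map (MvPolynomial.eval i.1)).map (MvPolynomial.C (σ := Fin d)) : (MvPolynomial (Fin d) ℝ)[X]) =
          ∑ n ∈ Finset.range m, Polynomial.X ^ n *
            Polynomial.C (MvPolynomial.C (MvPolynomial.eval i.1 (q.coeff n))) := by
        intro i
        conv_lhs => rw [q.as_sum_range_C_mul_X_pow]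
        simp only [Polynomial.map_sum, Polynomial.map_mul, Polynomial.map_C, Polynomial.map_pow,
          Polynomial.map_X, ← hm]
        exact Finset.sum_congr rfl fun n _ => mul_comm _ _
      simp_rw [e2, Finset.sum_mul]
      rw [Finset.sum_comm, ← Finset.sum_add_distrib]
      conv_lhs => rw [q.as_sum_range_C_mul_X_pow]
      refine Finset.sum_congr rfl fun n _ => ?_
      rw [Polynomial.C_sub, mul_sub, map_sum, Finset.mul_sum]
      simp only [Polynomial.C_mul, ← mul_assoc]
      ring
    have b1 : -(δ * c) ≤ M (∑ n ∈ Finset.range m, Polynomial.X ^ n *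
          Polynomial.C (q.coeff n - ∑ i ∈ I, MvPolynomial.C (MvPolynomial.eval i.1 (q.coeff n)) * g i)) := by
      rw [map_sum, hcdef, Finset.mul_sum, ← Finset.sum_neg_distrib]
      refine Finset.sum_le_sum fun n hn => B n _ δ ?_
      intro x hx
      have := hg n (Finset.mem_range.mp hn) x hx
      simpa using this
    have b2 : 0 ≤ M (∑ i ∈ I, (q.map (MvPolynomial.eval i.1)).map MvPolynomial.C * Polynomial.C (g i)) := by
      rw [map_sum]
      exact Finset.sum_nonneg fun i _ => T _ _ (fun t => hq t i.1 i.2) (hg0 i)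
    rw [e1, map_add]
    linarith
  by_contra hneg
  push Not at hneg
  have h1 := key (-(M q) / (2 * (c + 1))) (by apply div_pos <;> linarith)
  have h2 : -(M q) / (2 * (c + 1)) * c ≤ -(M q) / 2 := by
    have e : -(M q) / (2 * (c + 1)) * (c + 1) = -(M q) / 2 := by
      field_simp
    rw [← e]
    exact mul_le_mul_of_nonneg_left (by linarith) (div_nonneg (by linarith) (by linarith))
  linarith

end Cyl

namespace Transfer
open Filter Topology

variable {d : ℕ}

theorem polyRes_apply (p : MvPolynomial (Fin d) ℝ) (x : Xsp d) :
    (polyRes p).1 x = MvPolynomial.eval x.1 p := by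
  induction p using MvPolynomial.induction_on with
  | C a =>
    have : (polyRes (MvPolynomial.C a) : Aalg d) = algebraMap ℝ _ a := by
      simp [polyRes]
    rw [this, MvPolynomial.eval_C]
    rfl
  | add p q hp hq =>
    rw [map_add, map_add, ← hp, ← hq]; rfl
  | mul_X p j hp =>
    rw [map_mul, map_mul, ← hp, MvPolynomial.eval_X]
    have : (polyRes (MvPolynomial.X j) : Aalg d) = coordA j := by simp [polyRes]
    rw [this]
    rfl

/-- Euclidean norm -/
noncomputable def rho (x : Xsp d) : ℝ := Real.sqrt (∑ i, x.1 i ^ 2)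

/-- direction -/
noncomputable def th (x : Xsp d) (j : Fin d) : ℝ := x.1 j / rho x

theorem ssq_pos (x : Xsp d) : 0 < ∑ i, x.1 i ^ 2 := by
  obtain ⟨j, hj⟩ : ∃ j, x.1 j ≠ 0 := by
    by_contra h
    push Not at h
    exact x.2 (funext h)
  have h1 : 0 < x.1 j ^ 2 := by positivity
  exact h1.trans_le (Finset.single_le_sum (f := fun i => x.1 i ^ 2)
    (fun i _ => sq_nonneg _) (Finset.mem_univ j))

theorem rho_pos (x : Xsp d) : 0 < rho x := Real.sqrt_pos.mpr (ssq_pos x)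

theorem rho_sq (x : Xsp d) : rho x * rho x = ∑ i, x.1 i ^ 2 :=
  Real.mul_self_sqrt (ssq_pos x).le

theorem rho_th (x : Xsp d) (j : Fin d) : rho x * th x j = x.1 j :=
  mul_div_cancel₀ _ (rho_pos x).ne'

theorem th_th (x : Xsp d) (j k : Fin d) : th x j * th x k = fklFn j k x := by
  unfold th fklFn
  rw [div_mul_div_comm, rho_sq]

theorem th_sum (x : Xsp d) : ∑ j, th x j ^ 2 = 1 := by
  unfold th
  simp only [div_pow]
  rw [← Finset.sum_div, sq (rho x), rho_sq, div_self (ssq_pos x).ne']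

theorem coord_mem (j : Fin d) : coordFn j ∈ Aalg d := (coordA j).2
theorem fkl_mem (j k : Fin d) : fklFn j k ∈ Aalg d := (fklA j k).2

theorem rr_mem : (rho * rho : Xsp d → ℝ) ∈ Aalg d := by
  have : (rho * rho : Xsp d → ℝ) = ∑ i, coordFn i ^ 2 := by
    funext x
    rw [Pi.mul_apply, rho_sq, Finset.sum_apply]
    rfl
  rw [this]
  exact sum_mem fun i _ => pow_mem (coord_mem i) 2

theorem rt_mem (j : Fin d) : (rho * (fun x => th x j) : Xsp d → ℝ) ∈ Aalg d := by
  have : (rho * (fun x => th x j) : Xsp d → ℝ) = coordFn j := by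
    funext x
    exact rho_th x j
  rw [this]
  exact coord_mem j

theorem tt_mem (j k : Fin d) : ((fun x => th x j) * (fun x => th x k) : Xsp d → ℝ) ∈ Aalg d := by
  have : ((fun x => th x j) * (fun x => th x k) : Xsp d → ℝ) = fklFn j k := by
    funext x
    exact th_th x j k
  rw [this]
  exact fkl_mem j k

/-- odd functions -/
def Odd' (h : Xsp d → ℝ) : Prop := rho * h ∈ Aalg d ∧ ∀ j, (fun x => th x j) * h ∈ Aalg d

theorem Odd'.add {h k : Xsp d → ℝ} (hh : Odd' h) (hk : Odd' k) : Odd' (h + k) := by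
  refine ⟨?_, fun j => ?_⟩
  · rw [mul_add]; exact add_mem hh.1 hk.1
  · rw [mul_add]; exact add_mem (hh.2 j) (hk.2 j)

theorem odd_zero : Odd' (0 : Xsp d → ℝ) := by
  refine ⟨?_, fun j => ?_⟩ <;> rw [mul_zero] <;> exact zero_mem _

theorem odd_rho {h : Xsp d → ℝ} (hh : h ∈ Aalg d) : Odd' (rho * h) := by
  refine ⟨?_, fun j => ?_⟩
  · rw [← mul_assoc]; exact mul_mem rr_mem hh
  · rw [← mul_assoc, mul_comm _ rho]; exact mul_mem (rt_mem j) hh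

theorem odd_th {h : Xsp d → ℝ} (hh : h ∈ Aalg d) (j : Fin d) : Odd' ((fun x => th x j) * h) := by
  refine ⟨?_, fun k => ?_⟩
  · rw [← mul_assoc]; exact mul_mem (rt_mem j) hh
  · rw [← mul_assoc]; exact mul_mem (tt_mem k j) hh

/-- evaluation on the cover -/
noncomputable def ev (s : ℝ) (x : Xsp d) : Polynomial (MvPolynomial (Fin d) ℝ) →+* ℝ :=
  Polynomial.eval₂RingHom (MvPolynomial.eval fun j => s * th x j) (s * rho x)

theorem ev_C (s : ℝ) (x : Xsp d) (p) :
    ev s x (Polynomial.C p) = MvPolynomial.eval (fun j => s * th x j) p := by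
  simp [ev]

theorem ev_X (s : ℝ) (x : Xsp d) : ev s x Polynomial.X = s * rho x := by
  simp [ev]

theorem ev_smul (s : ℝ) (x : Xsp d) (c : ℝ) (q) : ev s x (c • q) = c * ev s x q := by
  have e1 : c • q = Polynomial.C (MvPolynomial.C c) * q := by
    ext1 n
    rw [Polynomial.coeff_C_mul, Polynomial.coeff_smul, MvPolynomial.smul_eq_C_mul]
  rw [e1, map_mul, ev_C, MvPolynomial.eval_C]

/-- decomposition property -/
def Dec (q : Polynomial (MvPolynomial (Fin d) ℝ)) : Prop :=
  ∃ a b : Xsp d → ℝ, a ∈ Aalg d ∧ Odd' b ∧ ∀ x, ev 1 x q = a x + b x ∧ ev (-1) x q = a x - b x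

theorem Dec.add {p q : Polynomial (MvPolynomial (Fin d) ℝ)} (hp : Dec p) (hq : Dec q) :
    Dec (p + q) := by
  obtain ⟨a, b, ha, hb, h⟩ := hp
  obtain ⟨a', b', ha', hb', h'⟩ := hq
  refine ⟨a + a', b + b', add_mem ha ha', hb.add hb', fun x => ?_⟩
  simp only [map_add, (h x).1, (h x).2, (h' x).1, (h' x).2, Pi.add_apply]
  constructor <;> ring

theorem Dec.mul_X {p : Polynomial (MvPolynomial (Fin d) ℝ)} (hp : Dec p) :
    Dec (p * Polynomial.X) := by
  obtain ⟨a, b, ha, hb, h⟩ := hp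
  refine ⟨rho * b, rho * a, hb.1, odd_rho ha, fun x => ?_⟩
  simp only [map_mul, (h x).1, (h x).2, Pi.mul_apply, ev_X]
  constructor <;> ring

theorem Dec.mul_th {p : Polynomial (MvPolynomial (Fin d) ℝ)} (hp : Dec p) (j : Fin d) :
    Dec (p * Polynomial.C (MvPolynomial.X j)) := by
  obtain ⟨a, b, ha, hb, h⟩ := hp
  refine ⟨(fun x => th x j) * b, (fun x => th x j) * a, hb.2 j, odd_th ha j, fun x => ?_⟩
  simp only [map_mul, (h x).1, (h x).2, Pi.mul_apply, ev_C, MvPolynomial.eval_X]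
  constructor <;> ring

theorem dec (q : Polynomial (MvPolynomial (Fin d) ℝ)) : Dec q := by
  induction q using Polynomial.induction_on with
  | C p =>
    induction p using MvPolynomial.induction_on with
    | C a =>
      refine ⟨algebraMap ℝ _ a, 0, Subalgebra.algebraMap_mem _ a, odd_zero, fun x => ?_⟩
      simp [ev_C]
    | add p q hp hq => rw [Polynomial.C_add]; exact hp.add hq
    | mul_X p j hp => rw [Polynomial.C_mul]; exact hp.mul_th j
  | add p q hp hq => exact hp.add hq
  | monomial n a h =>
    rw [pow_succ, ← mul_assoc]
    exact h.mul_X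

theorem even_mem (q : Polynomial (MvPolynomial (Fin d) ℝ)) :
    (fun x => (ev 1 x q + ev (-1) x q) / 2) ∈ Aalg d := by
  obtain ⟨a, b, ha, hb, h⟩ := dec q
  convert ha using 1
  funext x
  rw [(h x).1, (h x).2]; ring

/-- lifted functional -/
noncomputable def lift (F : Aalg d →ₗ[ℝ] ℝ) : Polynomial (MvPolynomial (Fin d) ℝ) →ₗ[ℝ] ℝ where
  toFun q := F ⟨_, even_mem q⟩
  map_add' p q := by
    rw [← map_add]
    congr 1
    apply Subtype.ext
    funext x
    change _ = (ev 1 x p + ev (-1) x p) / 2 + (ev 1 x q + ev (-1) x q) / 2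
    simp only [map_add]
    ring
  map_smul' c q := by
    rw [RingHom.id_apply, ← map_smul]
    congr 1
    apply Subtype.ext
    funext x
    change _ = c * ((ev 1 x q + ev (-1) x q) / 2)
    simp only [ev_smul]
    ring

theorem lift_sq (F : Aalg d →ₗ[ℝ] ℝ) (hF : ∀ g : Aalg d, 0 ≤ F (g ^ 2)) (q) :
    0 ≤ lift F (q ^ 2) := by
  obtain ⟨a, b, ha, hb, h⟩ := dec q
  have : lift F (q ^ 2) = F ((⟨a, ha⟩ : Aalg d) ^ 2 +
      ∑ j, (⟨_, hb.2 j⟩ : Aalg d) ^ 2) := by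
    change F _ = _
    congr 1
    apply Subtype.ext
    funext x
    have e2 : ((∑ j, (⟨_, hb.2 j⟩ : Aalg d) ^ 2 : Aalg d) : Xsp d → ℝ) x =
        ∑ j, (th x j * b x) ^ 2 := by
      rw [AddSubmonoidClass.coe_finset_sum, Finset.sum_apply]
      rfl
    change _ = a x ^ 2 + _
    rw [e2]
    simp only [map_pow, (h x).1, (h x).2, mul_pow]
    rw [← Finset.sum_mul, th_sum]
    ring
  rw [this, map_add, map_sum]
  exact add_nonneg (hF _) (Finset.sum_nonneg fun j _ => hF _)

theorem lift_sph (F : Aalg d →ₗ[ℝ] ℝ) (q) :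
    lift F (Polynomial.C (∑ i, (MvPolynomial.X i : MvPolynomial (Fin d) ℝ) ^ 2) * q) = lift F q := by
  change F _ = F _
  congr 1
  apply Subtype.ext
  funext x
  simp only [map_mul, ev_C, map_sum, map_pow, MvPolynomial.eval_X, mul_pow]
  simp [th_sum]

/-- pullback of polynomials -/
noncomputable def pull (p : MvPolynomial (Fin d) ℝ) : Polynomial (MvPolynomial (Fin d) ℝ) :=
  MvPolynomial.aeval (fun j => Polynomial.X * Polynomial.C (MvPolynomial.X j)) p

theorem pull_eval (p : MvPolynomial (Fin d) ℝ) (t : ℝ) (θ : Fin d → ℝ) :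
    Polynomial.eval₂ (MvPolynomial.eval θ) t (pull p) =
      MvPolynomial.eval (fun j => t * θ j) p := by
  induction p using MvPolynomial.induction_on with
  | C a =>
    have : pull (MvPolynomial.C a : MvPolynomial (Fin d) ℝ) =
        Polynomial.C (MvPolynomial.C a) := by
      simp only [pull, MvPolynomial.algHom_C]; rfl
    rw [this]; simp
  | add p q hp hq =>
    have : pull (p + q) = pull p + pull q := by simp [pull]
    rw [this, Polynomial.eval₂_add, hp, hq, map_add]
  | mul_X p j hp =>
    have : pull (p * MvPolynomial.X j) =
        pull p * (Polynomial.X * Polynomial.C (MvPolynomial.X j)) := by simp [pull]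
    rw [this, Polynomial.eval₂_mul, hp, Polynomial.eval₂_mul]
    simp

theorem lift_pull (F : Aalg d →ₗ[ℝ] ℝ) (p) : lift F (pull p) = F (polyRes p) := by
  change F _ = F _
  congr 1
  apply Subtype.ext
  funext x
  rw [polyRes_apply]
  have h : ∀ s : ℝ, s * s = 1 → ev s x (pull p) = MvPolynomial.eval x.1 p := by
    intro s hs
    unfold ev
    rw [Polynomial.coe_eval₂RingHom, pull_eval]
    congr 2
    funext j
    rw [← rho_th x j]
    linear_combination (rho x * th x j) * hs
  change (ev 1 x (pull p) + ev (-1) x (pull p)) / 2 = _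
  rw [h 1 (by norm_num), h (-1) (by norm_num)]
  ring

theorem backward (L : MvPolynomial (Fin d) ℝ →ₗ[ℝ] ℝ) (F : Aalg d →ₗ[ℝ] ℝ)
    (hF : ∀ g : Aalg d, 0 ≤ F (g ^ 2)) (hL : ∀ p, F (polyRes p) = L p) (p)
    (hp : ∀ x, 0 ≤ MvPolynomial.eval x p) : 0 ≤ L p := by
  rw [← hL, ← lift_pull]
  refine Cyl.cyl_pos (lift F) (lift_sq F hF) (lift_sph F) _ ?_
  intro t x _
  rw [Polynomial.eval_map, pull_eval]
  exact hp _

/-- points converging to zero -/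
noncomputable def pt (hd : 1 ≤ d) (n : ℕ) : Xsp d :=
  ⟨Pi.single ⟨0, hd⟩ (1 / ((n : ℝ) + 1)), by
    intro h
    have := congrFun h ⟨0, hd⟩
    rw [Pi.single_eq_same] at this
    have h2 : (0 : ℝ) < 1 / ((n : ℝ) + 1) := by positivity
    simp only [Pi.zero_apply] at this
    linarith⟩

theorem pt_tendsto (hd : 1 ≤ d) : Tendsto (fun n => (pt hd n).1) atTop (𝓝 (0 : Fin d → ℝ)) := by
  rw [tendsto_pi_nhds]
  intro j
  change Tendsto (fun n : ℕ => (Pi.single (⟨0, hd⟩ : Fin d) (1 / ((n : ℝ) + 1)) : Fin d → ℝ) j) _ _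
  by_cases h : j = ⟨0, hd⟩
  · subst h
    simp only [Pi.single_eq_same, Pi.zero_apply]
    exact tendsto_one_div_add_atTop_nhds_zero_nat
  · simp only [Pi.single_eq_of_ne h, Pi.zero_apply]
    exact tendsto_const_nhds

/-- good functions -/
def Good (hd : 1 ≤ d) (f : Xsp d → ℝ) : Prop :=
  (∃ h : (Fin d → ℝ) → ℝ, Measurable h ∧ ∀ x : Xsp d, f x = h x.1) ∧
  (∃ p : MvPolynomial (Fin d) ℝ, ∀ x : Xsp d, |f x| ≤ MvPolynomial.eval x.1 p) ∧
  ∃ l : ℝ, Tendsto (fun n => f (pt hd n)) atTop (𝓝 l)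

theorem good_coord (hd : 1 ≤ d) (j : Fin d) : Good hd (coordFn j) := by
  refine ⟨⟨fun x => x j, measurable_pi_apply j, fun x => rfl⟩,
    ⟨MvPolynomial.X j ^ 2 + 1, fun x => ?_⟩, 0, ?_⟩
  · simp only [map_add, map_pow, MvPolynomial.eval_X, map_one]
    change |x.1 j| ≤ _
    apply abs_le.mpr
    constructor <;> nlinarith [sq_nonneg (x.1 j + 1), sq_nonneg (x.1 j - 1)]
  · exact (tendsto_pi_nhds.mp (pt_tendsto hd)) j

theorem good_fkl (hd : 1 ≤ d) (j k : Fin d) : Good hd (fklFn j k) := by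
  refine ⟨⟨fun x => x j * x k / ∑ i, x i ^ 2, by fun_prop, fun x => rfl⟩,
    ⟨1, fun x => ?_⟩, fklFn j k (pt hd 0), ?_⟩
  · unfold fklFn
    have h0 := ssq_pos x
    have h1 : ∀ j, x.1 j ^ 2 ≤ ∑ i, x.1 i ^ 2 := fun j =>
      Finset.single_le_sum (f := fun i => x.1 i ^ 2) (fun i _ => sq_nonneg _) (Finset.mem_univ j)
    rw [map_one, abs_div, abs_of_pos h0, div_le_one h0]
    have h2 := h1 j
    have h3 := h1 k
    apply abs_le.mpr
    constructor <;> nlinarith [sq_nonneg (x.1 j + x.1 k), sq_nonneg (x.1 j - x.1 k)]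
  · refine tendsto_const_nhds.congr fun n => ?_
    have key : ∀ n, fklFn j k (pt hd n) = if j = ⟨0, hd⟩ ∧ k = ⟨0, hd⟩ then 1 else 0 := by
      intro n
      have hn : (1 / ((n : ℝ) + 1)) ≠ 0 := by positivity
      have hs : ∑ i, (pt hd n).1 i ^ 2 = (1 / ((n : ℝ) + 1)) ^ 2 := by
        rw [Finset.sum_eq_single ⟨0, hd⟩]
        · simp [pt]
        · intro i _ hi
          simp [pt, Pi.single_eq_of_ne hi]
        · simp
      unfold fklFn
      rw [hs]
      by_cases hj : j = ⟨0, hd⟩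
      · by_cases hk : k = ⟨0, hd⟩
        · subst hj; subst hk
          simp only [pt, Pi.single_eq_same, and_self, if_true]
          field_simp
        · simp [pt, hk]
      · simp [pt, hj]
    rw [key, key]

theorem good (hd : 1 ≤ d) (f : Aalg d) : Good hd f.1 := by
  obtain ⟨f, hf⟩ := f
  simp only
  unfold Aalg at hf
  induction hf using Algebra.adjoin_induction with
  | mem f hf =>
    rcases hf with ⟨j, rfl⟩ | ⟨⟨j, k⟩, rfl⟩
    · exact good_coord hd j
    · exact good_fkl hd j k
  | algebraMap r =>
    exact ⟨⟨fun _ => r, measurable_const, fun x => rfl⟩,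
      ⟨MvPolynomial.C |r|, fun x => by simp⟩, r, tendsto_const_nhds⟩
  | add f g _ _ hf hg =>
    obtain ⟨⟨a, ha, ha'⟩, ⟨p, hp⟩, l, hl⟩ := hf
    obtain ⟨⟨b, hb, hb'⟩, ⟨q, hq⟩, m, hm⟩ := hg
    refine ⟨⟨a + b, ha.add hb, fun x => ?_⟩, ⟨p + q, fun x => ?_⟩, l + m, hl.add hm⟩
    · simp [ha', hb']
    · rw [map_add]
      exact (abs_add_le _ _).trans (add_le_add (hp x) (hq x))
  | mul f g _ _ hf hg =>
    obtain ⟨⟨a, ha, ha'⟩, ⟨p, hp⟩, l, hl⟩ := hf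
    obtain ⟨⟨b, hb, hb'⟩, ⟨q, hq⟩, m, hm⟩ := hg
    refine ⟨⟨a * b, ha.mul hb, fun x => ?_⟩, ⟨p * q, fun x => ?_⟩, l * m, hl.mul hm⟩
    · simp [ha', hb']
    · rw [map_mul, Pi.mul_apply, abs_mul]
      exact mul_le_mul (hp x) (hq x) (abs_nonneg _) ((abs_nonneg _).trans (hp x))

/-- limit at zero -/
noncomputable def chi (hd : 1 ≤ d) (f : Aalg d) : ℝ := (good hd f).2.2.choose

theorem chi_spec (hd : 1 ≤ d) (f : Aalg d) :
    Tendsto (fun n => f.1 (pt hd n)) atTop (𝓝 (chi hd f)) := (good hd f).2.2.choose_spec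

open Classical in
/-- extension to zero -/
noncomputable def extd (hd : 1 ≤ d) (f : Aalg d) (x : Fin d → ℝ) : ℝ :=
  if h : x = 0 then chi hd f else f.1 ⟨x, h⟩

theorem extd_zero (hd : 1 ≤ d) (f : Aalg d) : extd hd f 0 = chi hd f := by simp [extd]
theorem extd_ne (hd : 1 ≤ d) (f : Aalg d) (x : Fin d → ℝ) (h : x ≠ 0) :
    extd hd f x = f.1 ⟨x, h⟩ := by simp [extd, h]

theorem extd_add (hd : 1 ≤ d) (f g : Aalg d) (x) :
    extd hd (f + g) x = extd hd f x + extd hd g x := by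
  by_cases h : x = 0
  · subst h
    rw [extd_zero, extd_zero, extd_zero]
    exact tendsto_nhds_unique (chi_spec hd (f + g)) ((chi_spec hd f).add (chi_spec hd g))
  · rw [extd_ne hd _ x h, extd_ne hd _ x h, extd_ne hd _ x h]; rfl

theorem extd_smul (hd : 1 ≤ d) (c : ℝ) (g : Aalg d) (x) :
    extd hd (c • g) x = c * extd hd g x := by
  by_cases h : x = 0
  · subst h
    rw [extd_zero, extd_zero]
    exact tendsto_nhds_unique (chi_spec hd (c • g)) ((chi_spec hd g).const_mul c)
  · rw [extd_ne hd _ x h, extd_ne hd _ x h]; rfl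

theorem extd_sq (hd : 1 ≤ d) (g : Aalg d) (x) : 0 ≤ extd hd (g ^ 2) x := by
  by_cases h : x = 0
  · subst h
    rw [extd_zero]
    exact ge_of_tendsto' (chi_spec hd (g ^ 2)) fun n => sq_nonneg (g.1 (pt hd n))
  · rw [extd_ne hd _ x h]; exact sq_nonneg (g.1 ⟨x, h⟩)

theorem extd_poly (hd : 1 ≤ d) (p : MvPolynomial (Fin d) ℝ) (x) :
    extd hd (polyRes p) x = MvPolynomial.eval x p := by
  by_cases h : x = 0
  · subst h
    rw [extd_zero]
    refine tendsto_nhds_unique (chi_spec hd (polyRes p)) ?_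
    simp only [polyRes_apply]
    exact ((MvPolynomial.continuous_eval p).tendsto 0).comp (pt_tendsto hd)
  · rw [extd_ne hd _ x h]; exact polyRes_apply p ⟨x, h⟩

theorem extd_meas (hd : 1 ≤ d) (f : Aalg d) : Measurable (extd hd f) := by
  classical
  obtain ⟨h, hm, hh⟩ := (good hd f).1
  have : extd hd f = fun x => if x = 0 then chi hd f else h x := by
    funext x
    by_cases hx : x = 0
    · subst hx; rw [extd_zero]; simp
    · rw [extd_ne hd _ x hx, if_neg hx]; exact hh ⟨x, hx⟩
  rw [this]
  exact Measurable.ite (measurableSet_singleton 0) measurable_const hm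

theorem extd_bound (hd : 1 ≤ d) (f : Aalg d) :
    ∃ p : MvPolynomial (Fin d) ℝ, ∀ x, |extd hd f x| ≤ MvPolynomial.eval x p := by
  obtain ⟨p, hp⟩ := (good hd f).2.1
  refine ⟨p ^ 2 + 1 + MvPolynomial.C |chi hd f|, fun x => ?_⟩
  simp only [map_add, map_pow, map_one, MvPolynomial.eval_C]
  have h1 := abs_nonneg (chi hd f)
  by_cases h : x = 0
  · subst h
    rw [extd_zero]
    nlinarith [sq_nonneg (MvPolynomial.eval 0 p)]
  · rw [extd_ne hd _ x h]
    have := hp ⟨x, h⟩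
    simp only at this
    nlinarith [sq_nonneg (MvPolynomial.eval x p - 1), sq_nonneg (MvPolynomial.eval x p)]

end Transfer

/-- **Theorem 4.3 (extension theorem).**  A linear functional `L` on
`ℝ[x₁,…,x_d]` is a moment functional (given by a positive Borel measure on
`ℝ^d`) if and only if it extends to a positive linear functional `𝓛` on the
algebra `A` of functions on `ℝ^d ∖ {0}` generated by the polynomials and the
bounded functions `f_kl(x) = x_k x_l / ‖x‖²`. -/
theorem moment_functional_iff_positive_extension (d : ℕ) (hd : 1 ≤ d)
    (L : MvPolynomial (Fin d) ℝ →ₗ[ℝ] ℝ) :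
    (∃ μ : MeasureTheory.Measure (Fin d → ℝ),
      ∀ p : MvPolynomial (Fin d) ℝ,
        MeasureTheory.Integrable (fun x : Fin d → ℝ => MvPolynomial.eval x p) μ ∧
        L p = ∫ x : Fin d → ℝ, MvPolynomial.eval x p ∂μ) ↔
    ∃ 𝓛 : Aalg d →ₗ[ℝ] ℝ, (∀ g : Aalg d, 0 ≤ 𝓛 (g ^ 2)) ∧
      ∀ p : MvPolynomial (Fin d) ℝ, 𝓛 (polyRes p) = L p := by
  constructor
  · rintro ⟨μ, hμ⟩
    have hI : ∀ f : Aalg d, MeasureTheory.Integrable (Transfer.extd hd f) μ := by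
      intro f
      obtain ⟨p, hp⟩ := Transfer.extd_bound hd f
      exact (hμ p).1.mono' (Transfer.extd_meas hd f).aestronglyMeasurable
        (Filter.Eventually.of_forall hp)
    refine ⟨{ toFun := fun f => ∫ x, Transfer.extd hd f x ∂μ
              map_add' := fun f g => ?_
              map_smul' := fun c f => ?_ }, ?_, ?_⟩
    · simp only [Transfer.extd_add]
      exact MeasureTheory.integral_add (hI f) (hI g)
    · simp only [Transfer.extd_smul]
      exact MeasureTheory.integral_const_mul c _
    · intro g
      exact MeasureTheory.integral_nonneg (Transfer.extd_sq hd g)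
    · intro p
      change ∫ x, Transfer.extd hd (polyRes p) x ∂μ = L p
      simp only [Transfer.extd_poly]
      exact (hμ p).2.symm
  · rintro ⟨F, hF, hL⟩
    exact Haviland.haviland L (Transfer.backward L F hF hL)
end

section
/- Let L : A → ℝ be a linear functional with L(f²) ≥ 0 for all f ∈ A. Then there exist a positive Borel measure ν₀ on the unit sphere S^{d−1} = {t ∈ ℝ^d : t₁² + ⋯ + t_d² = 1} and a positive Borel measure ν₁ on X = ℝ^d∖{0} such that for every f ∈ A: (a) for each t ∈ S^{d−1} the radial limit f₀(t) := lim_{r→0⁺} f(r·t) exists; (b) the function f₀ is ν₀-integrable and f is ν₁-integrable; and (c) L(f) = ∫_{S^{d−1}} f₀(t) dν₀(t) + ∫_X f(x) dν₁(x). -/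
/-- The unit sphere `S^{d-1}` in `ℝ^d`. -/
def Sph (d : ℕ) : Type := {t : Fin d → ℝ // ∑ i : Fin d, (t i) ^ 2 = 1}

instance (d : ℕ) : MeasurableSpace (Sph d) := by unfold Sph; infer_instance


open Polynomial in
theorem sos_aux (n : ℕ) : ∀ h : ℝ[X], h.natDegree ≤ 2 * n → (∀ x, 0 ≤ h.eval x) →
    ∃ p q : ℝ[X], p.natDegree ≤ n ∧ q.natDegree ≤ n ∧ h = p ^ 2 + q ^ 2 := by
  induction n with
  | zero =>
    intro h hd hpos
    have h0 := Polynomial.eq_C_of_natDegree_le_zero (p := h) (by simpa using hd)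
    refine ⟨C (Real.sqrt (h.coeff 0)), 0, by simp, by simp, ?_⟩
    have := hpos 0
    rw [h0] at this
    simp only [eval_C] at this
    rw [← C_pow, Real.sq_sqrt this]
    simpa using h0
  | succ n ih =>
    intro h hd hpos
    by_cases hdeg : h.natDegree = 0
    · obtain ⟨p, q, hp, hq, e⟩ := ih h (by omega) hpos
      exact ⟨p, q, by omega, by omega, e⟩
    -- it suffices to find a quadratic factor
    have key : ∀ a b : ℝ, (X - C a) ^ 2 + C b ^ 2 ∣ h →
        ∃ p q : ℝ[X], p.natDegree ≤ n + 1 ∧ q.natDegree ≤ n + 1 ∧ h = p ^ 2 + q ^ 2 := by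
      rintro a b ⟨k, hk⟩
      have hm : ((X - C a) ^ 2 + C b ^ 2 : ℝ[X]).natDegree = 2 := by
        compute_degree!
      have hm0 : ((X - C a) ^ 2 + C b ^ 2 : ℝ[X]) ≠ 0 := by
        intro h0; rw [h0] at hm; simp at hm
      have hk0 : k ≠ 0 := by
        rintro rfl
        apply hdeg; simp [hk]
      have hkd : k.natDegree ≤ 2 * n := by
        have := congrArg natDegree hk
        rw [natDegree_mul hm0 hk0, hm] at this
        omega
      have hkpos' : ∀ x, x ≠ a → 0 ≤ k.eval x := by
        intro x hx
        have h1 := hpos x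
        rw [hk] at h1
        simp only [eval_mul, eval_add, eval_pow, eval_sub, eval_X, eval_C] at h1
        have : 0 < (x - a) ^ 2 + b ^ 2 := by
          have : x - a ≠ 0 := sub_ne_zero.mpr hx
          positivity
        exact nonneg_of_mul_nonneg_right h1 this
      have hkpos : ∀ x, 0 ≤ k.eval x := by
        intro x
        have hcl : IsClosed {x | 0 ≤ k.eval x} := isClosed_le continuous_const k.continuous
        have hd : Dense ({a}ᶜ : Set ℝ) := dense_compl_singleton a
        have : closure ({a}ᶜ : Set ℝ) ⊆ {x | 0 ≤ k.eval x} :=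
          closure_minimal (fun x hx => hkpos' x hx) hcl
        exact this (hd x)
      obtain ⟨p, q, hp, hq, e⟩ := ih k hkd hkpos
      have hX : (X - C a : ℝ[X]).natDegree ≤ 1 := by compute_degree
      refine ⟨(X - C a) * p + C b * q, C b * p - (X - C a) * q, ?_, ?_, ?_⟩
      · refine natDegree_add_le_of_degree_le ?_ ?_
        · exact natDegree_mul_le.trans (by omega)
        · exact (natDegree_C_mul_le _ _).trans (by omega)
      · refine natDegree_sub_le_of_le ?_ ?_ |>.trans (max_self _).le
        · exact (natDegree_C_mul_le _ _).trans (by omega)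
        · exact natDegree_mul_le.trans (by omega)
      · rw [hk, e]; ring
    -- find complex root
    obtain ⟨z, hz⟩ : ∃ z : ℂ, aeval z h = 0 := by
      apply IsAlgClosed.exists_aeval_eq_zero
      intro h0
      exact hdeg (natDegree_eq_of_degree_eq_some h0)
    by_cases hzi : z.im = 0
    · have hroot : h.IsRoot z.re := by
        have : z = ((z.re : ℝ) : ℂ) := by apply Complex.ext <;> simp [hzi]
        rw [this] at hz
        have h2 : aeval (algebraMap ℝ ℂ z.re) h = 0 := hz
        rw [aeval_algebraMap_apply] at h2
        simpa using h2
      obtain ⟨k, hk⟩ := dvd_iff_isRoot.mpr hroot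
      have hka : k.IsRoot z.re := by
        set a := z.re
        have hge : ∀ x, a < x → 0 ≤ k.eval x := by
          intro x hx
          have h1 := hpos x
          rw [hk] at h1
          simp only [eval_mul, eval_sub, eval_X, eval_C] at h1
          exact nonneg_of_mul_nonneg_right h1 (by linarith)
        have hle : ∀ x, x < a → k.eval x ≤ 0 := by
          intro x hx
          have h1 := hpos x
          rw [hk] at h1
          simp only [eval_mul, eval_sub, eval_X, eval_C] at h1
          nlinarith
        have hc : Continuous fun x => k.eval x := k.continuous
        apply le_antisymm
        · exact closure_minimal (s := Set.Iio a) (t := {x | k.eval x ≤ 0})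
            hle (isClosed_le hc continuous_const) (by simp)
        · exact closure_minimal (s := Set.Ioi a) (t := {x | 0 ≤ k.eval x})
            hge (isClosed_le continuous_const hc) (by simp)
      obtain ⟨l, hl⟩ := dvd_iff_isRoot.mpr hka
      apply key z.re 0
      refine ⟨l, ?_⟩
      rw [hk, hl]; simp; ring
    · apply key z.re z.im
      have := h.quadratic_dvd_of_aeval_eq_zero_im_ne_zero hz hzi
      convert this using 1
      rw [← Complex.normSq_eq_norm_sq, Complex.normSq_apply]
      simp only [map_mul, map_add, map_ofNat]
      ring

/-- Positive functionals supported on the sphere. -/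
structure GoodF {d : ℕ} {M : Type*} [AddCommGroup M] [Module ℝ M]
    [Module (MvPolynomial (Fin d) ℝ) M] (Q : Set M) (Λ : M →ₗ[ℝ] ℝ) : Prop where
  pos : ∀ q ∈ Q, ∀ a : MvPolynomial (Fin d) ℝ, 0 ≤ Λ (a ^ 2 • q)
  sph : ∀ y : M, Λ ((∑ j : Fin d, (MvPolynomial.X j : MvPolynomial (Fin d) ℝ) ^ 2) • y) = Λ y

section
variable {d : ℕ} {M : Type*} [AddCommGroup M] [Module ℝ M]
    [Module (MvPolynomial (Fin d) ℝ) M] [IsScalarTower ℝ (MvPolynomial (Fin d) ℝ) M]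

local notation "RR" => MvPolynomial (Fin d) ℝ

theorem goodF_le {Q : Set M} {Λ : M →ₗ[ℝ] ℝ} (h : GoodF (d := d) Q Λ) {q : M} (hq : q ∈ Q)
    (b : RR) (j : Fin d) : Λ (((MvPolynomial.X j) ^ 2 * b ^ 2 : RR) • q) ≤ Λ (b ^ 2 • q) := by
  have h1 := h.sph (b ^ 2 • q)
  rw [Finset.sum_smul, map_sum] at h1
  rw [← h1, mul_smul]
  refine Finset.single_le_sum (f := fun j => Λ ((MvPolynomial.X j : RR) ^ 2 • b ^ 2 • q))
    (fun i _ => ?_) (Finset.mem_univ j)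
  simp only [smul_smul, ← mul_pow]
  exact h.pos q hq _

theorem real_smul_eq (c : ℝ) (y : M) : (MvPolynomial.C c : RR) • y = c • y := by
  rw [← MvPolynomial.algebraMap_eq, algebraMap_smul]

theorem goodF_bound (Q : Set M) (a : RR) : ∃ K : ℝ, 0 ≤ K ∧ ∀ Λ : M →ₗ[ℝ] ℝ, GoodF (d := d) Q Λ →
    ∀ q ∈ Q, ∀ b : RR, |Λ ((a * b ^ 2) • q)| ≤ K * Λ (b ^ 2 • q) := by
  induction a using MvPolynomial.induction_on with
  | C c =>
    refine ⟨|c|, abs_nonneg _, fun Λ hΛ q hq b => ?_⟩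
    rw [mul_smul, real_smul_eq, map_smul, smul_eq_mul, abs_mul, abs_of_nonneg (hΛ.pos q hq b)]
  | add p q hp hq =>
    obtain ⟨K1, h1, H1⟩ := hp
    obtain ⟨K2, h2, H2⟩ := hq
    refine ⟨K1 + K2, by positivity, fun Λ hΛ q hq b => ?_⟩
    rw [add_mul, add_smul, map_add, add_mul]
    exact (abs_add_le _ _).trans (add_le_add (H1 Λ hΛ q hq b) (H2 Λ hΛ q hq b))
  | mul_X p j hp =>
    obtain ⟨K, h, H⟩ := hp
    refine ⟨K, h, fun Λ hΛ q hq b => ?_⟩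
    have e1 := H Λ hΛ q hq (b * (MvPolynomial.X j + 1))
    have e2 := H Λ hΛ q hq (b * (MvPolynomial.X j - 1))
    have e3 := goodF_le hΛ hq b j
    have e4 : (4 : ℝ) * Λ ((p * MvPolynomial.X j * b ^ 2) • q) =
        Λ ((p * (b * (MvPolynomial.X j + 1)) ^ 2) • q)
        - Λ ((p * (b * (MvPolynomial.X j - 1)) ^ 2) • q) := by
      rw [← map_sub, ← sub_smul, ← smul_eq_mul, ← map_smul, ← real_smul_eq (d := d), smul_smul]
      congr 2
      rw [show (MvPolynomial.C (4 : ℝ) : RR) = 4 from map_ofNat _ _]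
      ring
    have e5 : Λ (((b * (MvPolynomial.X j + 1)) ^ 2 : RR) • q)
        + Λ (((b * (MvPolynomial.X j - 1)) ^ 2 : RR) • q)
        = 2 * Λ (((MvPolynomial.X j) ^ 2 * b ^ 2 : RR) • q) + 2 * Λ (b ^ 2 • q) := by
      rw [← mul_add, ← map_add, ← map_add, ← add_smul, ← add_smul, ← smul_eq_mul (α := ℝ), ← map_smul,
        ← real_smul_eq (d := d), smul_smul]
      congr 2
      rw [show (MvPolynomial.C (2 : ℝ) : RR) = 2 from map_ofNat _ _]
      ring
    have e6 : |4 * Λ ((p * MvPolynomial.X j * b ^ 2) • q)| ≤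
        K * Λ (((b * (MvPolynomial.X j + 1)) ^ 2 : RR) • q)
        + K * Λ (((b * (MvPolynomial.X j - 1)) ^ 2 : RR) • q) := by
      rw [e4]
      exact (abs_sub _ _).trans (add_le_add e1 e2)
    rw [← mul_add, e5, abs_mul, abs_of_pos (by norm_num : (0 : ℝ) < 4)] at e6
    have := mul_le_mul_of_nonneg_left e3 h
    linarith

theorem goodF_bound_all (Q : Set M) (u : M) (hspan : Submodule.span RR Q = ⊤)
    (hu : ∀ q ∈ Q, ∃ K : ℝ, 0 ≤ K ∧ ∀ Λ : M →ₗ[ℝ] ℝ, GoodF (d := d) Q Λ → Λ q ≤ K * Λ u)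
    (y : M) : ∃ K : ℝ, 0 ≤ K ∧ ∀ Λ : M →ₗ[ℝ] ℝ, GoodF (d := d) Q Λ → |Λ y| ≤ K * Λ u := by
  have hy : y ∈ Submodule.span RR Q := by rw [hspan]; trivial
  suffices H : ∀ a : RR, ∃ K : ℝ, 0 ≤ K ∧
      ∀ Λ : M →ₗ[ℝ] ℝ, GoodF (d := d) Q Λ → |Λ (a • y)| ≤ K * Λ u by
    simpa using H 1
  induction hy using Submodule.span_induction with
  | mem q hq =>
    intro a
    obtain ⟨K, hK, H⟩ := hu q hq
    obtain ⟨K', hK', H'⟩ := goodF_bound Q a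
    refine ⟨K' * K, by positivity, fun Λ hΛ => ?_⟩
    have h1 := H' Λ hΛ q hq 1
    simp only [one_pow, mul_one, one_smul] at h1
    rw [mul_assoc]
    exact h1.trans (mul_le_mul_of_nonneg_left (H Λ hΛ) hK')
  | zero => intro a; exact ⟨0, le_rfl, fun Λ _ => by simp⟩
  | add x y _ _ hx hy =>
    intro a
    obtain ⟨K, hK, H⟩ := hx a
    obtain ⟨K', hK', H'⟩ := hy a
    refine ⟨K + K', by positivity, fun Λ hΛ => ?_⟩
    rw [smul_add, map_add, add_mul]
    exact (abs_add_le _ _).trans (add_le_add (H Λ hΛ) (H' Λ hΛ))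
  | smul b x _ hx =>
    intro a
    rw [smul_smul]
    exact hx (a * b)

/-- multiplication by a polynomial, composed with a functional -/
noncomputable def mulF (a : RR) (Λ : M →ₗ[ℝ] ℝ) : M →ₗ[ℝ] ℝ where
  toFun y := Λ (a • y)
  map_add' x y := by rw [smul_add, map_add]
  map_smul' c x := by rw [smul_algebra_smul_comm, map_smul]; rfl

theorem goodF_half {Q : Set M} {Λ : M →ₗ[ℝ] ℝ} (h : GoodF (d := d) Q Λ) (j : Fin d) (s : RR)
    (hs : s ^ 2 = 1) : GoodF (d := d) Q (mulF (1 + s * MvPolynomial.X j) Λ) := by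
  constructor
  · intro q hq a
    have e1 := h.pos q hq (a * (1 + s * MvPolynomial.X j))
    have e2 := goodF_le h hq a j
    have e3 : (2 : ℝ) * Λ ((1 + s * MvPolynomial.X j : RR) • a ^ 2 • q) =
      Λ ((a * (1 + s * MvPolynomial.X j)) ^ 2 • q) + (Λ (a ^ 2 • q) -
        Λ (((MvPolynomial.X j) ^ 2 * a ^ 2 : RR) • q)) := by
      rw [← map_sub, ← map_add, ← sub_smul, ← add_smul, ← smul_eq_mul, ← map_smul,
        ← real_smul_eq (d := d), smul_smul, smul_smul]
      congr 2
      rw [show (MvPolynomial.C (2 : ℝ) : RR) = 2 from map_ofNat _ _]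
      linear_combination (-a ^ 2 * MvPolynomial.X j ^ 2) * hs
    change 0 ≤ Λ _
    linarith
  · intro y
    change Λ _ = Λ _
    rw [smul_comm, h.sph]

theorem goodF_smul {Q : Set M} {Λ : M →ₗ[ℝ] ℝ} (h : GoodF (d := d) Q Λ) (c : ℝ) (hc : 0 ≤ c) :
    GoodF (d := d) Q (c • Λ) :=
  ⟨fun q hq a => mul_nonneg hc (h.pos q hq a), fun y => by
    simp only [LinearMap.smul_apply, h.sph]⟩

theorem goodF_main (Q : Set M) (u : M) (hspan : Submodule.span RR Q = ⊤)
    (hu : ∀ q ∈ Q, ∃ K : ℝ, 0 ≤ K ∧ ∀ Λ : M →ₗ[ℝ] ℝ, GoodF (d := d) Q Λ → Λ q ≤ K * Λ u)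
    (hu0 : ∀ Λ : M →ₗ[ℝ] ℝ, GoodF (d := d) Q Λ → 0 ≤ Λ u) (f : M)
    (hf : ∀ Λ : M →ₗ[ℝ] ℝ, GoodF (d := d) Q Λ → ∀ s : Fin d → ℝ, ∑ j, s j ^ 2 = 1 →
      (∀ j y, Λ ((MvPolynomial.X j : RR) • y) = s j * Λ y) → 0 ≤ Λ f)
    (Λ : M →ₗ[ℝ] ℝ) (hΛ : GoodF (d := d) Q Λ) : 0 ≤ Λ f := by
  by_contra hneg
  push Not at hneg
  have hb := goodF_bound_all Q u hspan hu
  choose B hB0 hB using hb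
  have hupos : ∀ Λ : M →ₗ[ℝ] ℝ, GoodF (d := d) Q Λ → Λ u = 0 → Λ = 0 := by
    intro Λ hΛ h0
    ext y
    have := hB y Λ hΛ
    rw [h0, mul_zero] at this
    simpa using abs_nonpos_iff.mp this
  set K : Set (M → ℝ) := {φ | ∃ Λ : M →ₗ[ℝ] ℝ, GoodF (d := d) Q Λ ∧ Λ u = 1 ∧ ⇑Λ = φ} with hKdef
  have hKne : ((Λ u)⁻¹ • ⇑Λ) ∈ K := by
    have hne : Λ u ≠ 0 := by
      intro h0
      rw [hupos Λ hΛ h0] at hneg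
      simp at hneg
    exact ⟨(Λ u)⁻¹ • Λ, goodF_smul hΛ _ (inv_nonneg.mpr (hu0 Λ hΛ)),
      by simp [hne], rfl⟩
  have hKneg : ((Λ u)⁻¹ • ⇑Λ) f < 0 := by
    have hne : 0 < Λ u := by
      apply lt_of_le_of_ne (hu0 Λ hΛ)
      intro h0
      rw [hupos Λ hΛ h0.symm] at hneg
      simp at hneg
    simp only [Pi.smul_apply, smul_eq_mul]
    exact mul_neg_of_pos_of_neg (inv_pos.mpr hne) hneg
  have hKeq : K = Set.range (fun Λ : M →ₗ[ℝ] ℝ => (⇑Λ : M → ℝ)) ∩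
      ({φ | ∀ q ∈ Q, ∀ a : RR, 0 ≤ φ (a ^ 2 • q)} ∩
      ({φ | ∀ y : M, φ ((∑ j : Fin d, (MvPolynomial.X j : RR) ^ 2) • y) = φ y} ∩
      {φ | φ u = 1})) := by
    ext φ
    constructor
    · rintro ⟨Λ, h, h1, rfl⟩
      exact ⟨⟨Λ, rfl⟩, h.pos, h.sph, h1⟩
    · rintro ⟨⟨Λ, rfl⟩, h1, h2, h3⟩
      exact ⟨Λ, ⟨h1, h2⟩, h3, rfl⟩
  have hKclosed : IsClosed K := by
    rw [hKeq]
    refine (LinearMap.isClosed_range_coe M ℝ (RingHom.id ℝ)).inter (IsClosed.inter ?_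
      (IsClosed.inter ?_ ?_))
    · simp only [Set.ofPred_forall]
      exact isClosed_iInter fun q => isClosed_iInter fun _ => isClosed_iInter fun a =>
        isClosed_le continuous_const (continuous_apply _)
    · simp only [Set.ofPred_forall]
      exact isClosed_iInter fun y => isClosed_eq (continuous_apply _) (continuous_apply _)
    · exact isClosed_eq (continuous_apply _) continuous_const
  have hKcomp : IsCompact K := by
    refine IsCompact.of_isClosed_subset (isCompact_univ_pi
      (fun y : M => isCompact_Icc (a := -B y) (b := B y))) hKclosed ?_
    rintro φ ⟨Λ, h, h1, rfl⟩ y -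
    have := hB y Λ h
    rw [h1, mul_one] at this
    exact abs_le.mp this
  obtain ⟨φ₀, hφ₀, hmin⟩ := hKcomp.exists_isMinOn ⟨_, hKne⟩
    (continuous_apply (A := fun _ : M => ℝ) f).continuousOn
  let l : StrongDual ℝ (M → ℝ) := -(ContinuousLinearMap.proj f)
  have hexp := ContinuousLinearMap.toExposed.isExposed (l := l) (A := K)
  have hne : (l.toExposed K).Nonempty := by
    refine ⟨φ₀, hφ₀, fun φ hφ => ?_⟩
    have : φ₀ f ≤ φ f := hmin hφ
    simpa [l] using this
  obtain ⟨φ, hφ⟩ := (hexp.isCompact hKcomp).extremePoints_nonempty hne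
  have hφK := hexp.isExtreme.extremePoints_subset_extremePoints hφ
  have hφneg : φ f < 0 := by
    have := hφ.1.2 _ hKne
    simp only [l, _root_.neg_apply, ContinuousLinearMap.proj_apply] at this
    linarith
  clear_value l
  clear hφ hne hexp l hmin hφ₀ φ₀ hKneg hKne hneg hΛ Λ
  obtain ⟨⟨Λ, hΛ, hΛ1, rfl⟩, hext⟩ := hφK
  -- eigenvalue property
  have heig : ∀ j : Fin d, ∃ s : ℝ, ∀ y, Λ ((MvPolynomial.X j : RR) • y) = s * Λ y := by
    intro j
    have g1 := goodF_half hΛ j 1 (by simp)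
    have g2 := goodF_half hΛ j (-1) (by simp)
    have v1 : ∀ y, mulF (1 + 1 * MvPolynomial.X j) Λ y = Λ y + Λ ((MvPolynomial.X j : RR) • y) := by
      intro y
      change Λ _ = _
      rw [one_mul, add_smul, one_smul, map_add]
    have v2 : ∀ y, mulF (1 + (-1) * MvPolynomial.X j) Λ y
        = Λ y - Λ ((MvPolynomial.X j : RR) • y) := by
      intro y
      change Λ _ = _
      rw [neg_one_mul, add_smul, one_smul, map_add, neg_smul, map_neg, sub_eq_add_neg]
    generalize mulF (1 + 1 * MvPolynomial.X j) Λ = Λ1 at g1 v1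
    generalize mulF (1 + (-1) * MvPolynomial.X j) Λ = Λ2 at g2 v2
    rcases (hu0 Λ1 g1).eq_or_lt with c1 | c1
    · refine ⟨-1, fun y => ?_⟩
      have := hupos Λ1 g1 c1.symm
      have h2 := v1 y
      rw [this] at h2
      simp only [LinearMap.zero_apply] at h2
      linarith
    rcases (hu0 Λ2 g2).eq_or_lt with c2 | c2
    · refine ⟨1, fun y => ?_⟩
      have := hupos Λ2 g2 c2.symm
      have h2 := v2 y
      rw [this] at h2
      simp only [LinearMap.zero_apply] at h2
      linarith
    have hx := hext (x₁ := ⇑((Λ1 u)⁻¹ • Λ1)) ⟨_, goodF_smul g1 _ (inv_nonneg.mpr c1.le),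
      by simp [c1.ne'], rfl⟩ (x₂ := ⇑((Λ2 u)⁻¹ • Λ2)) ⟨_, goodF_smul g2 _ (inv_nonneg.mpr c2.le),
      by simp [c2.ne'], rfl⟩ ⟨Λ1 u / 2, Λ2 u / 2, by positivity, by positivity, by
        rw [v1, v2, hΛ1]; ring, by
        ext y
        simp only [Pi.add_apply, Pi.smul_apply, LinearMap.smul_apply, smul_eq_mul]
        field_simp
        rw [v1, v2]; ring⟩
    refine ⟨Λ1 u - 1, fun y => ?_⟩
    have hy := congrFun hx y
    simp only [LinearMap.smul_apply, smul_eq_mul] at hy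
    have := v1 y
    field_simp at hy
    linarith
  choose s hs using heig
  refine absurd (hf Λ hΛ s ?_ hs) (not_le.mpr hφneg)
  have h1 := hΛ.sph u
  rw [Finset.sum_smul, map_sum, hΛ1] at h1
  rw [← h1]
  refine Finset.sum_congr rfl fun j _ => ?_
  rw [sq, sq, mul_smul, hs, hs, hΛ1, mul_one]

end

open Polynomial in
/-- embedding of real polynomials as coefficient vectors -/
noncomputable def iotaP (d N : ℕ) : ℝ[X] →ₗ[ℝ] (Fin N → MvPolynomial (Fin d) ℝ) where
  toFun p n := MvPolynomial.C (p.coeff n)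
  map_add' p q := by ext1 n; simp
  map_smul' c p := by ext1 n; simp [MvPolynomial.smul_eq_C_mul]

open Polynomial in
/-- coefficient vectors to polynomials -/
noncomputable def betaP (d N : ℕ) :
    (Fin N → MvPolynomial (Fin d) ℝ) →ₗ[MvPolynomial (Fin d) ℝ] (MvPolynomial (Fin d) ℝ)[X] where
  toFun y := ∑ n : Fin N, C (y n) * X ^ (n : ℕ)
  map_add' x y := by simp [add_mul, Finset.sum_add_distrib]
  map_smul' c x := by simp [Finset.mul_sum, mul_assoc, smul_eq_C_mul]

open Polynomial in
theorem betaP_coeff {d N : ℕ} (f : (MvPolynomial (Fin d) ℝ)[X]) (hf : f.natDegree < N) :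
    betaP d N (fun n => f.coeff n) = f := by
  conv_rhs => rw [f.as_sum_range_C_mul_X_pow' hf]
  exact Fin.sum_univ_eq_sum_range (fun n => C (f.coeff n) * X ^ n) N

open Polynomial in
theorem betaP_iotaP {d N : ℕ} (p : ℝ[X]) (hp : p.natDegree < N) :
    betaP d N (iotaP d N p) = p.map MvPolynomial.C := by
  rw [← betaP_coeff (d := d) (N := N) (p.map MvPolynomial.C)
    (lt_of_le_of_lt natDegree_map_le hp)]
  congr 1
  ext1 n
  simp [iotaP]

open Polynomial in
theorem iota_bound (d m : ℕ) (Q : Set (Fin (2 * m + 1) → MvPolynomial (Fin d) ℝ))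
    (hQ : Q = {q | ∃ p : ℝ[X], p.natDegree ≤ m ∧ q = iotaP d (2 * m + 1) (p ^ 2)})
    (p : ℝ[X]) (hp : p.natDegree ≤ m) : ∃ K : ℝ, 0 ≤ K ∧
    ∀ Λ : (Fin (2 * m + 1) → MvPolynomial (Fin d) ℝ) →ₗ[ℝ] ℝ, GoodF (d := d) Q Λ →
      Λ (iotaP d (2 * m + 1) (p ^ 2)) ≤
      K * Λ (∑ k ∈ Finset.range (m + 1), iotaP d (2 * m + 1) ((X ^ k) ^ 2)) := by
  have hpos : ∀ Λ : (Fin (2 * m + 1) → MvPolynomial (Fin d) ℝ) →ₗ[ℝ] ℝ, GoodF (d := d) Q Λ →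
      ∀ p : ℝ[X], p.natDegree ≤ m → 0 ≤ Λ (iotaP d (2 * m + 1) (p ^ 2)) := by
    intro Λ hΛ p hp
    have := hΛ.pos (iotaP d (2 * m + 1) (p ^ 2)) (by rw [hQ]; exact ⟨p, hp, rfl⟩) 1
    simpa using this
  have key : ∀ s : Finset ℕ, s ⊆ Finset.range (m + 1) →
      (∑ k ∈ s, C (p.coeff k) * X ^ k).natDegree ≤ m ∧ ∃ K : ℝ, 0 ≤ K ∧
      ∀ Λ : (Fin (2 * m + 1) → MvPolynomial (Fin d) ℝ) →ₗ[ℝ] ℝ, GoodF (d := d) Q Λ →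
      Λ (iotaP d (2 * m + 1) ((∑ k ∈ s, C (p.coeff k) * X ^ k) ^ 2)) ≤
      K * Λ (∑ k ∈ Finset.range (m + 1), iotaP d (2 * m + 1) ((X ^ k) ^ 2)) := by
    intro s
    induction s using Finset.induction_on with
    | empty => intro _; exact ⟨by simp, 0, le_rfl, fun Λ _ => by simp⟩
    | insert k s hk ih =>
      intro hs
      obtain ⟨h1, K, hK, H⟩ := ih ((Finset.subset_insert _ _).trans hs)
      have hkm : k ≤ m := by
        have := hs (Finset.mem_insert_self _ _)
        simpa [Nat.lt_succ_iff] using this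
      rw [Finset.sum_insert hk]
      set S := ∑ k ∈ s, C (p.coeff k) * X ^ k with hS
      have hd : (C (p.coeff k) * X ^ k).natDegree ≤ m :=
        (natDegree_C_mul_X_pow_le _ _).trans hkm
      refine ⟨natDegree_add_le_of_degree_le hd h1, 2 * (p.coeff k) ^ 2 + 2 * K, by positivity,
        fun Λ hΛ => ?_⟩
      have e1 := H Λ hΛ
      have e2 := hpos Λ hΛ (C (p.coeff k) * X ^ k - S)
        ((natDegree_sub_le_of_le hd h1).trans (max_self _).le)
      have e3 : Λ (iotaP d (2 * m + 1) ((C (p.coeff k) * X ^ k + S) ^ 2))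
          + Λ (iotaP d (2 * m + 1) ((C (p.coeff k) * X ^ k - S) ^ 2))
          = 2 * (p.coeff k ^ 2 * Λ (iotaP d (2 * m + 1) ((X ^ k) ^ 2)))
            + 2 * Λ (iotaP d (2 * m + 1) (S ^ 2)) := by
        simp only [← smul_eq_mul (α := ℝ), ← map_smul, ← map_add]
        congr 2
        simp only [smul_eq_C_mul, C_pow, smul_eq_mul]
        rw [show (C (2 : ℝ) : ℝ[X]) = 2 from map_ofNat _ _]
        ring
      have e4 : Λ (iotaP d (2 * m + 1) ((X ^ k) ^ 2)) ≤
          Λ (∑ k ∈ Finset.range (m + 1), iotaP d (2 * m + 1) ((X ^ k) ^ 2)) := by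
        rw [map_sum]
        refine Finset.single_le_sum (f := fun k => Λ (iotaP d (2 * m + 1) ((X ^ k) ^ 2)))
          (fun i hi => hpos Λ hΛ _ ?_) (Finset.mem_range.mpr (by omega))
        rw [natDegree_X_pow]
        have := Finset.mem_range.mp hi
        omega
      have e5 := mul_le_mul_of_nonneg_left e4 (sq_nonneg (p.coeff k))
      linarith
  have := (key _ subset_rfl).2
  rwa [← p.as_sum_range_C_mul_X_pow' (by omega)] at this

open Polynomial in
theorem iota_pow_mem (d m n : ℕ) (hn : n ≤ 2 * m) (Q : Set (Fin (2 * m + 1) → MvPolynomial (Fin d) ℝ))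
    (hQ : Q = {q | ∃ p : ℝ[X], p.natDegree ≤ m ∧ q = iotaP d (2 * m + 1) (p ^ 2)}) :
    iotaP d (2 * m + 1) (X ^ n) ∈ Submodule.span (MvPolynomial (Fin d) ℝ) Q := by
  have hmem : ∀ p : ℝ[X], p.natDegree ≤ m →
      iotaP d (2 * m + 1) (p ^ 2) ∈ Submodule.span (MvPolynomial (Fin d) ℝ) Q := by
    intro p hp
    apply Submodule.subset_span
    rw [hQ]; exact ⟨p, hp, rfl⟩
  rcases Nat.even_or_odd' n with ⟨k, rfl | rfl⟩
  · rw [mul_comm 2 k, pow_mul]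
    exact hmem _ (by rw [natDegree_X_pow]; omega)
  · have e : (X ^ (2 * k + 1) : ℝ[X]) = (1 / 2 : ℝ) • ((X ^ k + X ^ (k + 1)) ^ 2
        - (X ^ k) ^ 2 - (X ^ (k + 1)) ^ 2) := by
      rw [show (X ^ k + X ^ (k + 1) : ℝ[X]) ^ 2 - (X ^ k) ^ 2 - (X ^ (k + 1)) ^ 2
        = (2 : ℝ) • X ^ (2 * k + 1) by
          rw [smul_eq_C_mul, show (C (2 : ℝ) : ℝ[X]) = 2 from map_ofNat _ _]; ring]
      rw [smul_smul]; norm_num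
    rw [e, map_smul, map_sub, map_sub, ← real_smul_eq (d := d)]
    refine Submodule.smul_mem _ _ (Submodule.sub_mem _ (Submodule.sub_mem _ ?_ ?_) ?_)
    · apply hmem
      refine natDegree_add_le_of_degree_le ?_ ?_ <;> rw [natDegree_X_pow] <;> omega
    · apply hmem; rw [natDegree_X_pow]; omega
    · apply hmem; rw [natDegree_X_pow]; omega

open Polynomial in
theorem cyl_pos {d : ℕ} (Λ : (MvPolynomial (Fin d) ℝ)[X] →ₗ[ℝ] ℝ) (hpos : ∀ g, 0 ≤ Λ (g ^ 2))
    (hsph : ∀ g, Λ (C (∑ j : Fin d, (MvPolynomial.X j : MvPolynomial (Fin d) ℝ) ^ 2) * g) = Λ g)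
    (f : (MvPolynomial (Fin d) ℝ)[X])
    (hf : ∀ (r : ℝ) (t : Fin d → ℝ), ∑ j, t j ^ 2 = 1 → 0 ≤ f.eval₂ (MvPolynomial.eval t) r) :
    0 ≤ Λ f := by
  set m := f.natDegree with hm
  set Q : Set (Fin (2 * m + 1) → MvPolynomial (Fin d) ℝ) :=
    {q | ∃ p : ℝ[X], p.natDegree ≤ m ∧ q = iotaP d (2 * m + 1) (p ^ 2)} with hQ
  have hdec : ∀ y : Fin (2 * m + 1) → MvPolynomial (Fin d) ℝ,
      y = ∑ n : Fin (2 * m + 1), y n • iotaP d (2 * m + 1) (X ^ (n : ℕ)) := by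
    intro y
    ext1 i
    rw [Finset.sum_apply, Finset.sum_eq_single i]
    · simp [iotaP]
    · intro j _ hj
      have : (i : ℕ) ≠ j := fun h => hj (Fin.ext h.symm)
      simp [iotaP, coeff_X_pow, this]
    · simp
  let Λ0 : (Fin (2 * m + 1) → MvPolynomial (Fin d) ℝ) →ₗ[ℝ] ℝ :=
    Λ.comp ((betaP d (2 * m + 1)).restrictScalars ℝ)
  have hΛ0 : GoodF (d := d) Q Λ0 := by
    constructor
    · rintro q ⟨p, hp, rfl⟩ a
      change 0 ≤ Λ (betaP d (2 * m + 1) _)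
      rw [map_smul, betaP_iotaP _ (by
        refine lt_of_le_of_lt natDegree_pow_le ?_
        omega), Polynomial.map_pow, smul_eq_C_mul, C_pow, ← mul_pow]
      exact hpos _
    · intro y
      change Λ (betaP d (2 * m + 1) _) = Λ (betaP d (2 * m + 1) _)
      rw [map_smul, smul_eq_C_mul, hsph]
  have hmain := goodF_main (d := d) Q
    (∑ k ∈ Finset.range (m + 1), iotaP d (2 * m + 1) ((X ^ k) ^ 2)) ?_ ?_ ?_
    (fun n => f.coeff n) ?_ Λ0 hΛ0
  · change 0 ≤ Λ (betaP d (2 * m + 1) _) at hmain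
    rwa [betaP_coeff f (by omega)] at hmain
  · rw [eq_top_iff]
    rintro y -
    rw [hdec y]
    exact Submodule.sum_mem _ fun n _ => Submodule.smul_mem _ _
      (iota_pow_mem d m n (by omega) Q hQ)
  · rintro q ⟨p, hp, rfl⟩
    exact iota_bound d m Q hQ p hp
  · intro Λ' hΛ'
    rw [map_sum]
    refine Finset.sum_nonneg fun k hk => ?_
    have := hΛ'.pos (iotaP d (2 * m + 1) ((X ^ k) ^ 2)) ⟨X ^ k, by
      rw [natDegree_X_pow]
      have := Finset.mem_range.mp hk
      omega, rfl⟩ 1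
    simpa using this
  · intro Λ' hΛ' s hs heig
    have hev : ∀ (a : MvPolynomial (Fin d) ℝ) y, Λ' (a • y) = MvPolynomial.eval s a * Λ' y := by
      intro a
      induction a using MvPolynomial.induction_on with
      | C c => intro y; rw [real_smul_eq, map_smul]; simp
      | add p q hp hq => intro y; rw [add_smul, map_add, hp, hq, map_add, add_mul]
      | mul_X p j hp => intro y; rw [mul_smul, hp, heig]; simp [mul_assoc]
    have hh : Λ' (fun n => f.coeff n) =
        Λ' (iotaP d (2 * m + 1) (f.map (MvPolynomial.eval s))) := by
      rw [hdec (fun n => f.coeff n), hdec (iotaP d (2 * m + 1) (f.map (MvPolynomial.eval s)))]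
      rw [map_sum, map_sum]
      refine Finset.sum_congr rfl fun n _ => ?_
      rw [hev, hev]
      simp [iotaP]
    obtain ⟨p, q, hp, hq, e⟩ := sos_aux m (f.map (MvPolynomial.eval s))
      (natDegree_map_le.trans (by omega)) (fun x => by
        rw [eval_map]; exact hf x s hs)
    rw [hh, e, map_add, map_add]
    have h1 := hΛ'.pos (iotaP d (2 * m + 1) (p ^ 2)) ⟨p, hp, rfl⟩ 1
    have h2 := hΛ'.pos (iotaP d (2 * m + 1) (q ^ 2)) ⟨q, hq, rfl⟩ 1
    rw [one_pow, one_smul] at h1 h2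
    exact add_nonneg h1 h2

open MeasureTheory Filter Topology in
theorem haviland {Y P : Type*} [TopologicalSpace Y] [T2Space Y] [LocallyCompactSpace Y]
    [MeasurableSpace Y] [BorelSpace Y] [CommRing P] [Algebra ℝ P]
    (ev : P →ₐ[ℝ] (Y → ℝ)) (hcont : ∀ g, Continuous (ev g))
    (w : P) (hw : ∀ y, 0 ≤ ev w y) (hwc : ∀ n : ℝ, IsCompact {y | ev w y ≤ n})
    (Λ : P →ₗ[ℝ] ℝ) (hΛ : ∀ g, (∀ y, 0 ≤ ev g y) → 0 ≤ Λ g) :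
    ∃ μ : Measure Y, ∀ g, Integrable (ev g) μ ∧ ∫ y, ev g y ∂μ = Λ g := by
  let E : Submodule ℝ (Y → ℝ) :=
    { carrier := {g | ∃ p : P, ∀ y, |g y| ≤ ev p y}
      zero_mem' := ⟨0, fun y => by simp⟩
      add_mem' := by
        rintro a b ⟨p, hp⟩ ⟨q, hq⟩
        refine ⟨p + q, fun y => ?_⟩
        rw [map_add]
        exact (abs_add_le _ _).trans (add_le_add (hp y) (hq y))
      smul_mem' := by
        rintro c a ⟨p, hp⟩
        refine ⟨|c| • p, fun y => ?_⟩
        rw [map_smul]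
        simp only [Pi.smul_apply, smul_eq_mul, abs_mul]
        exact mul_le_mul_of_nonneg_left (hp y) (abs_nonneg c) }
  have hevE : ∀ g : P, ev g ∈ E := by
    intro g
    refine ⟨1 + g ^ 2, fun y => ?_⟩
    rw [map_add, map_one, map_pow]
    simp only [Pi.add_apply, Pi.one_apply, Pi.pow_apply]
    rw [abs_le]
    constructor <;> nlinarith [sq_nonneg (ev g y + 1), sq_nonneg (ev g y - 1)]
  let evE : P →ₗ[ℝ] E := LinearMap.codRestrict E ev.toLinearMap hevE
  have hker : evE.ker ≤ Λ.ker := by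
    intro g hg
    rw [LinearMap.mem_ker] at hg ⊢
    have h0 : ∀ y, ev g y = 0 := fun y => congrFun (congrArg Subtype.val hg) y
    apply le_antisymm
    · have := hΛ (-g) (fun y => by rw [map_neg]; simp [h0 y])
      rw [map_neg] at this
      linarith
    · exact hΛ g (fun y => (h0 y).ge)
  let F : E →ₗ.[ℝ] ℝ := ⟨evE.range, (evE.ker.liftQ Λ hker).comp evE.quotKerEquivRange.symm.toLinearMap⟩
  have hF : ∀ g : P, F ⟨evE g, LinearMap.mem_range_self _ g⟩ = Λ g := by
    intro g
    change evE.ker.liftQ Λ hker (evE.quotKerEquivRange.symm ⟨evE g, _⟩) = Λ g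
    rw [LinearMap.quotKerEquivRange_symm_apply_image]
    simp
  let S : PointedCone ℝ E :=
    { carrier := {g | ∀ y, 0 ≤ g.1 y}
      zero_mem' := fun y => le_rfl
      add_mem' := fun ha hb y => add_nonneg (ha y) (hb y)
      smul_mem' := fun c g hg y => mul_nonneg c.2 (hg y) }
  obtain ⟨G, hG, hGpos⟩ := riesz_extension S F (by
      rintro ⟨_, g, rfl⟩ hx
      rw [hF]
      exact hΛ g hx) (by
      rintro ⟨b, p, hp⟩
      refine ⟨⟨evE p, LinearMap.mem_range_self _ p⟩, fun y => ?_⟩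
      have := (abs_le.mp (hp y)).1
      change 0 ≤ ev p y + b y
      linarith)
  have hGev : ∀ g : P, G (evE g) = Λ g := by
    intro g
    rw [← hF g]
    exact hG ⟨evE g, LinearMap.mem_range_self _ g⟩
  have hGmono : ∀ a b : E, (∀ y, a.1 y ≤ b.1 y) → G a ≤ G b := by
    intro a b hab
    have := hGpos (b - a) (fun y => sub_nonneg.mpr (hab y))
    rw [map_sub] at this
    linarith
  have hcE : ∀ f : CompactlySupportedContinuousMap Y ℝ, (f : Y → ℝ) ∈ E := by
    intro f
    obtain ⟨B, hB⟩ := f.hasCompactSupport.exists_bound_of_continuous f.continuous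
    refine ⟨algebraMap ℝ P B, fun y => ?_⟩
    rw [AlgHom.commutes]
    exact hB y
  let Lc : CompactlySupportedContinuousMap Y ℝ →ₗ[ℝ] ℝ :=
    { toFun := fun f => G ⟨f, hcE f⟩
      map_add' := fun f g => by rw [← map_add]; rfl
      map_smul' := fun c f => by
        simp only [RingHom.id_apply]
        rw [← map_smul]; rfl }
  let Lp : CompactlySupportedContinuousMap Y ℝ →ₚ[ℝ] ℝ :=
    PositiveLinearMap.mk₀ Lc (fun f hf => hGpos _ (fun y => hf y))
  let μ := RealRMK.rieszMeasure Lp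
  have hμ : ∀ (f : CompactlySupportedContinuousMap Y ℝ), ∫ y, f y ∂μ = G ⟨f, hcE f⟩ :=
    fun f => RealRMK.integral_rieszMeasure Lp f
  -- nonnegative case
  have hnn : ∀ g : P, (∀ y, 0 ≤ ev g y) → Integrable (ev g) μ ∧ ∫ y, ev g y ∂μ = Λ g := by
    intro g hg
    let χ : ℕ → Y → ℝ := fun n y => max 0 (1 - ev w y / (n + 1))
    have hχc : ∀ n, Continuous (χ n) := fun n =>
      continuous_const.max (continuous_const.sub ((hcont w).div_const _))
    have hχ0 : ∀ n y, 0 ≤ χ n y := fun n y => le_max_left _ _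
    have hχ1 : ∀ n y, χ n y ≤ 1 := fun n y => by
      refine max_le zero_le_one ?_
      have : 0 ≤ ev w y / (n + 1) := div_nonneg (hw y) (by positivity)
      linarith
    have hχw : ∀ n y, 1 - χ n y ≤ ev w y / (n + 1) := fun n y => by
      have : 1 - ev w y / (n + 1) ≤ χ n y := le_max_right _ _
      linarith
    have hsupp : ∀ n, HasCompactSupport (fun y => ev g y * χ n y) := by
      intro n
      refine HasCompactSupport.intro (hwc (n + 1)) (fun y hy => ?_)
      have hy' : (n : ℝ) + 1 < ev w y := by simpa using hy
      have : χ n y = 0 := by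
        refine max_eq_left ?_
        have : 1 < ev w y / (n + 1) := by
          rw [lt_div_iff₀ (by positivity)]; linarith
        linarith
      rw [this, mul_zero]
    let c : ℕ → CompactlySupportedContinuousMap Y ℝ := fun n =>
      ⟨⟨fun y => ev g y * χ n y, (hcont g).mul (hχc n)⟩, hsupp n⟩
    have hcint : ∀ n, Integrable (fun y => ev g y * χ n y) μ := fun n =>
      ((hcont g).mul (hχc n)).integrable_of_hasCompactSupport (hsupp n)
    have hcle : ∀ n, ∫ y, ev g y * χ n y ∂μ ≤ Λ g := by
      intro n
      have h1 := hμ (c n)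
      change ∫ y, ev g y * χ n y ∂μ = _ at h1
      rw [h1, ← hGev]
      exact hGmono _ _ (fun y => mul_le_of_le_one_right (hg y) (hχ1 n y))
    have hcge : ∀ n : ℕ, Λ g - Λ (g * w) * (1 / ((n : ℝ) + 1)) ≤ ∫ y, ev g y * χ n y ∂μ := by
      intro n
      have h1 := hμ (c n)
      change ∫ y, ev g y * χ n y ∂μ = _ at h1
      rw [h1, ← hGev, ← hGev, mul_comm, ← smul_eq_mul, ← map_smul, ← map_sub]
      refine hGmono _ _ (fun y => ?_)
      change ev g y - 1 / ((n : ℝ) + 1) * ev (g * w) y ≤ ev g y * χ n y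
      rw [map_mul, Pi.mul_apply]
      have := mul_le_mul_of_nonneg_left (hχw n y) (hg y)
      have e : 1 / ((n : ℝ) + 1) * (ev g y * ev w y) = ev g y * (ev w y / (n + 1)) := by ring
      rw [e]
      linarith
    have hχlim : ∀ y, Tendsto (fun n => ev g y * χ n y) atTop (𝓝 (ev g y)) := by
      intro y
      have h1 : Tendsto (fun n : ℕ => ev g y - ev g y * ev w y * (1 / ((n : ℝ) + 1))) atTop
          (𝓝 (ev g y - ev g y * ev w y * 0)) :=
        tendsto_const_nhds.sub (tendsto_one_div_add_atTop_nhds_zero_nat.const_mul _)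
      rw [mul_zero, sub_zero] at h1
      refine tendsto_of_tendsto_of_tendsto_of_le_of_le h1 tendsto_const_nhds
        (fun n => ?_) (fun n => mul_le_of_le_one_right (hg y) (hχ1 n y))
      have := mul_le_mul_of_nonneg_left (hχw n y) (hg y)
      have e : ev g y * ev w y * (1 / ((n : ℝ) + 1)) = ev g y * (ev w y / (n + 1)) := by ring
      simp only [e]
      linarith
    have hmeas : AEStronglyMeasurable (ev g) μ := (hcont g).aestronglyMeasurable
    have hintg : Integrable (ev g) μ := by
      refine ⟨hmeas, ?_⟩
      rw [hasFiniteIntegral_iff_ofReal (ae_of_all _ hg)]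
      have hf : ∫⁻ y, ENNReal.ofReal (ev g y) ∂μ ≤
          liminf (fun n => ∫⁻ y, ENNReal.ofReal (ev g y * χ n y) ∂μ) atTop := by
        have := lintegral_liminf_le (μ := μ) (u := atTop)
          (f := fun (n : ℕ) y => ENNReal.ofReal (ev g y * χ n y))
          (fun n => ((hcont g).mul (hχc n)).measurable.ennreal_ofReal)
        refine le_trans (lintegral_mono fun y => ?_) this
        rw [← ((ENNReal.continuous_ofReal.tendsto _).comp (hχlim y)).liminf_eq]
        rfl
      refine lt_of_le_of_lt hf (lt_of_le_of_lt ?_ (ENNReal.ofReal_lt_top (r := Λ g)))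
      refine liminf_le_of_le (f := atTop) (by isBoundedDefault) (fun b hb => ?_)
      obtain ⟨n, hn⟩ := hb.exists
      refine hn.trans ?_
      rw [← ofReal_integral_eq_lintegral_ofReal (hcint n)
        (ae_of_all _ fun y => mul_nonneg (hg y) (hχ0 n y))]
      exact ENNReal.ofReal_le_ofReal (hcle n)
    refine ⟨hintg, ?_⟩
    have hl1 : Tendsto (fun n => ∫ y, ev g y * χ n y ∂μ) atTop (𝓝 (∫ y, ev g y ∂μ)) := by
      refine tendsto_integral_of_dominated_convergence (ev g) (fun n => (hcint n).1) hintg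
        (fun n => ae_of_all _ fun y => ?_) (ae_of_all _ hχlim)
      rw [Real.norm_of_nonneg (mul_nonneg (hg y) (hχ0 n y))]
      exact mul_le_of_le_one_right (hg y) (hχ1 n y)
    have hl2 : Tendsto (fun n => ∫ y, ev g y * χ n y ∂μ) atTop (𝓝 (Λ g)) := by
      have h1 : Tendsto (fun n : ℕ => Λ g - Λ (g * w) * (1 / ((n : ℝ) + 1))) atTop
          (𝓝 (Λ g - Λ (g * w) * 0)) :=
        tendsto_const_nhds.sub (tendsto_one_div_add_atTop_nhds_zero_nat.const_mul _)
      rw [mul_zero, sub_zero] at h1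
      exact tendsto_of_tendsto_of_tendsto_of_le_of_le h1 tendsto_const_nhds hcge hcle
    exact tendsto_nhds_unique hl1 hl2
  refine ⟨μ, fun g => ?_⟩
  obtain ⟨i1, e1⟩ := hnn (1 + g ^ 2 + g) (fun y => by
    simp only [map_add, map_one, map_pow, Pi.add_apply, Pi.one_apply, Pi.pow_apply]
    nlinarith [sq_nonneg (ev g y + 1)])
  obtain ⟨i2, e2⟩ := hnn (1 + g ^ 2) (fun y => by
    simp only [map_add, map_one, map_pow, Pi.add_apply, Pi.one_apply, Pi.pow_apply]
    positivity)
  have he : ev g = fun y => ev (1 + g ^ 2 + g) y - ev (1 + g ^ 2) y := by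
    ext y
    rw [map_add ev (1 + g ^ 2) g]
    simp
  constructor
  · rw [he]; exact i1.sub i2
  · rw [he]
    rw [integral_sub i1 i2, e1, e2, map_add Λ (1 + g ^ 2) g]
    ring

section PolyPart

/-- the unit sphere as a subtype -/
abbrev SphT (d : ℕ) : Type := {t : Fin d → ℝ // ∑ i : Fin d, (t i) ^ 2 = 1}

instance sphT_compact (d : ℕ) : CompactSpace (SphT d) := by
  apply isCompact_iff_compactSpace.mp
  refine IsCompact.of_isClosed_subset (isCompact_univ_pi
    (fun _ : Fin d => isCompact_Icc (a := (-1 : ℝ)) (b := 1))) ?_ ?_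
  · exact isClosed_eq (by fun_prop) continuous_const
  · intro t ht i _
    have ht' : ∑ i, t i ^ 2 = 1 := ht
    have : t i ^ 2 ≤ 1 := by
      rw [← ht']
      exact Finset.single_le_sum (f := fun i => t i ^ 2) (fun _ _ => sq_nonneg _) (Finset.mem_univ i)
    exact abs_le.mp ((sq_le_one_iff_abs_le_one _).mp this)

open Polynomial in
/-- evaluation on the cylinder -/
noncomputable def evCyl (d : ℕ) : (MvPolynomial (Fin d) ℝ)[X] →ₐ[ℝ] (ℝ × SphT d → ℝ) where
  toFun g y := g.eval₂ (MvPolynomial.eval y.2.1) y.1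
  map_one' := by ext y; simp
  map_zero' := by ext y; simp
  map_add' p q := by ext y; simp [eval₂_add]
  map_mul' p q := by ext y; simp [eval₂_mul]
  commutes' c := by
    ext y
    rw [IsScalarTower.algebraMap_apply ℝ (MvPolynomial (Fin d) ℝ) _]
    simp

open Polynomial in
theorem continuous_eval2 (d : ℕ) (g : (MvPolynomial (Fin d) ℝ)[X]) :
    Continuous fun y : ℝ × (Fin d → ℝ) => g.eval₂ (MvPolynomial.eval y.2) y.1 := by
  simp only [eval₂_eq_sum_range]
  refine continuous_finsetSum _ fun i _ => Continuous.mul ?_ (by fun_prop)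
  exact (MvPolynomial.continuous_eval (g.coeff i)).comp continuous_snd

/-- norm -/
noncomputable def rhoX {d : ℕ} (x : Xsp d) : ℝ := Real.sqrt (∑ i : Fin d, (x.1 i) ^ 2)

/-- direction -/
noncomputable def thX {d : ℕ} (x : Xsp d) : Fin d → ℝ := fun i => x.1 i / rhoX x

theorem sumsq_pos {d : ℕ} (x : Xsp d) : 0 < ∑ i : Fin d, (x.1 i) ^ 2 := by
  obtain ⟨i, hi⟩ := Function.ne_iff.mp x.2
  refine Finset.sum_pos' (fun _ _ => sq_nonneg _) ⟨i, Finset.mem_univ i, ?_⟩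
  have : x.1 i ≠ 0 := hi
  positivity

theorem rhoX_pos {d : ℕ} (x : Xsp d) : 0 < rhoX x := Real.sqrt_pos.mpr (sumsq_pos x)

theorem rhoX_sq {d : ℕ} (x : Xsp d) : rhoX x ^ 2 = ∑ i : Fin d, (x.1 i) ^ 2 :=
  Real.sq_sqrt (sumsq_pos x).le

theorem thX_sum {d : ℕ} (x : Xsp d) : ∑ i, thX x i ^ 2 = 1 := by
  simp only [thX, div_pow]
  rw [← Finset.sum_div, ← rhoX_sq, div_self]
  exact pow_ne_zero _ (rhoX_pos x).ne'

theorem rho_mul_th {d : ℕ} (x : Xsp d) (j : Fin d) : rhoX x * thX x j = x.1 j := by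
  rw [thX, mul_div_cancel₀ _ (rhoX_pos x).ne']

theorem th_mul_th {d : ℕ} (x : Xsp d) (j k : Fin d) : thX x j * thX x k = fklFn j k x := by
  rw [thX, thX, fklFn, ← rhoX_sq, div_mul_div_comm, sq]

open Polynomial

/-- positive evaluation -/
noncomputable def evP {d : ℕ} (x : Xsp d) (g : (MvPolynomial (Fin d) ℝ)[X]) : ℝ :=
  g.eval₂ (MvPolynomial.eval (thX x)) (rhoX x)

/-- negative evaluation -/
noncomputable def evN {d : ℕ} (x : Xsp d) (g : (MvPolynomial (Fin d) ℝ)[X]) : ℝ :=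
  g.eval₂ (MvPolynomial.eval (-thX x)) (-rhoX x)

theorem even_mem {d : ℕ} (g : (MvPolynomial (Fin d) ℝ)[X]) :
    (fun x => (evP x g + evN x g) / 2) ∈ Aalg d ∧
    (∀ j, (fun x => thX x j * ((evP x g - evN x g) / 2)) ∈ Aalg d) ∧
    (fun x => rhoX x * ((evP x g - evN x g) / 2)) ∈ Aalg d := by
  have hadd : ∀ p q : (MvPolynomial (Fin d) ℝ)[X], ∀ {a b : Xsp d → ℝ},
    a ∈ Aalg d → b ∈ Aalg d → a + b ∈ Aalg d := fun _ _ _ _ ha hb => (Aalg d).add_mem ha hb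
  have step_add : ∀ p q : (MvPolynomial (Fin d) ℝ)[X],
    ((fun x => (evP x p + evN x p) / 2) ∈ Aalg d ∧
    (∀ j, (fun x => thX x j * ((evP x p - evN x p) / 2)) ∈ Aalg d) ∧
    (fun x => rhoX x * ((evP x p - evN x p) / 2)) ∈ Aalg d) →
    ((fun x => (evP x q + evN x q) / 2) ∈ Aalg d ∧
    (∀ j, (fun x => thX x j * ((evP x q - evN x q) / 2)) ∈ Aalg d) ∧
    (fun x => rhoX x * ((evP x q - evN x q) / 2)) ∈ Aalg d) →
    ((fun x => (evP x (p + q) + evN x (p + q)) / 2) ∈ Aalg d ∧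
    (∀ j, (fun x => thX x j * ((evP x (p + q) - evN x (p + q)) / 2)) ∈ Aalg d) ∧
    (fun x => rhoX x * ((evP x (p + q) - evN x (p + q)) / 2)) ∈ Aalg d) := by
    rintro p q ⟨a1, a2, a3⟩ ⟨b1, b2, b3⟩
    refine ⟨?_, fun j => ?_, ?_⟩
    · convert (Aalg d).add_mem a1 b1 using 1
      ext x; simp only [evP, evN, eval₂_add, Pi.add_apply]; ring
    · convert (Aalg d).add_mem (a2 j) (b2 j) using 1
      ext x; simp only [evP, evN, eval₂_add, Pi.add_apply]; ring
    · convert (Aalg d).add_mem a3 b3 using 1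
      ext x; simp only [evP, evN, eval₂_add, Pi.add_apply]; ring
  have step_X : ∀ p : (MvPolynomial (Fin d) ℝ)[X],
    ((fun x => (evP x p + evN x p) / 2) ∈ Aalg d ∧
    (∀ j, (fun x => thX x j * ((evP x p - evN x p) / 2)) ∈ Aalg d) ∧
    (fun x => rhoX x * ((evP x p - evN x p) / 2)) ∈ Aalg d) →
    ((fun x => (evP x (p * X) + evN x (p * X)) / 2) ∈ Aalg d ∧
    (∀ j, (fun x => thX x j * ((evP x (p * X) - evN x (p * X)) / 2)) ∈ Aalg d) ∧
    (fun x => rhoX x * ((evP x (p * X) - evN x (p * X)) / 2)) ∈ Aalg d) := by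
    rintro p ⟨a1, a2, a3⟩
    refine ⟨?_, fun j => ?_, ?_⟩
    · convert a3 using 1
      ext x; simp only [evP, evN, eval₂_mul, eval₂_X]; ring
    · convert (Aalg d).mul_mem (coordA j).2 a1 using 1
      ext x
      simp only [evP, evN, eval₂_mul, eval₂_X, Pi.mul_apply, coordA, coordFn, ← rho_mul_th x j]
      ring
    · have hs : (∑ j : Fin d, (coordFn j : Xsp d → ℝ) ^ 2) ∈ Aalg d :=
        (Aalg d).sum_mem fun j _ => (Aalg d).pow_mem (coordA j).2 2
      convert (Aalg d).mul_mem hs a1 using 1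
      ext x
      simp only [evP, evN, eval₂_mul, eval₂_X, Pi.mul_apply, Finset.sum_apply, Pi.pow_apply,
        coordFn, ← rhoX_sq x]
      ring
  have step_T : ∀ (p : (MvPolynomial (Fin d) ℝ)[X]) (k : Fin d),
    ((fun x => (evP x p + evN x p) / 2) ∈ Aalg d ∧
    (∀ j, (fun x => thX x j * ((evP x p - evN x p) / 2)) ∈ Aalg d) ∧
    (fun x => rhoX x * ((evP x p - evN x p) / 2)) ∈ Aalg d) →
    ((fun x => (evP x (p * C (MvPolynomial.X k)) + evN x (p * C (MvPolynomial.X k))) / 2) ∈ Aalg d ∧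
    (∀ j, (fun x => thX x j * ((evP x (p * C (MvPolynomial.X k))
      - evN x (p * C (MvPolynomial.X k))) / 2)) ∈ Aalg d) ∧
    (fun x => rhoX x * ((evP x (p * C (MvPolynomial.X k))
      - evN x (p * C (MvPolynomial.X k))) / 2)) ∈ Aalg d) := by
    rintro p k ⟨a1, a2, a3⟩
    refine ⟨?_, fun j => ?_, ?_⟩
    · convert a2 k using 1
      ext x; simp only [evP, evN, eval₂_mul, eval₂_C, MvPolynomial.eval_X, Pi.neg_apply]; ring
    · convert (Aalg d).mul_mem (fklA j k).2 a1 using 1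
      ext x
      simp only [evP, evN, eval₂_mul, eval₂_C, MvPolynomial.eval_X, Pi.neg_apply, Pi.mul_apply,
        fklA, ← th_mul_th x j k]
      ring
    · convert (Aalg d).mul_mem (coordA k).2 a1 using 1
      ext x
      simp only [evP, evN, eval₂_mul, eval₂_C, MvPolynomial.eval_X, Pi.neg_apply, Pi.mul_apply,
        coordA, coordFn, ← rho_mul_th x k]
      ring
  induction g using Polynomial.induction_on with
  | C a =>
    induction a using MvPolynomial.induction_on with
    | C c =>
      refine ⟨?_, fun j => ?_, ?_⟩
      · convert (Aalg d).algebraMap_mem c using 1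
        ext x; simp [evP, evN]
      · convert (Aalg d).zero_mem using 1
        ext x; simp [evP, evN]
      · convert (Aalg d).zero_mem using 1
        ext x; simp [evP, evN]
    | add p q hp hq => rw [C_add]; exact step_add _ _ hp hq
    | mul_X p k hp => rw [C_mul]; exact step_T _ _ hp
  | add p q hp hq => exact step_add _ _ hp hq
  | monomial n a h => rw [pow_succ, ← mul_assoc]; exact step_X _ h

/-- the even part, as an element of `A`. -/
noncomputable def evenT (d : ℕ) : (MvPolynomial (Fin d) ℝ)[X] →ₗ[ℝ] Aalg d where
  toFun g := ⟨_, (even_mem g).1⟩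
  map_add' p q := by
    ext x
    simp only [evP, evN, eval₂_add, Subalgebra.coe_add, Pi.add_apply]; ring
  map_smul' c p := by
    ext x
    rw [← algebraMap_smul (MvPolynomial (Fin d) ℝ) c p, smul_eq_C_mul]
    simp only [evP, evN, eval₂_mul, eval₂_C, MvPolynomial.algebraMap_eq, MvPolynomial.eval_C,
      RingHom.id_apply, Subalgebra.coe_smul, Pi.smul_apply, smul_eq_mul]
    ring

theorem evenT_apply {d : ℕ} (g : (MvPolynomial (Fin d) ℝ)[X]) (x : Xsp d) :
    (evenT d g : Xsp d → ℝ) x = (evP x g + evN x g) / 2 := rfl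

theorem evenT_sq {d : ℕ} (g : (MvPolynomial (Fin d) ℝ)[X]) :
    evenT d (g ^ 2) = (evenT d g) ^ 2 + ∑ j, (evenT d (C (MvPolynomial.X j) * g)) ^ 2 := by
  apply Subtype.ext
  funext x
  rw [Subalgebra.coe_add, Subalgebra.coe_pow, AddSubmonoidClass.coe_finsetSum, Pi.add_apply,
    Pi.pow_apply, Finset.sum_apply]
  simp only [Subalgebra.coe_pow, Pi.pow_apply, evenT_apply]
  have h1 : ∀ j, (evP x (C (MvPolynomial.X j) * g) + evN x (C (MvPolynomial.X j) * g)) / 2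
      = thX x j * ((evP x g - evN x g) / 2) := by
    intro j
    simp only [evP, evN, eval₂_mul, eval₂_C, MvPolynomial.eval_X, Pi.neg_apply]; ring
  simp only [h1, mul_pow]
  rw [← Finset.sum_mul, thX_sum]
  simp only [evP, evN, eval₂_pow]
  ring

theorem evenT_sph {d : ℕ} (g : (MvPolynomial (Fin d) ℝ)[X]) :
    evenT d (C (∑ j : Fin d, (MvPolynomial.X j : MvPolynomial (Fin d) ℝ) ^ 2) * g) = evenT d g := by
  apply Subtype.ext
  funext x
  simp only [evenT_apply, evP, evN, eval₂_mul, eval₂_C]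
  simp only [map_sum, map_pow, MvPolynomial.eval_X,
    Pi.neg_apply, neg_sq, thX_sum, one_mul]

theorem exists_lift {d : ℕ} (f : Xsp d → ℝ) (hf : f ∈ Aalg d) :
    Measurable f ∧ ∃ g : (MvPolynomial (Fin d) ℝ)[X],
      (∀ (r : ℝ) (t : Fin d → ℝ), g.eval₂ (MvPolynomial.eval (-t)) (-r)
        = g.eval₂ (MvPolynomial.eval t) r) ∧ ∀ x, f x = evP x g := by
  have hco : ∀ j : Fin d, Measurable fun x : Xsp d => x.1 j := fun j =>
    (measurable_pi_apply j).comp (measurable_subtype_coe (p := fun x : Fin d → ℝ => x ≠ 0))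
  induction hf using Algebra.adjoin_induction with
  | mem f hf =>
    rcases hf with ⟨j, rfl⟩ | ⟨⟨k, l⟩, rfl⟩
    · refine ⟨hco j, X * C (MvPolynomial.X j), fun r t => ?_, fun x => ?_⟩
      · simp [eval₂_mul]
      · simp only [evP, eval₂_mul, eval₂_X, eval₂_C, MvPolynomial.eval_X, coordFn, rho_mul_th]
    · refine ⟨?_, C (MvPolynomial.X k) * C (MvPolynomial.X l), fun r t => ?_, fun x => ?_⟩
      · exact ((hco k).mul (hco l)).div (Finset.measurable_sum _ fun i _ => (hco i).pow_const 2)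
      · simp [eval₂_mul]
      · simp only [evP, eval₂_mul, eval₂_C, MvPolynomial.eval_X, th_mul_th]
  | algebraMap c =>
    refine ⟨measurable_const, C (MvPolynomial.C c), fun r t => by simp, fun x => by simp [evP]⟩
  | add f g _ _ hf hg =>
    obtain ⟨m1, p, p1, p2⟩ := hf
    obtain ⟨m2, q, q1, q2⟩ := hg
    refine ⟨m1.add m2, p + q, fun r t => by simp [eval₂_add, p1, q1], fun x => ?_⟩
    simp [evP, eval₂_add, p2, q2]
  | mul f g _ _ hf hg =>
    obtain ⟨m1, p, p1, p2⟩ := hf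
    obtain ⟨m2, q, q1, q2⟩ := hg
    refine ⟨m1.mul m2, p * q, fun r t => by simp [eval₂_mul, p1, q1], fun x => ?_⟩
    simp [evP, eval₂_mul, p2, q2]

theorem evP_polar {d : ℕ} (x : Xsp d) (r : ℝ) (t : Fin d → ℝ) (ht : ∑ i, t i ^ 2 = 1)
    (hx : x.1 = r • t) (g : (MvPolynomial (Fin d) ℝ)[X])
    (hg : ∀ (r : ℝ) (t : Fin d → ℝ), g.eval₂ (MvPolynomial.eval (-t)) (-r)
        = g.eval₂ (MvPolynomial.eval t) r) :
    evP x g = g.eval₂ (MvPolynomial.eval t) r := by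
  have hr0 : r ≠ 0 := by
    rintro rfl
    exact x.2 (by rw [hx, zero_smul])
  have hrho : rhoX x = |r| := by
    rw [rhoX, hx]
    simp only [Pi.smul_apply, smul_eq_mul, mul_pow]
    rw [← Finset.mul_sum, ht, mul_one, Real.sqrt_sq_eq_abs]
  rcases lt_or_gt_of_ne hr0 with h | h
  · have h1 : rhoX x = -r := by rw [hrho, abs_of_neg h]
    have h2 : thX x = -t := by
      ext i
      rw [thX, h1, hx]
      simp only [Pi.smul_apply, smul_eq_mul, Pi.neg_apply]
      field_simp
    rw [evP, h1, h2, hg]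
  · have h1 : rhoX x = r := by rw [hrho, abs_of_pos h]
    have h2 : thX x = t := by
      ext i
      rw [thX, h1, hx]
      simp only [Pi.smul_apply, smul_eq_mul]
      field_simp
    rw [evP, h1, h2]

/-- polar coordinates (with an arbitrary value at `r = 0`) -/
noncomputable def polarX (d : ℕ) (y : ℝ × SphT d) : Xsp d :=
  ⟨(if y.1 = 0 then 1 else y.1) • y.2.1, by
    intro h
    have h2 := y.2.2
    rcases smul_eq_zero.mp h with h0 | h0
    · split_ifs at h0 with h1
      · exact one_ne_zero h0
      · exact h1 h0
    · rw [h0] at h2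
      simp at h2⟩

theorem measurable_polarX (d : ℕ) : Measurable (polarX d) := by
  refine Measurable.subtype_mk (p := fun x : Fin d → ℝ => x ≠ 0) ?_
  have h2 : Measurable fun y : ℝ × SphT d => y.2.1 := measurable_subtype_coe.comp measurable_snd
  have h1 : Measurable fun y : ℝ × SphT d => if y.1 = 0 then (1 : ℝ) else y.1 :=
    Measurable.ite (measurable_fst (measurableSet_singleton 0)) measurable_const measurable_fst
  exact h1.smul h2

/-- identification of the sphere -/
def toSph (d : ℕ) (y : ℝ × SphT d) : Sph d := y.2

theorem measurable_toSph (d : ℕ) : Measurable (toSph d) :=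
  (measurable_snd : Measurable (Prod.snd : ℝ × SphT d → SphT d))


end PolyPart

/-- **Theorem 4.2.**  Every linear functional `L` on the algebra `A`
(generated on `ℝ^d ∖ {0}` by the polynomials and the functions
`f_kl(x) = x_k x_l/‖x‖²`) that is nonnegative on squares is given by a measure
`ν₀` on the unit sphere (integrating the radial limits at `0`) together with a
measure `ν₁` on `ℝ^d ∖ {0}`. -/
theorem positive_functional_on_Aalg_representation (d : ℕ) (hd : 1 ≤ d)
    (L : Aalg d →ₗ[ℝ] ℝ) (hL : ∀ g : Aalg d, 0 ≤ L (g ^ 2)) :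
    ∃ (ν₀ : MeasureTheory.Measure (Sph d)) (ν₁ : MeasureTheory.Measure (Xsp d)),
      ∀ f : Aalg d, ∃ f₀ : Sph d → ℝ,
        (∀ t : Sph d,
          Filter.Tendsto
            (fun r : ℝ =>
              if hr : (r • (t.1 : Fin d → ℝ)) ≠ 0 then (f : Xsp d → ℝ) ⟨r • t.1, hr⟩ else 0)
            (nhdsWithin 0 (Set.Ioi 0)) (nhds (f₀ t))) ∧
        MeasureTheory.Integrable f₀ ν₀ ∧
        MeasureTheory.Integrable (f : Xsp d → ℝ) ν₁ ∧
        L f = (∫ t : Sph d, f₀ t ∂ν₀) + ∫ x : Xsp d, (f : Xsp d → ℝ) x ∂ν₁ := by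
  have hcont : ∀ g, Continuous (evCyl d g) := fun g =>
    (continuous_eval2 d g).comp (continuous_fst.prodMk (continuous_subtype_val.comp continuous_snd))
  have hw : ∀ y, evCyl d (Polynomial.X ^ 2) y = y.1 ^ 2 := fun y => by
    change Polynomial.eval₂ _ _ _ = _
    rw [Polynomial.eval₂_pow, Polynomial.eval₂_X]
  obtain ⟨μ, hμ⟩ := haviland (evCyl d) hcont (Polynomial.X ^ 2)
    (fun y => by rw [hw]; exact sq_nonneg _)
    (fun n => by
      refine IsCompact.of_isClosed_subset
        ((isCompact_Icc (a := -Real.sqrt n) (b := Real.sqrt n)).prod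
          (isCompact_univ (X := SphT d))) (isClosed_le (hcont _) continuous_const) ?_
      rintro y hy
      have hy' : evCyl d (Polynomial.X ^ 2) y ≤ n := hy
      rw [hw] at hy'
      exact ⟨abs_le.mp (Real.abs_le_sqrt hy'), Set.mem_univ _⟩)
    (L.comp (evenT d))
    (fun g hg => by
      refine cyl_pos (L.comp (evenT d)) (fun g => ?_) (fun g => ?_) g (fun r t ht => hg (r, ⟨t, ht⟩))
      · rw [LinearMap.comp_apply, evenT_sq, map_add, map_sum]
        exact add_nonneg (hL _) (Finset.sum_nonneg fun j _ => hL _)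
      · rw [LinearMap.comp_apply, evenT_sph]; rfl)
  have hms : MeasurableSet {y : ℝ × SphT d | y.1 = 0} :=
    measurable_fst (measurableSet_singleton 0)
  refine ⟨(μ.restrict {y | y.1 = 0}).map (toSph d), (μ.restrict {y | y.1 = 0}ᶜ).map (polarX d),
    fun f => ?_⟩
  obtain ⟨hfm, g, hg1, hg2⟩ := exists_lift f.1 f.2
  have hTg : evenT d g = f := by
    apply Subtype.ext
    funext x
    rw [evenT_apply, evN, hg1, ← evP, hg2]
    ring
  obtain ⟨hintg, hval⟩ := hμ g
  rw [LinearMap.comp_apply, hTg] at hval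
  have hc0 : Continuous fun t : SphT d => g.eval₂ (MvPolynomial.eval t.1) 0 :=
    (continuous_eval2 d g).comp (continuous_const.prodMk continuous_subtype_val)
  have hm0 : Measurable fun t : Sph d => g.eval₂ (MvPolynomial.eval t.1) 0 := hc0.measurable
  have hEq0 : Set.EqOn (evCyl d g)
      ((fun t : Sph d => g.eval₂ (MvPolynomial.eval t.1) 0) ∘ toSph d) {y | y.1 = 0} := by
    intro y hy
    have hy' : y.1 = 0 := hy
    change Polynomial.eval₂ (MvPolynomial.eval y.2.1) y.1 g = Polynomial.eval₂ (MvPolynomial.eval y.2.1) 0 g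
    rw [hy']
  have hEq1 : Set.EqOn (evCyl d g) ((f : Xsp d → ℝ) ∘ polarX d) {y | y.1 = 0}ᶜ := by
    intro y hy
    have hy' : y.1 ≠ 0 := hy
    rw [Function.comp_apply, hg2]
    symm
    exact evP_polar _ y.1 y.2.1 y.2.2 (by simp [polarX, hy']) g hg1
  refine ⟨fun t => g.eval₂ (MvPolynomial.eval t.1) 0, fun t => ?_, ?_, ?_, ?_⟩
  · have hc : Continuous fun r : ℝ => g.eval₂ (MvPolynomial.eval t.1) r :=
      (continuous_eval2 d g).comp (continuous_id.prodMk continuous_const)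
    refine ((hc.tendsto 0).mono_left nhdsWithin_le_nhds).congr' ?_
    filter_upwards [self_mem_nhdsWithin] with r hr
    have hr0 : r ≠ 0 := (Set.mem_Ioi.mp hr).ne'
    have ht0 : (t.1 : Fin d → ℝ) ≠ 0 := by
      intro h
      have := t.2
      rw [h] at this
      simp at this
    rw [dif_pos (smul_ne_zero hr0 ht0)]
    refine Eq.trans ?_ (hg2 ⟨r • t.1, smul_ne_zero hr0 ht0⟩).symm
    symm
    exact evP_polar _ r t.1 t.2 rfl g hg1
  · rw [MeasureTheory.integrable_map_measure hm0.aestronglyMeasurable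
      (measurable_toSph d).aemeasurable]
    exact (MeasureTheory.integrableOn_congr_fun hEq0 hms).mp hintg.integrableOn
  · rw [MeasureTheory.integrable_map_measure hfm.aestronglyMeasurable
      (measurable_polarX d).aemeasurable]
    exact (MeasureTheory.integrableOn_congr_fun hEq1 hms.compl).mp hintg.integrableOn
  · rw [MeasureTheory.integral_map (measurable_toSph d).aemeasurable hm0.aestronglyMeasurable,
      MeasureTheory.integral_map (measurable_polarX d).aemeasurable hfm.aestronglyMeasurable,
      ← hval, ← MeasureTheory.integral_add_compl hms hintg]
    congr 1
    · exact MeasureTheory.setIntegral_congr_fun hms hEq0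
    · exact MeasureTheory.setIntegral_congr_fun hms.compl hEq1
end

section
/- For every unital ℝ-algebra homomorphism χ : A → ℝ exactly one of the following holds: (1) there exists a unique x ∈ X such that χ(f) = f(x) for all f ∈ A; or (2) χ vanishes on all coordinate functions, i.e. χ(x ↦ x_j) = 0 for j = 1,…,d, and there exists t ∈ ℝ^d with t₁² + ⋯ + t_d² = 1 such that χ(f_kl) = t_k t_l for all k, l = 1,…,d. Conversely, for every x ∈ X the evaluation f ↦ f(x) is a unital ℝ-algebra homomorphism A → ℝ, and for every t ∈ ℝ^d with t₁² + ⋯ + t_d² = 1 there exists a unital ℝ-algebra homomorphism χ : A → ℝ with χ(x ↦ x_j) = 0 for all j and χ(f_kl) = t_k t_l for all k, l. -/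
lemma Xsp_sum_ne {d : ℕ} (x : Xsp d) : (∑ i : Fin d, (x.1 i) ^ 2) ≠ 0 := by
  intro h
  apply x.2
  funext i
  have := (Finset.sum_eq_zero_iff_of_nonneg (fun i _ => sq_nonneg (x.1 i))).1 h i (Finset.mem_univ i)
  simpa using this

lemma fkl_mul {d : ℕ} (a b k l : Fin d) :
    fklA a b * fklA k l = fklA a k * fklA b l := by
  apply Subtype.ext
  funext x
  change fklFn a b x * fklFn k l x = fklFn a k x * fklFn b l x
  simp only [fklFn]
  ring

lemma fkl_comm {d : ℕ} (k l : Fin d) : fklA k l = fklA l k := by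
  apply Subtype.ext
  funext x
  change fklFn k l x = fklFn l k x
  simp only [fklFn]
  ring

lemma fkl_trace {d : ℕ} : ∑ k : Fin d, fklA k k = 1 := by
  apply Subtype.ext
  funext x
  have h : ((∑ k : Fin d, fklA k k : Aalg d) : Xsp d → ℝ) x = ∑ k : Fin d, fklFn k k x := by
    simp [fklA]
  rw [h]
  simp only [fklFn]
  rw [← Finset.sum_div]
  simp only [← pow_two]
  exact div_self (Xsp_sum_ne x)

lemma fkl_coord {d : ℕ} (k l : Fin d) :
    fklA k l * ∑ i : Fin d, coordA i ^ 2 = coordA k * coordA l := by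
  apply Subtype.ext
  funext x
  have h : ((fklA k l * ∑ i : Fin d, coordA i ^ 2 : Aalg d) : Xsp d → ℝ) x
      = fklFn k l x * ∑ i : Fin d, (x.1 i) ^ 2 := by
    simp [fklA, coordA, coordFn]
  rw [h]
  change _ = x.1 k * x.1 l
  exact div_mul_cancel₀ _ (Xsp_sum_ne x)

/-- Evaluation at a point. -/
def evalA {d : ℕ} (x : Xsp d) : Aalg d →ₐ[ℝ] ℝ :=
  (Pi.evalAlgHom ℝ (fun _ : Xsp d => ℝ) x).comp (Aalg d).val

lemma Aalg_hom_ext {d : ℕ} (φ ψ : Aalg d →ₐ[ℝ] ℝ) (h1 : ∀ j, φ (coordA j) = ψ (coordA j))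
    (h2 : ∀ k l, φ (fklA k l) = ψ (fklA k l)) : φ = ψ := by
  apply AlgHom.adjoin_ext
  rintro f (⟨j, rfl⟩ | ⟨p, rfl⟩)
  · exact h1 j
  · exact h2 p.1 p.2

open Filter Topology in
lemma exists_char {d : ℕ} (t : Fin d → ℝ) (ht : ∑ i : Fin d, (t i) ^ 2 = 1) :
    ∃ χ : Aalg d →ₐ[ℝ] ℝ, (∀ j : Fin d, χ (coordA j) = 0) ∧
        ∀ kk ll : Fin d, χ (fklA kk ll) = t kk * t ll := by
  have ht0 : t ≠ 0 := by
    rintro rfl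
    simp at ht
  let γ : ℕ → Xsp d := fun n => ⟨(1 / ((n : ℝ) + 1)) • t, smul_ne_zero (by positivity) ht0⟩
  have hc : ∀ j : Fin d, Tendsto (fun n => coordFn j (γ n)) atTop (𝓝 0) := by
    intro j
    have := (tendsto_one_div_add_atTop_nhds_zero_nat (𝕜 := ℝ)).mul_const (t j)
    simpa [coordFn, γ] using this
  have hf : ∀ k l : Fin d, Tendsto (fun n => fklFn k l (γ n)) atTop (𝓝 (t k * t l)) := by
    intro k l
    have : (fun n => fklFn k l (γ n)) = fun _ => t k * t l := by
      funext n
      have hn : (1 / ((n : ℝ) + 1)) ≠ 0 := by positivity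
      simp only [fklFn, γ, Pi.smul_apply, smul_eq_mul]
      generalize (1 / ((n : ℝ) + 1)) = s at hn
      simp only [mul_pow]
      rw [← Finset.mul_sum, ht]
      field_simp
    rw [this]
    exact tendsto_const_nhds
  have key : ∀ f : Aalg d, ∃ c : ℝ, Tendsto (fun n => (f : Xsp d → ℝ) (γ n)) atTop (𝓝 c) := by
    rintro ⟨f, hfA⟩
    change ∃ c : ℝ, Tendsto (fun n => f (γ n)) atTop (𝓝 c)
    unfold Aalg at hfA
    induction hfA using Algebra.adjoin_induction with
    | mem f h =>
      rcases h with ⟨j, rfl⟩ | ⟨p, rfl⟩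
      · exact ⟨_, hc j⟩
      · exact ⟨_, hf p.1 p.2⟩
    | algebraMap r => exact ⟨r, tendsto_const_nhds⟩
    | add f g _ _ h1 h2 =>
      obtain ⟨a, ha⟩ := h1
      obtain ⟨b, hb⟩ := h2
      exact ⟨a + b, ha.add hb⟩
    | mul f g _ _ h1 h2 =>
      obtain ⟨a, ha⟩ := h1
      obtain ⟨b, hb⟩ := h2
      exact ⟨a * b, ha.mul hb⟩
  choose L hL using key
  have huniq : ∀ (f : Aalg d) (c : ℝ),
      Tendsto (fun n => (f : Xsp d → ℝ) (γ n)) atTop (𝓝 c) → L f = c :=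
    fun f c h => tendsto_nhds_unique (hL f) h
  let χ : Aalg d →ₐ[ℝ] ℝ :=
    { toFun := L
      map_one' := huniq _ _ tendsto_const_nhds
      map_zero' := huniq _ _ tendsto_const_nhds
      map_mul' := fun f g => huniq _ _ ((hL f).mul (hL g))
      map_add' := fun f g => huniq _ _ ((hL f).add (hL g))
      commutes' := fun r => huniq _ _ tendsto_const_nhds }
  exact ⟨χ, fun j => huniq _ _ (hc j), fun k l => huniq _ _ (hf k l)⟩

lemma char_zero_case {d : ℕ} (χ : Aalg d →ₐ[ℝ] ℝ) :
    ∃ t : Fin d → ℝ, (∑ i : Fin d, (t i) ^ 2 = 1) ∧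
      ((∀ kk ll : Fin d, χ (fklA kk ll) = t kk * t ll)) := by
  have htr : ∑ k : Fin d, χ (fklA k k) = 1 := by
    rw [← map_sum, fkl_trace, map_one]
  obtain ⟨m, hm⟩ : ∃ m, 0 < χ (fklA m m) := by
    by_contra! h
    have := Finset.sum_nonpos (s := Finset.univ) (fun i _ => h i)
    linarith
  have hs := Real.mul_self_sqrt hm.le
  have hs0 : √(χ (fklA m m)) ≠ 0 := (Real.sqrt_pos.2 hm).ne'
  have hkl : ∀ k l : Fin d, χ (fklA k l) =
      (χ (fklA m k) / √(χ (fklA m m))) * (χ (fklA m l) / √(χ (fklA m m))) := by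
    intro k l
    rw [div_mul_div_comm, hs, eq_div_iff hm.ne', ← map_mul, ← map_mul, mul_comm, fkl_mul]
  refine ⟨fun k => χ (fklA m k) / √(χ (fklA m m)), ?_, hkl⟩
  rw [← htr]
  refine Finset.sum_congr rfl fun k _ => ?_
  rw [hkl k k, pow_two]

/-- **Lemma 4.1 (characters of `A`).**  Every character (unital `ℝ`-algebra
homomorphism) of the algebra `A` of functions on `ℝ^d ∖ {0}` generated by the
coordinate functions and the functions `f_kl` is either the evaluation at a
unique point `x ∈ ℝ^d ∖ {0}`, or it kills all coordinate functions and sends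
`f_kl` to `t_k t_l` for some unit vector `t`; and these two cases are mutually
exclusive.  Conversely, all these maps are indeed characters of `A`. -/
theorem characters_of_Aalg (d : ℕ) (hd : 1 ≤ d) :
    (∀ χ : Aalg d →ₐ[ℝ] ℝ,
      Xor'
        (∃! x : Xsp d, ∀ f : Aalg d, χ f = (f : Xsp d → ℝ) x)
        ((∀ j : Fin d, χ (coordA j) = 0) ∧
          ∃ t : Fin d → ℝ, (∑ i : Fin d, (t i) ^ 2 = 1) ∧
            ∀ kk ll : Fin d, χ (fklA kk ll) = t kk * t ll)) ∧
    (∀ x : Xsp d, ∃ χ : Aalg d →ₐ[ℝ] ℝ, ∀ f : Aalg d, χ f = (f : Xsp d → ℝ) x) ∧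
    (∀ t : Fin d → ℝ, (∑ i : Fin d, (t i) ^ 2 = 1) →
      ∃ χ : Aalg d →ₐ[ℝ] ℝ, (∀ j : Fin d, χ (coordA j) = 0) ∧
        ∀ kk ll : Fin d, χ (fklA kk ll) = t kk * t ll) := by
  refine ⟨fun χ => ?_, fun x => ⟨evalA x, fun f => rfl⟩, fun t ht => exists_char t ht⟩
  by_cases h : ∀ j : Fin d, χ (coordA j) = 0
  · refine Or.inr ⟨⟨h, char_zero_case χ⟩, ?_⟩
    rintro ⟨x, hx, -⟩
    apply x.2
    funext j
    exact (hx (coordA j)).symm.trans (h j)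
  · refine Or.inl ⟨?_, fun h' => h h'.1⟩
    let x : Xsp d := ⟨fun j => χ (coordA j), fun h0 => h fun j => congrFun h0 j⟩
    refine ⟨x, ?_, ?_⟩
    · have : χ = evalA x := by
        refine Aalg_hom_ext _ _ (fun j => rfl) fun k l => ?_
        change χ (fklA k l) = χ (coordA k) * χ (coordA l) / ∑ i : Fin d, (χ (coordA i)) ^ 2
        rw [eq_div_iff (Xsp_sum_ne x), ← map_mul, ← fkl_coord, map_mul, map_sum]
        simp only [map_pow]
        rfl
      intro f
      exact congrArg (fun φ : Aalg d →ₐ[ℝ] ℝ => φ f) this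
    · intro y hy
      apply Subtype.ext
      funext j
      exact (hy (coordA j)).symm
end

section
/- Let s : ℕ × ℕ → ℂ. There exists a positive Borel measure μ on ℂ such that for all (m,n) ∈ ℕ × ℕ the function z ↦ z^m · conj(z)^n is μ-integrable and s(m,n) = ∫_ℂ z^m · conj(z)^n dμ(z), if and only if there exists a function ŝ : ℤ × ℤ → ℂ with ŝ(m,n) = s(m,n) for all (m,n) ∈ ℕ × ℕ which is positive semidefinite on N₊ := {(m,n) ∈ ℤ × ℤ : m + n ≥ 0}, i.e. for every r ∈ ℕ, all ξ₁,…,ξ_r ∈ N₊ and all c₁,…,c_r ∈ ℂ, the sum Σ_{i,j=1}^{r} c_i · conj(c_j) · ŝ(ξ_i* + ξ_j) is a nonnegative real number, where (m,n)* := (n,m) denotes the involution on ℤ × ℤ (note that ξ* + η ∈ N₊ whenever ξ, η ∈ N₊). -/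
/-- the characters of `N₊` given by points of the plane -/
noncomputable def SSchar (ξ : ℤ × ℤ) (z : ℂ) : ℂ :=
  if z = 0 then (if ξ.1 + ξ.2 = 0 then 1 else 0) else z ^ ξ.1 * (starRingEnd ℂ z) ^ ξ.2

theorem SSchar_nat (mn : ℕ × ℕ) (z : ℂ) :
    SSchar ((mn.1 : ℤ), (mn.2 : ℤ)) z = z ^ mn.1 * (starRingEnd ℂ z) ^ mn.2 := by
  obtain ⟨m, n⟩ := mn
  unfold SSchar
  split_ifs with h1 h2
  · have hm : m = 0 := by simp only at h2; omega
    have hn : n = 0 := by simp only at h2; omega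
    simp [hm, hn]
  · subst h1
    have : m ≠ 0 ∨ n ≠ 0 := by simp only at h2; omega
    rcases this with h | h <;> simp [h]
  · simp

theorem SSchar_mul (ξ η : ℤ × ℤ) (h : 0 ≤ ξ.1 + ξ.2) (h' : 0 ≤ η.1 + η.2) (z : ℂ) :
    SSchar (ξ.swap + η) z = starRingEnd ℂ (SSchar ξ z) * SSchar η z := by
  obtain ⟨a, b⟩ := ξ
  obtain ⟨c, d⟩ := η
  simp only at h h'
  unfold SSchar
  by_cases hz : z = 0
  · simp only [hz, if_true, Prod.fst_add, Prod.snd_add, Prod.fst_swap, Prod.snd_swap]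
    by_cases h1 : a + b = 0 <;> by_cases h2 : c + d = 0
    · rw [if_pos (by omega), if_pos h1, if_pos h2]; simp
    · rw [if_neg (by omega), if_neg h2]; simp
    · rw [if_neg (by omega), if_neg h1]; simp
    · rw [if_neg (by omega), if_neg h1]; simp
  · have hz' : (starRingEnd ℂ) z ≠ 0 := by simpa using hz
    simp only [hz, if_false, Prod.fst_add, Prod.snd_add, Prod.fst_swap, Prod.snd_swap,
      map_mul, map_zpow₀, Complex.conj_conj]
    rw [zpow_add₀ hz, zpow_add₀ hz']
    ring

theorem SSchar_norm (ξ : ℤ × ℤ) (h : 0 ≤ ξ.1 + ξ.2) (z : ℂ) :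
    ‖SSchar ξ z‖ = ‖z‖ ^ (ξ.1 + ξ.2).toNat := by
  unfold SSchar
  split_ifs with h1 h2
  · simp [h2]
  · have : (ξ.1 + ξ.2).toNat ≠ 0 := by omega
    simp [h1, this]
  · rw [norm_mul, norm_zpow, norm_zpow, Complex.norm_conj, ← zpow_add₀ (by simpa using h1),
      ← zpow_natCast, Int.toNat_of_nonneg h]

theorem SSchar_meas (ξ : ℤ × ℤ) : Measurable (SSchar ξ) := by
  unfold SSchar
  refine Measurable.ite (measurableSet_singleton 0) measurable_const ?_
  have : ∀ k : ℤ, Measurable (fun z : ℂ => z ^ k) := by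
    intro k
    cases k with
    | ofNat k => simpa using (measurable_id (α := ℂ)).pow_const k
    | negSucc k =>
      simp only [zpow_negSucc]
      exact ((measurable_id (α := ℂ)).pow_const (k + 1)).inv
  exact (this _).mul ((this _).comp Complex.continuous_conj.measurable)

theorem SS_forward (s : ℕ × ℕ → ℂ) (μ : MeasureTheory.Measure ℂ)
    (hμ : ∀ mn : ℕ × ℕ, MeasureTheory.Integrable
          (fun z : ℂ => z ^ mn.1 * (starRingEnd ℂ z) ^ mn.2) μ ∧
        s mn = ∫ z : ℂ, z ^ mn.1 * (starRingEnd ℂ z) ^ mn.2 ∂μ) :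
    ∃ shat : ℤ × ℤ → ℂ,
      (∀ mn : ℕ × ℕ, shat ((mn.1 : ℤ), (mn.2 : ℤ)) = s mn) ∧
      ∀ (r : ℕ) (ξ : Fin r → ℤ × ℤ), (∀ i : Fin r, 0 ≤ (ξ i).1 + (ξ i).2) →
        ∀ c : Fin r → ℂ,
          (∑ i : Fin r, ∑ j : Fin r,
              c i * starRingEnd ℂ (c j) * shat ((ξ i).swap + ξ j)).im = 0 ∧
          0 ≤ (∑ i : Fin r, ∑ j : Fin r,
              c i * starRingEnd ℂ (c j) * shat ((ξ i).swap + ξ j)).re := by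
  have hintg : ∀ ξ : ℤ × ℤ, 0 ≤ ξ.1 + ξ.2 → MeasureTheory.Integrable (SSchar ξ) μ := by
    intro ξ h
    refine (hμ ((ξ.1 + ξ.2).toNat, 0)).1.mono (SSchar_meas ξ).aestronglyMeasurable ?_
    refine Filter.Eventually.of_forall fun z => ?_
    rw [SSchar_norm ξ h]; simp
  refine ⟨fun ξ => ∫ z, SSchar ξ z ∂μ, ?_, ?_⟩
  · intro mn
    simp only [SSchar_nat, (hμ mn).2]
  · intro r ξ hξ c
    have : (∑ i : Fin r, ∑ j : Fin r,
        c i * starRingEnd ℂ (c j) * ∫ z, SSchar ((ξ i).swap + ξ j) z ∂μ) =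
        ((∫ z, Complex.normSq (∑ j, starRingEnd ℂ (c j) * SSchar (ξ j) z) ∂μ : ℝ) : ℂ) := by
      have hi : ∀ i j, MeasureTheory.Integrable
          (fun z => c i * starRingEnd ℂ (c j) * SSchar ((ξ i).swap + ξ j) z) μ := by
        intro i j
        refine (hintg _ ?_).const_mul _
        have h1 := hξ i
        have h2 := hξ j
        simp only [Prod.fst_add, Prod.snd_add, Prod.fst_swap, Prod.snd_swap]
        omega
      simp only [← MeasureTheory.integral_const_mul]
      rw [← integral_complex_ofReal]
      simp only [← MeasureTheory.integral_finsetSum _ (fun j _ => hi _ j)]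
      rw [← MeasureTheory.integral_finsetSum _ (fun i _ =>
        MeasureTheory.integrable_finsetSum _ (fun j _ => hi i j))]
      congr 1
      ext z
      rw [← Complex.mul_conj, map_sum, mul_comm, Finset.sum_mul_sum]
      refine Finset.sum_congr rfl fun i _ => Finset.sum_congr rfl fun j _ => ?_
      rw [SSchar_mul _ _ (hξ i) (hξ j)]
      simp only [map_mul, Complex.conj_conj]
      ring
    rw [this]
    exact ⟨Complex.ofReal_im _, by
      rw [Complex.ofReal_re]
      exact MeasureTheory.integral_nonneg fun z => Complex.normSq_nonneg _⟩

open Polynomial in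
/-- A real polynomial that is nonnegative on the line is a hermitian square. -/
theorem SS_nonneg_poly (n : ℕ) : ∀ p : ℝ[X], p.natDegree = n → (∀ x, 0 ≤ p.eval x) →
    ∃ q : ℂ[X], p.map (algebraMap ℝ ℂ) = q * q.map (starRingEnd ℂ) := by
  induction n using Nat.strong_induction_on with
  | _ n ih =>
  intro p hn hp
  by_cases h0 : p.degree ≤ 0
  · rw [eq_C_of_degree_le_zero h0] at hp ⊢
    have hc := hp 0
    simp only [eval_C] at hc
    refine ⟨C ((Real.sqrt (p.coeff 0) : ℝ) : ℂ), ?_⟩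
    simp only [map_C, ← C_mul]
    congr 1
    rw [Complex.conj_ofReal, ← Complex.ofReal_mul, Real.mul_self_sqrt hc]; rfl
  · have hpne : p ≠ 0 := by rintro rfl; simp at h0
    -- key: nonnegativity extends across a point
    have key : ∀ (r : ℝ[X]) (a : ℝ), (∀ x, x ≠ a → 0 ≤ r.eval x) → 0 ≤ r.eval a := by
      intro r a h
      have hcont : ContinuousWithinAt (fun x => r.eval x) {a}ᶜ a := r.continuous.continuousWithinAt
      exact ge_of_tendsto hcont (Filter.eventually_of_mem self_mem_nhdsWithin h)
    obtain ⟨z, hz⟩ : ∃ z : ℂ, aeval z p = 0 := by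
      refine IsAlgClosed.exists_aeval_eq_zero _ p ?_
      intro h; exact h0 (le_of_eq h)
    by_cases hzi : z.im = 0
    · obtain ⟨a, rfl⟩ : ∃ a : ℝ, z = a := ⟨z.re, by apply Complex.ext <;> simp [hzi]⟩
      have hroot : p.eval a = 0 := by
        have : aeval ((algebraMap ℝ ℂ) a) p = 0 := hz
        rw [aeval_algebraMap_apply] at this
        simpa using this
      obtain ⟨p1, rfl⟩ := dvd_iff_isRoot.mpr hroot
      have h1 : ∀ x, a < x → 0 ≤ p1.eval x := by
        intro x hx
        have := hp x
        simp only [eval_mul, eval_sub, eval_X, eval_C] at this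
        exact nonneg_of_mul_nonneg_right this (by linarith)
      have h2 : ∀ x, x < a → p1.eval x ≤ 0 := by
        intro x hx
        have := hp x
        simp only [eval_mul, eval_sub, eval_X, eval_C] at this
        by_contra h
        push Not at h
        nlinarith
      have h3 : p1.eval a = 0 := by
        apply le_antisymm
        · have hcont : ContinuousWithinAt (fun x => p1.eval x) (Set.Iio a) a :=
            p1.continuous.continuousWithinAt
          exact le_of_tendsto hcont (Filter.eventually_of_mem self_mem_nhdsWithin h2)
        · have hcont : ContinuousWithinAt (fun x => p1.eval x) (Set.Ioi a) a :=
            p1.continuous.continuousWithinAt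
          exact ge_of_tendsto hcont (Filter.eventually_of_mem self_mem_nhdsWithin h1)
      obtain ⟨p2, rfl⟩ := dvd_iff_isRoot.mpr h3
      have hp2 : ∀ x, x ≠ a → 0 ≤ p2.eval x := by
        intro x hx
        have := hp x
        simp only [eval_mul, eval_sub, eval_X, eval_C] at this
        have hs : 0 < (x - a) * (x - a) := mul_self_pos.mpr (sub_ne_zero.mpr hx)
        rw [← mul_assoc] at this
        exact nonneg_of_mul_nonneg_right this hs
      have hp2' : ∀ x, 0 ≤ p2.eval x := by
        intro x
        by_cases hx : x = a
        · subst hx; exact key _ _ hp2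
        · exact hp2 x hx
      have hp2ne : p2 ≠ 0 := by rintro rfl; simp at hpne
      have hdeg : p2.natDegree < n := by
        rw [← hn, natDegree_mul (X_sub_C_ne_zero a) (mul_ne_zero (X_sub_C_ne_zero a) hp2ne),
          natDegree_mul (X_sub_C_ne_zero a) hp2ne, natDegree_X_sub_C]
        omega
      obtain ⟨q, hq⟩ := ih _ hdeg p2 rfl hp2'
      refine ⟨(X - C (a : ℂ)) * q, ?_⟩
      simp only [Polynomial.map_mul, hq, Polynomial.map_sub, map_X, map_C, Complex.conj_ofReal,
        Complex.coe_algebraMap]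
      ring
    · obtain ⟨p2, rfl⟩ := quadratic_dvd_of_aeval_eq_zero_im_ne_zero p hz hzi
      have hquad : ∀ x : ℝ, 0 < (X ^ 2 - C (2 * z.re) * X + C (‖z‖ ^ 2) : ℝ[X]).eval x := by
        intro x
        simp only [eval_add, eval_sub, eval_pow, eval_X, eval_mul, eval_C]
        rw [Complex.sq_norm, Complex.normSq_apply]
        have : 0 < z.im * z.im := mul_self_pos.mpr hzi
        nlinarith [sq_nonneg (x - z.re)]
      have hp2 : ∀ x, 0 ≤ p2.eval x := by
        intro x
        have := hp x
        rw [eval_mul] at this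
        exact nonneg_of_mul_nonneg_right this (hquad x)
      have hp2ne : p2 ≠ 0 := by rintro rfl; simp at hpne
      have hqd : (X ^ 2 - C (2 * z.re) * X + C (‖z‖ ^ 2) : ℝ[X]).natDegree = 2 := by
        compute_degree!
      have hqne : (X ^ 2 - C (2 * z.re) * X + C (‖z‖ ^ 2) : ℝ[X]) ≠ 0 := by
        intro h; rw [h] at hqd; simp at hqd
      have hdeg : p2.natDegree < n := by
        rw [← hn, natDegree_mul hqne hp2ne, hqd]; omega
      obtain ⟨q, hq⟩ := ih _ hdeg p2 rfl hp2
      refine ⟨(X - C z) * q, ?_⟩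
      have hz2 : ((‖z‖ : ℂ)) ^ 2 = z * (starRingEnd ℂ) z := (Complex.mul_conj' z).symm
      have hz1 : (2 * (z.re : ℂ)) = z + (starRingEnd ℂ) z := by
        rw [Complex.add_conj]; push_cast; rfl
      simp only [Polynomial.map_mul, hq, Polynomial.map_sub, Polynomial.map_add, Polynomial.map_pow,
        map_X, map_C, Complex.coe_algebraMap, Complex.ofReal_mul, Complex.ofReal_pow,
        Complex.ofReal_ofNat]
      rw [hz1, hz2]
      simp only [C_add, C_mul]
      ring

/-- real part of the linear functional on formal polynomials determined by `φ` -/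
noncomputable def SSW (φ : ℕ × ℕ → ℂ) : ((ℕ × ℕ) →₀ ℂ) →ₗ[ℝ] ℝ :=
  Complex.reLm ∘ₗ (Finsupp.linearCombination ℂ φ).restrictScalars ℝ

/-- monomials in `z` and its conjugate -/
noncomputable def SSmono (z : ℂ) (mn : ℕ × ℕ) : ℂ := z ^ mn.1 * (starRingEnd ℂ z) ^ mn.2

theorem SSW_single (φ : ℕ × ℕ → ℂ) (mn : ℕ × ℕ) (c : ℂ) :
    SSW φ (Finsupp.single mn c) = (c * φ mn).re := by
  simp [SSW]

theorem SSW_apply (φ : ℕ × ℕ → ℂ) (a : (ℕ × ℕ) →₀ ℂ) :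
    SSW φ a = ∑ x ∈ a.support, (a x * φ x).re := by
  simp [SSW, Finsupp.linearCombination_apply, Finsupp.sum]

theorem SSW_cont (a : (ℕ × ℕ) →₀ ℂ) : Continuous (fun z => SSW (SSmono z) a) := by
  simp only [SSW_apply, SSmono]
  have := Complex.continuous_conj
  fun_prop

theorem SSmono_norm (z : ℂ) (mn : ℕ × ℕ) : ‖SSmono z mn‖ = ‖z‖ ^ (mn.1 + mn.2) := by
  simp [SSmono, pow_add]

noncomputable def SSchi (R : ℕ) (z : ℂ) : ℝ := max 0 (min 1 (R + 1 - ‖z‖))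

theorem SSchi_nonneg (R : ℕ) (z : ℂ) : 0 ≤ SSchi R z := le_max_left _ _
theorem SSchi_le (R : ℕ) (z : ℂ) : SSchi R z ≤ 1 := max_le zero_le_one (min_le_left _ _)
theorem SSchi_one (R : ℕ) (z : ℂ) (h : ‖z‖ ≤ R) : SSchi R z = 1 := by
  unfold SSchi
  rw [min_eq_left (by linarith)]; simp
theorem SSchi_zero (R : ℕ) (z : ℂ) (h : R + 1 < ‖z‖) : SSchi R z = 0 := by
  unfold SSchi
  exact max_eq_left ((min_le_right _ _).trans (by linarith))

/-- cut-off polynomials -/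
noncomputable def SScut (R : ℕ) (a : (ℕ × ℕ) →₀ ℂ) : CompactlySupportedContinuousMap ℂ ℝ where
  toFun z := SSchi R z * SSW (SSmono z) a
  continuous_toFun := by
    have := SSW_cont a
    unfold SSchi
    fun_prop
  hasCompactSupport' := by
    refine HasCompactSupport.intro (isCompact_closedBall (0 : ℂ) (R + 1)) fun z hz => ?_
    rw [SSchi_zero, zero_mul]
    simpa using hz

theorem SScut_apply (R : ℕ) (a : (ℕ × ℕ) →₀ ℂ) (z : ℂ) :
    SScut R a z = SSchi R z * SSW (SSmono z) a := rfl

theorem SS_riesz (s : ℕ × ℕ → ℂ)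
    (h : ∀ a : (ℕ × ℕ) →₀ ℂ, (∀ z, 0 ≤ SSW (SSmono z) a) → 0 ≤ SSW s a) :
    ∃ Λ : CompactlySupportedContinuousMap ℂ ℝ →ₗ[ℝ] ℝ,
      ∀ (a : (ℕ × ℕ) →₀ ℂ) (f : CompactlySupportedContinuousMap ℂ ℝ),
        (∀ z, 0 ≤ SSW (SSmono z) a + f z) → 0 ≤ SSW s a + Λ f := by
  let S : PointedCone ℝ (((ℕ × ℕ) →₀ ℂ) × CompactlySupportedContinuousMap ℂ ℝ) :=
    { carrier := {x | ∀ z, 0 ≤ SSW (SSmono z) x.1 + x.2 z}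
      zero_mem' := by intro z; simp
      add_mem' := by
        intro x y hx hy z
        have h1 := hx z
        have h2 := hy z
        simp only [Prod.fst_add, Prod.snd_add, map_add, CompactlySupportedContinuousMap.coe_add,
          Pi.add_apply]
        linarith
      smul_mem' := by
        intro c x hx z
        have h1 := mul_nonneg c.2 (hx z)
        have e1 : (c • x).1 = (c : ℝ) • x.1 := rfl
        have e2 : (c • x).2 z = (c : ℝ) * x.2 z := rfl
        rw [e1, e2, map_smul, smul_eq_mul]
        rw [mul_add] at h1
        exact h1 }
  let f : (((ℕ × ℕ) →₀ ℂ) × CompactlySupportedContinuousMap ℂ ℝ) →ₗ.[ℝ] ℝ :=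
    ⟨Submodule.prod ⊤ ⊥, (SSW s ∘ₗ LinearMap.fst ℝ _ _).domRestrict _⟩
  obtain ⟨g, hg1, hg2⟩ := riesz_extension S f (by
      rintro ⟨⟨a, b⟩, hab⟩ hx
      have hb : b = 0 := by simpa [f] using hab
      subst hb
      refine h a fun z => ?_
      simpa using hx z) (by
      rintro ⟨a, b⟩
      obtain ⟨C, hC⟩ := b.continuous.bounded_above_of_compact_support b.hasCompactSupport
      refine ⟨⟨(-a + Finsupp.single (0, 0) (C : ℂ), 0), by simp [f]⟩, ?_⟩
      intro z
      have h1 : ‖b z‖ ≤ C := hC z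
      have h2 := neg_abs_le (b z)
      rw [Real.norm_eq_abs] at h1
      have e : SSW (SSmono z) (Finsupp.single (0, 0) (C : ℂ)) = C := by
        rw [SSW_single]; simp [SSmono]
      simp only [Prod.mk_add_mk, zero_add, map_add, map_neg, e]
      linarith)
  refine ⟨g ∘ₗ LinearMap.inr ℝ _ _, fun a b hab => ?_⟩
  have h1 := hg2 (a, b) hab
  have h2 := hg1 ⟨(a, 0), by simp [f]⟩
  have h3 : (a, b) = (a, 0) + (0, b) := by simp
  rw [h3, map_add] at h1
  have h4 : f ⟨(a, 0), by simp [f]⟩ = SSW s a := rfl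
  rw [h4] at h2
  simp only [LinearMap.comp_apply, LinearMap.inr_apply]
  linarith

open MeasureTheory Filter Topology in
theorem SS_haviland (s : ℕ × ℕ → ℂ)
    (h : ∀ a : (ℕ × ℕ) →₀ ℂ, (∀ z, 0 ≤ SSW (SSmono z) a) → 0 ≤ SSW s a) :
    ∃ μ : MeasureTheory.Measure ℂ,
      ∀ mn : ℕ × ℕ,
        MeasureTheory.Integrable
          (fun z : ℂ => z ^ mn.1 * (starRingEnd ℂ z) ^ mn.2) μ ∧
        s mn = ∫ z : ℂ, z ^ mn.1 * (starRingEnd ℂ z) ^ mn.2 ∂μ := by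
  obtain ⟨Λ, hΛ⟩ := SS_riesz s h
  let Λ' : CompactlySupportedContinuousMap ℂ ℝ →ₚ[ℝ] ℝ := PositiveLinearMap.mk₀ Λ (by
    intro f hf
    have := hΛ 0 f (by intro z; simpa using hf z)
    simpa using this)
  have hΛ' : ∀ f, ∫ z, f z ∂(RealRMK.rieszMeasure Λ') = Λ f :=
    fun f => RealRMK.integral_rieszMeasure Λ' f
  set μ := RealRMK.rieszMeasure Λ' with hμ
  clear_value μ
  have hfin : IsFiniteMeasureOnCompacts μ := by rw [hμ]; infer_instance
  -- dominating polynomials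
  let Q : ℕ → ((ℕ × ℕ) →₀ ℂ) := fun k => Finsupp.single (0, 0) 1 + Finsupp.single (k, k) 1
  have hQ : ∀ k z, SSW (SSmono z) (Q k) = 1 + ‖z‖ ^ (2 * k) := by
    intro k z
    simp only [Q, map_add, SSW_single, one_mul]
    congr 1
    · simp [SSmono]
    · simp only [SSmono, ← mul_pow, Complex.mul_conj', pow_mul]
      norm_cast
  have hpow : ∀ k (x : ℝ), 0 ≤ x → x ^ k ≤ 1 + x ^ (2 * k) := by
    intro k x hx
    have := pow_nonneg hx k
    rw [mul_comm, pow_mul]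
    nlinarith [sq_nonneg (x ^ k - 1)]
  have hQint : ∀ k, Integrable (fun z => SSW (SSmono z) (Q k)) μ := by
    intro k
    have hQ0 : ∀ z, 0 ≤ SSW (SSmono z) (Q k) := by
      intro z; rw [hQ]; positivity
    refine AECover.integrable_of_integral_bounded_of_nonneg_ae
      (l := atTop) (φ := fun n : ℕ => Metric.closedBall (0 : ℂ) (n : ℝ))
      (aecover_closedBall tendsto_natCast_atTop_atTop) (SSW s (Q k)) ?_ ?_ ?_
    · intro n
      exact (SSW_cont (Q k)).continuousOn.integrableOn_compact (isCompact_closedBall _ _)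
    · exact Eventually.of_forall hQ0
    · refine Eventually.of_forall fun n => ?_
      have h1 : Λ (SScut n (Q k)) ≤ SSW s (Q k) := by
        have := hΛ (Q k) (-SScut n (Q k)) (by
          intro z
          have := mul_le_mul_of_nonneg_right (SSchi_le n z) (hQ0 z)
          simp only [CompactlySupportedContinuousMap.coe_neg, Pi.neg_apply, SScut_apply]
          linarith)
        rw [map_neg] at this
        linarith
      refine le_trans ?_ h1
      rw [← hΛ']
      have hi : Integrable (fun z => SScut n (Q k) z) μ :=
        (SScut n (Q k)).continuous.integrable_of_hasCompactSupport (SScut n (Q k)).hasCompactSupport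
      have e : ∫ z in Metric.closedBall (0 : ℂ) (n : ℝ), SSW (SSmono z) (Q k) ∂μ =
          ∫ z in Metric.closedBall (0 : ℂ) (n : ℝ), SScut n (Q k) z ∂μ := by
        refine setIntegral_congr_fun Metric.isClosed_closedBall.measurableSet fun z hz => ?_
        simp only [SScut_apply]
        rw [SSchi_one n z (by simpa using hz), one_mul]
      rw [e]
      exact setIntegral_le_integral hi (Eventually.of_forall fun z =>
        mul_nonneg (SSchi_nonneg _ _) (hQ0 z))
  have hmonoc : ∀ mn, Continuous fun z => SSmono z mn := by
    intro mn
    have := Complex.continuous_conj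
    unfold SSmono
    fun_prop
  have hmono : ∀ mn, Integrable (fun z => SSmono z mn) μ := by
    intro mn
    refine (hQint (mn.1 + mn.2)).mono (hmonoc mn).aestronglyMeasurable
      (Eventually.of_forall fun z => ?_)
    rw [SSmono_norm, hQ, Real.norm_eq_abs]
    exact (hpow _ _ (norm_nonneg z)).trans (le_abs_self _)
  have key : ∀ mn (c : ℂ), ‖c‖ ≤ 1 → ∫ z, (c * SSmono z mn).re ∂μ = (c * s mn).re := by
    intro mn c hc
    let p : (ℕ × ℕ) →₀ ℂ := Finsupp.single mn c
    have hp : ∀ φ, SSW φ p = (c * φ mn).re := fun φ => SSW_single φ mn c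
    set K := mn.1 + mn.2 + 1 with hK
    have habs : ∀ z, |SSW (SSmono z) p| ≤ ‖SSmono z mn‖ := by
      intro z
      rw [hp]
      refine (Complex.abs_re_le_norm _).trans ?_
      rw [norm_mul]
      exact mul_le_of_le_one_left (norm_nonneg _) hc
    have hbd : ∀ N : ℕ, 0 < N → ∀ z, |SSW (SSmono z) p - SScut N p z| ≤
        (N : ℝ)⁻¹ * SSW (SSmono z) (Q K) := by
      intro N hN z
      have hN' : (0 : ℝ) < N := by exact_mod_cast hN
      have hr : 0 ≤ (N : ℝ)⁻¹ * SSW (SSmono z) (Q K) := by rw [hQ]; positivity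
      by_cases hz : ‖z‖ ≤ N
      · rw [SScut_apply, SSchi_one N z hz]; simpa using hr
      · push Not at hz
        have e : SSW (SSmono z) p - SScut N p z = (1 - SSchi N z) * SSW (SSmono z) p := by
          rw [SScut_apply]; ring
        rw [e, abs_mul, abs_of_nonneg (sub_nonneg.mpr (SSchi_le N z))]
        have h1 : (1 - SSchi N z) * |SSW (SSmono z) p| ≤ ‖SSmono z mn‖ :=
          (mul_le_of_le_one_left (abs_nonneg _) (by linarith [SSchi_nonneg N z])).trans (habs z)
        refine h1.trans ?_
        rw [le_inv_mul_iff₀ hN', hQ, SSmono_norm]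
        refine le_trans ?_ (hpow K _ (norm_nonneg z))
        rw [hK, pow_succ', ]
        exact mul_le_mul_of_nonneg_right hz.le (by positivity)
    have hL : ∀ N : ℕ, 0 < N → |SSW s p - Λ (SScut N p)| ≤ (N : ℝ)⁻¹ * SSW s (Q K) := by
      intro N hN
      rw [abs_le]
      constructor
      · have := hΛ (p + (N : ℝ)⁻¹ • Q K) (-SScut N p) (by
          intro z
          have := (abs_le.mp (hbd N hN z)).1
          simp only [CompactlySupportedContinuousMap.coe_neg, Pi.neg_apply, map_add, map_smul,
            smul_eq_mul]
          linarith)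
        simp only [map_add, map_smul, smul_eq_mul, map_neg] at this
        linarith
      · have := hΛ (-p + (N : ℝ)⁻¹ • Q K) (SScut N p) (by
          intro z
          have := (abs_le.mp (hbd N hN z)).2
          simp only [map_add, map_smul, smul_eq_mul, map_neg]
          linarith)
        simp only [map_add, map_smul, smul_eq_mul, map_neg] at this
        linarith
    have hlim1 : Tendsto (fun N : ℕ => Λ (SScut N p)) atTop (𝓝 (SSW s p)) := by
      rw [tendsto_iff_norm_sub_tendsto_zero]
      have h0 : Tendsto (fun N : ℕ => (N : ℝ)⁻¹ * SSW s (Q K)) atTop (𝓝 0) := by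
        simpa using (tendsto_inv_atTop_nhds_zero_nat (𝕜 := ℝ)).mul_const (SSW s (Q K))
      refine squeeze_zero' (Eventually.of_forall fun _ => norm_nonneg _) ?_ h0
      filter_upwards [eventually_gt_atTop 0] with N hN
      rw [Real.norm_eq_abs, abs_sub_comm]
      exact hL N hN
    have hlim2 : Tendsto (fun N : ℕ => ∫ z, SScut N p z ∂μ) atTop
        (𝓝 (∫ z, SSW (SSmono z) p ∂μ)) := by
      refine tendsto_integral_of_dominated_convergence (fun z => ‖SSmono z mn‖)
        (fun N => (SScut N p).continuous.aestronglyMeasurable) (hmono mn).norm ?_ ?_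
      · intro N
        refine Eventually.of_forall fun z => ?_
        rw [SScut_apply, norm_mul, Real.norm_eq_abs, Real.norm_eq_abs,
          abs_of_nonneg (SSchi_nonneg N z)]
        exact (mul_le_of_le_one_left (abs_nonneg _) (SSchi_le N z)).trans (habs z)
      · refine Eventually.of_forall fun z => ?_
        obtain ⟨N0, hN0⟩ := exists_nat_ge ‖z‖
        refine tendsto_const_nhds.congr' ?_
        filter_upwards [eventually_ge_atTop N0] with N hN
        have : (N0 : ℝ) ≤ N := by exact_mod_cast hN
        rw [SScut_apply, SSchi_one N z (hN0.trans this), one_mul]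
    simp only [hΛ'] at hlim2
    have := tendsto_nhds_unique hlim2 hlim1
    simpa only [hp] using this
  refine ⟨μ, fun mn => ⟨hmono mn, ?_⟩⟩
  have hre : (∫ z, SSmono z mn ∂μ).re = ∫ z, (SSmono z mn).re ∂μ :=
    (integral_re (hmono mn)).symm
  have him : (∫ z, SSmono z mn ∂μ).im = ∫ z, (SSmono z mn).im ∂μ :=
    (integral_im (hmono mn)).symm
  change s mn = ∫ z, SSmono z mn ∂μ
  apply Complex.ext
  · rw [hre]
    simpa using (key mn 1 (by simp)).symm
  · rw [him]
    simpa using (key mn (-Complex.I) (by simp)).symm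

/-- positive semidefiniteness on `N₊` -/
def SSpsd (shat : ℤ × ℤ → ℂ) : Prop :=
  ∀ (r : ℕ) (ξ : Fin r → ℤ × ℤ), (∀ i : Fin r, 0 ≤ (ξ i).1 + (ξ i).2) →
        ∀ c : Fin r → ℂ,
          (∑ i : Fin r, ∑ j : Fin r,
              c i * starRingEnd ℂ (c j) * shat ((ξ i).swap + ξ j)).im = 0 ∧
          0 ≤ (∑ i : Fin r, ∑ j : Fin r,
              c i * starRingEnd ℂ (c j) * shat ((ξ i).swap + ξ j)).re

theorem SSpsd_fintype {shat : ℤ × ℤ → ℂ} (H : SSpsd shat) {ι : Type*} [Fintype ι]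
    (ξ : ι → ℤ × ℤ) (hξ : ∀ i, 0 ≤ (ξ i).1 + (ξ i).2) (c : ι → ℂ) :
    0 ≤ (∑ i, ∑ j, c i * starRingEnd ℂ (c j) * shat ((ξ i).swap + ξ j)).re := by
  have e := (Fintype.equivFin ι).symm
  have := (H _ (ξ ∘ e) (fun i => hξ _) (c ∘ e)).2
  simp only [Function.comp] at this
  rw [e.sum_comp (fun i => ∑ j, c i * starRingEnd ℂ (c (e j)) * shat ((ξ i).swap + ξ (e j)))]
    at this
  simp only [fun i => e.sum_comp (fun j => c i * starRingEnd ℂ (c j) * shat ((ξ i).swap + ξ j))]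
    at this
  exact this

theorem SSpsd_herm {shat : ℤ × ℤ → ℂ} (H : SSpsd shat) (ξ : ℤ × ℤ) (hξ : 0 ≤ ξ.1 + ξ.2) :
    shat ξ.swap = starRingEnd ℂ (shat ξ) := by
  have h00 := (H 1 ![0] (by simp) ![1]).1
  have h11 := (H 1 ![ξ] (by simpa using hξ) ![1]).1
  have hb : ∀ i : Fin 2, 0 ≤ ((![0, ξ] : Fin 2 → ℤ × ℤ) i).1 + ((![0, ξ] : Fin 2 → ℤ × ℤ) i).2 := by
    intro i; fin_cases i <;> simp [hξ]
  have h1 := (H 2 ![0, ξ] hb ![1, 1]).1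
  have h2 := (H 2 ![0, ξ] hb ![1, Complex.I]).1
  have hs : (0 : ℤ × ℤ).swap = 0 := rfl
  simp [Fin.sum_univ_two, hs] at h00 h11 h1 h2
  apply Complex.ext
  · simp; linarith
  · simp; linarith

/-- The functional on `ℝ × circle` obtained from `shat`, extended by zero to odd monomials. -/
noncomputable def SSL (shat : ℤ × ℤ → ℂ) (r : ℕ) (k : ℤ) : ℂ :=
  if ((r : ℤ) + k) % 2 = 0 then shat (((r : ℤ) + k) / 2, (r : ℤ) - ((r : ℤ) + k) / 2) else 0

theorem SSL_psd {shat : ℤ × ℤ → ℂ} (H : SSpsd shat) {ι : Type*} [Fintype ι]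
    (r : ι → ℕ) (k : ι → ℤ) (c : ι → ℂ) :
    0 ≤ (∑ i, ∑ j, c i * starRingEnd ℂ (c j) * SSL shat (r i + r j) (k j - k i)).re := by
  have h0 := SSpsd_fintype H (fun i => (((r i : ℤ) + k i) / 2, (r i : ℤ) - ((r i : ℤ) + k i) / 2))
    (fun i => by simp) (fun i => if ((r i : ℤ) + k i) % 2 = 0 then c i else 0)
  have h1 := SSpsd_fintype H
    (fun i => (((r i : ℤ) + k i + 1) / 2, (r i : ℤ) - ((r i : ℤ) + k i + 1) / 2))
    (fun i => by simp) (fun i => if ((r i : ℤ) + k i) % 2 = 0 then 0 else c i)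
  have h := add_nonneg h0 h1
  rw [← Complex.add_re, ← Finset.sum_add_distrib] at h
  refine h.trans_eq (congrArg Complex.re (Eq.symm ?_))
  refine Finset.sum_congr rfl fun i _ => ?_
  rw [← Finset.sum_add_distrib]
  refine Finset.sum_congr rfl fun j _ => ?_
  unfold SSL
  simp only [Prod.swap_prod_mk, Prod.mk_add_mk]
  by_cases hi : ((r i : ℤ) + k i) % 2 = 0 <;> by_cases hj : ((r j : ℤ) + k j) % 2 = 0
  · rw [if_pos (by push_cast; omega)]
    simp only [hi, hj, if_true, map_zero, mul_zero, zero_mul, add_zero]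
    congr 2
    ext <;> simp <;> omega
  · rw [if_neg (by push_cast; omega)]
    simp [hi, hj]
  · rw [if_neg (by push_cast; omega)]
    simp [hi, hj]
  · rw [if_pos (by push_cast; omega)]
    simp only [hi, hj, if_false, zero_mul, zero_add]
    congr 2
    ext <;> simp <;> omega

theorem SSL_nat (shat : ℤ × ℤ → ℂ) (m n : ℕ) :
    SSL shat (m + n) ((m : ℤ) - n) = shat ((m : ℤ), (n : ℤ)) := by
  unfold SSL
  rw [if_pos (by push_cast; omega)]
  congr 1
  ext <;> simp <;> omega

open Polynomial in
theorem SS_poly_functional (M : ℕ → ℂ) : ∃ φ : ℂ[X] →ₗ[ℂ] ℂ, ∀ a r, φ (C a * X ^ r) = a * M r := by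
  refine ⟨Polynomial.lsum fun r => LinearMap.mulRight ℂ (M r), fun a r => ?_⟩
  rw [Polynomial.lsum_apply, C_mul_X_pow_eq_monomial, sum_monomial_index] <;> simp

open Polynomial in
theorem SS_slice {shat : ℤ × ℤ → ℂ} (H : SSpsd shat) (a : (ℕ × ℕ) →₀ ℂ)
    (ha : ∀ z, 0 ≤ SSW (SSmono z) a) (N : ℕ) (w : ℂ) :
    0 ≤ (∑ j ∈ Finset.range N, ∑ l ∈ Finset.range N, w ^ j * (starRingEnd ℂ w) ^ l *
      ∑ x ∈ a.support, (((a x * SSmono w x).re : ℝ) : ℂ) *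
        SSL shat (x.1 + x.2) ((l : ℤ) - j)).re := by
  let p : ℝ[X] := ∑ x ∈ a.support, C (a x * SSmono w x).re * X ^ (x.1 + x.2)
  obtain ⟨q, hq⟩ := SS_nonneg_poly _ p rfl (by
    intro t
    have := ha (t * w)
    rw [SSW_apply] at this
    convert this using 1
    simp only [p, eval_finsetSum, eval_mul, eval_C, eval_pow, eval_X]
    refine Finset.sum_congr rfl fun x _ => ?_
    have : a x * SSmono (t * w) x = ((t ^ (x.1 + x.2) : ℝ) : ℂ) * (a x * SSmono w x) := by
      simp only [SSmono, map_mul, Complex.conj_ofReal, mul_pow, pow_add]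
      push_cast; ring
    rw [this, Complex.re_ofReal_mul, mul_comm])
  have hpM : ∀ M : ℕ → ℂ, ∑ x ∈ a.support, (((a x * SSmono w x).re : ℝ) : ℂ) * M (x.1 + x.2) =
      ∑ e : Fin (q.natDegree + 1), ∑ f : Fin (q.natDegree + 1),
        (starRingEnd ℂ (q.coeff e)) * q.coeff f * M (e + f) := by
    intro M
    obtain ⟨φ, hφ⟩ := SS_poly_functional M
    have h1 : φ (p.map (algebraMap ℝ ℂ)) =
        ∑ x ∈ a.support, (((a x * SSmono w x).re : ℝ) : ℂ) * M (x.1 + x.2) := by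
      simp only [p, Polynomial.map_sum, Polynomial.map_mul, map_C, Polynomial.map_pow, map_X,
        map_sum, hφ, Complex.coe_algebraMap]
    rw [← h1, hq, mul_comm]
    have h2 : q.map (starRingEnd ℂ) =
        ∑ e ∈ Finset.range (q.natDegree + 1), C (starRingEnd ℂ (q.coeff e)) * X ^ e := by
      conv_lhs => rw [q.as_sum_range_C_mul_X_pow]
      simp [Polynomial.map_sum]
    rw [(congrArg₂ (· * ·) h2 q.as_sum_range_C_mul_X_pow :
      q.map (starRingEnd ℂ) * q = _)]
    simp only [Finset.sum_range, Finset.sum_mul_sum]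
    simp only [map_sum]
    refine Finset.sum_congr rfl fun e _ => Finset.sum_congr rfl fun f _ => ?_
    rw [← hφ]
    congr 1
    rw [C_mul, pow_add]; ring
  have hpos := SSL_psd H (ι := Fin N × Fin (q.natDegree + 1)) (fun x => x.2) (fun x => (x.1 : ℕ))
    (fun x => w ^ (x.1 : ℕ) * starRingEnd ℂ (q.coeff x.2))
  refine hpos.trans_eq (congrArg Complex.re (Eq.symm ?_))
  simp only [Finset.sum_range, Fintype.sum_prod_type]
  refine Finset.sum_congr rfl fun j _ => ?_
  rw [Finset.sum_comm]
  refine Finset.sum_congr rfl fun l _ => ?_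
  rw [hpM (fun r => SSL shat r ((l : ℕ) - (j : ℕ))), Finset.mul_sum]
  refine Finset.sum_congr rfl fun e _ => ?_
  rw [Finset.mul_sum]
  refine Finset.sum_congr rfl fun f _ => ?_
  simp only [map_mul, map_pow, Complex.conj_conj]
  ring

/-- number of index pairs with a given difference -/
noncomputable def SScnt (N : ℕ) (d : ℤ) : ℝ :=
  ∑ j ∈ Finset.range N, ∑ l ∈ Finset.range N, if (l : ℤ) - j = d then (1 : ℝ) else 0

theorem SScnt_neg (N : ℕ) (d : ℤ) : SScnt N (-d) = SScnt N d := by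
  unfold SScnt
  rw [Finset.sum_comm]
  refine Finset.sum_congr rfl fun j _ => Finset.sum_congr rfl fun l _ => ?_
  congr 1
  apply propext
  omega

theorem SScnt_inner (N : ℕ) (d : ℤ) (j : ℕ) :
    (∑ l ∈ Finset.range N, if (l : ℤ) - j = d then (1 : ℝ) else 0) =
      if 0 ≤ (j : ℤ) + d ∧ (j : ℤ) + d < N then 1 else 0 := by
  split_ifs with h
  · rw [Finset.sum_eq_single (((j : ℤ) + d).toNat)]
    · rw [if_pos (by omega)]
    · intro b _ hb; rw [if_neg (by omega)]
    · intro hb; simp only [Finset.mem_range] at hb; omega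
  · refine Finset.sum_eq_zero fun l hl => ?_
    rw [Finset.mem_range] at hl
    rw [if_neg (by omega)]

theorem SScnt_le (N : ℕ) (d : ℤ) : SScnt N d ≤ N := by
  unfold SScnt
  simp only [SScnt_inner]
  calc _ ≤ ∑ j ∈ Finset.range N, (1 : ℝ) :=
        Finset.sum_le_sum fun j _ => by split_ifs <;> norm_num
    _ = N := by simp

theorem SScnt_ge (N : ℕ) (d : ℤ) : (N : ℝ) - d.natAbs ≤ SScnt N d := by
  unfold SScnt
  simp only [SScnt_inner]
  rw [Finset.sum_boole]
  have : N - d.natAbs ≤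
      (Finset.filter (fun j : ℕ => 0 ≤ (j : ℤ) + d ∧ (j : ℤ) + d < N) (Finset.range N)).card := by
    rcases le_total 0 d with h | h
    · refine le_trans (le_of_eq ?_) (Finset.card_le_card (s := Finset.range (N - d.natAbs)) ?_)
      · simp
      · intro j hj
        simp only [Finset.mem_range, Finset.mem_filter] at hj ⊢
        omega
    · refine le_trans (le_of_eq ?_) (Finset.card_le_card (s := Finset.Ico d.natAbs N) ?_)
      · simp
      · intro j hj
        simp only [Finset.mem_range, Finset.mem_filter, Finset.mem_Ico] at hj ⊢
        omega
  have h2 : N ≤ (Finset.filter (fun j : ℕ => 0 ≤ (j : ℤ) + d ∧ (j : ℤ) + d < N)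
      (Finset.range N)).card + d.natAbs := by omega
  have h3 : (N : ℝ) ≤ ((Finset.filter (fun j : ℕ => 0 ≤ (j : ℤ) + d ∧ (j : ℤ) + d < N)
      (Finset.range N)).card : ℝ) + d.natAbs := by exact_mod_cast h2
  linarith

open Filter Topology in
theorem SScnt_tendsto (d : ℤ) : Tendsto (fun N : ℕ => SScnt N d / N) atTop (𝓝 1) := by
  have h0 : Tendsto (fun N : ℕ => (1 : ℝ) - d.natAbs / N) atTop (𝓝 1) := by
    simpa using tendsto_const_nhds.sub (tendsto_const_div_atTop_nhds_zero_nat (d.natAbs : ℝ))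
  refine tendsto_of_tendsto_of_tendsto_of_le_of_le' h0 tendsto_const_nhds ?_ ?_
  · filter_upwards [eventually_gt_atTop 0] with N hN
    have hN' : (0 : ℝ) < N := by exact_mod_cast hN
    rw [le_div_iff₀ hN', sub_mul, div_mul_cancel₀ _ hN'.ne', one_mul]
    exact SScnt_ge N d
  · filter_upwards [eventually_gt_atTop 0] with N hN
    have hN' : (0 : ℝ) < N := by exact_mod_cast hN
    rw [div_le_one hN']
    exact SScnt_le N d

/-- orthogonality of characters -/
theorem SS_orth (M : ℕ) (hM : M ≠ 0) (ζ : ℂ) (hζ : IsPrimitiveRoot ζ M) (k : ℤ)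
    (hk : k.natAbs < M) :
    ∑ i ∈ Finset.range M, (ζ ^ i) ^ k = if k = 0 then (M : ℂ) else 0 := by
  split_ifs with h
  · simp [h]
  · have h1 : ζ ^ k ≠ 1 := by
      intro h1
      rw [hζ.zpow_eq_one_iff_dvd] at h1
      have := Nat.le_of_dvd (by omega) (Int.natAbs_dvd_natAbs.mpr h1)
      rw [Int.natAbs_natCast] at this
      omega
    have h2 : ∑ i ∈ Finset.range M, (ζ ^ k) ^ i = 0 := by
      rw [geom_sum_eq h1, ← zpow_natCast, ← zpow_mul, mul_comm, zpow_mul, zpow_natCast, hζ.pow_eq_one]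
      simp
    rw [← h2]
    refine Finset.sum_congr rfl fun i _ => ?_
    rw [← zpow_natCast, ← zpow_natCast, ← zpow_mul, ← zpow_mul, mul_comm]

theorem SS_fejer {shat : ℤ × ℤ → ℂ} (H : SSpsd shat) (a : (ℕ × ℕ) →₀ ℂ)
    (ha : ∀ z, 0 ≤ SSW (SSmono z) a) (N : ℕ) :
    0 ≤ ∑ x ∈ a.support, SScnt N ((x.1 : ℤ) - x.2) *
      (a x * shat ((x.1 : ℤ), (x.2 : ℤ))).re := by
  obtain ⟨M, hM⟩ : ∃ M : ℕ, M = (∑ x ∈ a.support, (x.1 + x.2)) + N + 1 := ⟨_, rfl⟩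
  have hM0 : M ≠ 0 := by omega
  have hMx : ∀ x ∈ a.support, x.1 + x.2 + N < M := by
    intro x hx
    have := Finset.single_le_sum (f := fun x : ℕ × ℕ => x.1 + x.2) (fun _ _ => Nat.zero_le _) hx
    omega
  obtain ⟨ζ, hζ⟩ : ∃ ζ : ℂ, IsPrimitiveRoot ζ M := ⟨_, Complex.isPrimitiveRoot_exp M hM0⟩
  have hζn : ‖ζ‖ = 1 := hζ.norm'_eq_one hM0
  have hsum := Finset.sum_nonneg (s := Finset.range M) fun i _ => SS_slice H a ha N (ζ ^ i)
  rw [← Complex.re_sum] at hsum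
  have hterm : ∀ i (j l : ℕ) (x : ℕ × ℕ), (ζ ^ i) ^ j * (starRingEnd ℂ (ζ ^ i)) ^ l *
      ((((a x * SSmono (ζ ^ i) x).re : ℝ) : ℂ) * SSL shat (x.1 + x.2) ((l : ℤ) - j)) =
      SSL shat (x.1 + x.2) ((l : ℤ) - j) / 2 *
        (a x * (ζ ^ i) ^ ((j : ℤ) - l + (x.1 - x.2)) +
          starRingEnd ℂ (a x) * (ζ ^ i) ^ ((j : ℤ) - l - (x.1 - x.2))) := by
    intro i j l x
    have hw0 : ζ ^ i ≠ 0 := pow_ne_zero _ (by rintro rfl; simp at hζn)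
    have hconj : starRingEnd ℂ (ζ ^ i) = (ζ ^ i)⁻¹ := by
      rw [Complex.inv_eq_conj]; simp [hζn]
    generalize ζ ^ i = w at hw0 hconj ⊢
    rw [Complex.re_eq_add_conj]
    simp only [SSmono, map_mul, map_pow, hconj, map_inv₀, inv_inv]
    rw [zpow_add₀ hw0, zpow_sub₀ hw0, zpow_sub₀ hw0, zpow_sub₀ hw0 ((j : ℤ) - l), zpow_sub₀ hw0,
      zpow_sub₀ hw0]
    simp only [zpow_natCast, inv_pow]
    field_simp
  have hmain : (∑ i ∈ Finset.range M, ∑ j ∈ Finset.range N, ∑ l ∈ Finset.range N,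
      (ζ ^ i) ^ j * (starRingEnd ℂ (ζ ^ i)) ^ l *
      ∑ x ∈ a.support, (((a x * SSmono (ζ ^ i) x).re : ℝ) : ℂ) *
        SSL shat (x.1 + x.2) ((l : ℤ) - j)) =
      ∑ x ∈ a.support, ((M * SScnt N ((x.1 : ℤ) - x.2) : ℝ) : ℂ) *
        ((a x * shat ((x.1 : ℤ), (x.2 : ℤ)) +
          starRingEnd ℂ (a x * shat ((x.1 : ℤ), (x.2 : ℤ)))) / 2) := by
    simp only [Finset.mul_sum, hterm]
    rw [Finset.sum_comm]
    simp only [fun j => Finset.sum_comm (s := Finset.range M) (t := Finset.range N)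
      (f := fun i l => ∑ x ∈ a.support, SSL shat (x.1 + x.2) ((l : ℤ) - (j : ℕ)) / 2 *
        (a x * (ζ ^ i) ^ ((j : ℤ) - l + (x.1 - x.2)) +
          starRingEnd ℂ (a x) * (ζ ^ i) ^ ((j : ℤ) - l - (x.1 - x.2))))]
    simp only [Finset.sum_comm (t := a.support)]
    refine Finset.sum_congr rfl fun x hx => ?_
    have hx' := hMx x hx
    have h1 : ∀ j ∈ Finset.range N, ∀ l ∈ Finset.range N,
        ∑ i ∈ Finset.range M, SSL shat (x.1 + x.2) ((l : ℤ) - j) / 2 *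
        (a x * (ζ ^ i) ^ ((j : ℤ) - l + (x.1 - x.2)) +
          starRingEnd ℂ (a x) * (ζ ^ i) ^ ((j : ℤ) - l - (x.1 - x.2))) =
        (M * (a x * shat ((x.1 : ℤ), (x.2 : ℤ))) / 2) *
            (((if (l : ℤ) - j = x.1 - x.2 then (1 : ℝ) else 0) : ℝ) : ℂ) +
        (M * starRingEnd ℂ (a x * shat ((x.1 : ℤ), (x.2 : ℤ))) / 2) *
            (((if (l : ℤ) - j = -((x.1 : ℤ) - x.2) then (1 : ℝ) else 0) : ℝ) : ℂ) := by
      intro j hj l hl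
      rw [Finset.mem_range] at hj hl
      rw [← Finset.mul_sum, Finset.sum_add_distrib, ← Finset.mul_sum, ← Finset.mul_sum,
        SS_orth M hM0 ζ hζ _ (by omega), SS_orth M hM0 ζ hζ _ (by omega), mul_add]
      congr 1
      · by_cases h : (l : ℤ) - j = x.1 - x.2
        · rw [if_pos (by omega), if_pos h, h, SSL_nat]
          push_cast; ring
        · rw [if_neg (by omega), if_neg h]; simp
      · by_cases h : (l : ℤ) - j = -((x.1 : ℤ) - x.2)
        · rw [if_pos (by omega), if_pos h, h, neg_sub, add_comm x.1 x.2, SSL_nat]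
          have := SSpsd_herm H ((x.1 : ℤ), (x.2 : ℤ)) (by positivity)
          simp only [Prod.swap_prod_mk] at this
          rw [this, map_mul]
          push_cast; ring
        · rw [if_neg (by omega), if_neg h]; simp
    rw [Finset.sum_congr rfl fun j hj => Finset.sum_congr rfl fun l hl => h1 j hj l hl]
    simp only [Finset.sum_add_distrib, ← Finset.mul_sum, ← Complex.ofReal_sum]
    have e1 := SScnt_neg N ((x.1 : ℤ) - x.2)
    unfold SScnt at e1 ⊢
    rw [e1]
    push_cast
    ring
  rw [hmain, Complex.re_sum] at hsum
  simp only [← Complex.re_eq_add_conj, ← Complex.ofReal_mul, Complex.ofReal_re, mul_assoc] at hsum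
  rw [← Finset.mul_sum] at hsum
  exact nonneg_of_mul_nonneg_right hsum (by positivity)

open Filter Topology in
theorem SS_positive {shat : ℤ × ℤ → ℂ} (H : SSpsd shat) (s : ℕ × ℕ → ℂ)
    (hs : ∀ mn : ℕ × ℕ, shat ((mn.1 : ℤ), (mn.2 : ℤ)) = s mn) (a : (ℕ × ℕ) →₀ ℂ)
    (ha : ∀ z, 0 ≤ SSW (SSmono z) a) : 0 ≤ SSW s a := by
  have hlim : Tendsto (fun N : ℕ => ∑ x ∈ a.support, SScnt N ((x.1 : ℤ) - x.2) / N *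
      (a x * shat ((x.1 : ℤ), (x.2 : ℤ))).re) atTop (𝓝 (SSW s a)) := by
    rw [SSW_apply]
    refine tendsto_finsetSum _ fun x _ => ?_
    simpa [hs x] using (SScnt_tendsto ((x.1 : ℤ) - x.2)).mul_const
      (a x * shat ((x.1 : ℤ), (x.2 : ℤ))).re
  refine ge_of_tendsto' hlim fun N => ?_
  have h := div_nonneg (SS_fejer H a ha N) (Nat.cast_nonneg N)
  rw [Finset.sum_div] at h
  convert h using 2
  ring


/-- **Theorem of Stochel and Szafraniec on the complex moment problem.**
A doubly indexed sequence `s : ℕ × ℕ → ℂ` is a complex moment sequence,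
`s(m,n) = ∫ z^m conj(z)^n dμ`, if and only if it extends to a sequence
`ŝ : ℤ × ℤ → ℂ` that is positive semidefinite on the `*`-semigroup
`N₊ = {(m,n) ∈ ℤ² : m + n ≥ 0}` with involution `(m,n)* = (n,m)`. -/
theorem stochel_szafraniec_complex_moment_problem (s : ℕ × ℕ → ℂ) :
    (∃ μ : MeasureTheory.Measure ℂ,
      ∀ mn : ℕ × ℕ,
        MeasureTheory.Integrable
          (fun z : ℂ => z ^ mn.1 * (starRingEnd ℂ z) ^ mn.2) μ ∧
        s mn = ∫ z : ℂ, z ^ mn.1 * (starRingEnd ℂ z) ^ mn.2 ∂μ) ↔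
    ∃ shat : ℤ × ℤ → ℂ,
      (∀ mn : ℕ × ℕ, shat ((mn.1 : ℤ), (mn.2 : ℤ)) = s mn) ∧
      ∀ (r : ℕ) (ξ : Fin r → ℤ × ℤ), (∀ i : Fin r, 0 ≤ (ξ i).1 + (ξ i).2) →
        ∀ c : Fin r → ℂ,
          (∑ i : Fin r, ∑ j : Fin r,
              c i * starRingEnd ℂ (c j) * shat ((ξ i).swap + ξ j)).im = 0 ∧
          0 ≤ (∑ i : Fin r, ∑ j : Fin r,
              c i * starRingEnd ℂ (c j) * shat ((ξ i).swap + ξ j)).re := by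
  constructor
  · rintro ⟨μ, hμ⟩
    exact SS_forward s μ hμ
  · rintro ⟨shat, h1, h2⟩
    exact SS_haviland s fun a ha => SS_positive h2 s h1 a ha
end
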